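/- Fix v, e ∈ ℕ with v ≥ 1. Let X(v,e) be the set of maps g : Fin e → Fin v × Fin v (directed graphs with labelled vertices, labelled oriented edges) such that (i) every vertex has valence at least 3, where the valence of x is the number of pairs (i, c) with i ∈ Fin e, c ∈ {1,2} and the c-th component of g(i) equal to x, and (ii) the graph is connected, i.e. the equivalence relation on Fin v generated by relating the two components of g(i) for each i ∈ Fin e has exactly one equivalence class. Let Γ := Perm(Fin v) × Perm(Fin e) × (Fin e → Perm(Fin 2)) act on X(v,e) by relabelling vertices, relabelling edges, and reversing edge orientations, and let χ : Γ → {1,−1} be the group homomorphism sending (ρ, μ, ν) to sgn(ρ)·Π_{i ∈ Fin e} sgn(ν_i). Define ñ^{odd}(v,e) as the number of Γ-orbits O on X(v,e) such that χ(γ) = 1 for every γ ∈ Γ stabilizing some point of O, and define ñ^{odd*}(v,e) in the same way but with X(v,e) replaced by its subset of graphs without multiple edges (no two distinct i, i' ∈ Fin e such that g(i') equals g(i) or its reversal). Then for every b ≥ 2: Σ_{v≥1} (−1)^v · ñ^{odd}(v, b+v) = Σ_{v≥1} (−1)^v · ñ^{odd*}(v, b+v). (Both sums are finite since at-least-trivalent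 graphs satisfy v ≤ 2b − 2.) -/

import Mathlib

namespace GraphComplexOdd

/-- A graph with `v` labelled vertices and `e` labelled oriented edges: each edge is sent to
its (ordered) pair of endpoints. -/
abbrev Graph (v e : ℕ) := Fin e → Fin v × Fin v

/-- The symmetry group `Γ`: relabelling of vertices, relabelling of edges, and reversal of
the orientations of the individual edges. -/
abbrev Gamma (v e : ℕ) :=
  Equiv.Perm (Fin v) × Equiv.Perm (Fin e) × (Fin e → Equiv.Perm (Fin 2))

/-- Reversal of an ordered pair governed by a permutation of `Fin 2`. -/
def flipPair {V : Type*} (τ : Equiv.Perm (Fin 2)) (p : V × V) : V × V :=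
  if τ 0 = 0 then p else p.swap

/-- The action of `Γ` on graphs: relabel the vertices by `γ.1`, the edges by `γ.2.1` and
reverse the orientation of the edges as prescribed by `γ.2.2`. -/
def act {v e : ℕ} (γ : Gamma v e) (g : Graph v e) : Graph v e :=
  fun i => Prod.map γ.1 γ.1 (flipPair (γ.2.2 (γ.2.1⁻¹ i)) (g (γ.2.1⁻¹ i)))

/-- The character `χ : Γ → {1, -1}`, `(ρ, μ, ν) ↦ sgn ρ · ∏ᵢ sgn νᵢ`. -/
def chi {v e : ℕ} (γ : Gamma v e) : ℤ :=
  (Equiv.Perm.sign γ.1 : ℤ) * ∏ i : Fin e, (Equiv.Perm.sign (γ.2.2 i) : ℤ)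

/-- The valence of the vertex `x`: the number of pairs `(i, c)` with the `c`-th component of
`g i` equal to `x` (a loop at `x` contributes `2`). -/
def valence {v e : ℕ} (g : Graph v e) (x : Fin v) : ℕ :=
  ∑ i : Fin e, ((if (g i).1 = x then 1 else 0) + (if (g i).2 = x then 1 else 0))

/-- The adjacency relation determined by a graph: `a` and `b` are the two endpoints of some
edge. -/
def adj {v e : ℕ} (g : Graph v e) (a b : Fin v) : Prop :=
  ∃ i : Fin e, g i = (a, b) ∨ g i = (b, a)

/-- Membership in `X(v,e)`: all vertices have valence at least `3`, and the graph is
connected, i.e. the equivalence relation generated by adjacency has exactly one class. -/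
def IsX {v e : ℕ} (g : Graph v e) : Prop :=
  (∀ x : Fin v, 3 ≤ valence g x) ∧ (∀ a b : Fin v, Relation.EqvGen (adj g) a b)

/-- The graph has no multiple edges: no two distinct edges have the same pair of endpoints,
in either order. -/
def NoMultiple {v e : ℕ} (g : Graph v e) : Prop :=
  ∀ i i' : Fin e, i ≠ i' → g i' ≠ g i ∧ g i' ≠ (g i).swap

/-- `ñ^{odd}(v,e)`: the number of `Γ`-orbits on `X(v,e)` on which every stabilizer element
has character `1` (i.e. the dimension of the degree-`(v,e)` part of the connected odd graph
complex). -/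
noncomputable def nOdd (v e : ℕ) : ℕ :=
  Nat.card {S : Set (Graph v e) //
    ∃ g : Graph v e, IsX g ∧ S = {g' | ∃ γ : Gamma v e, g' = act γ g} ∧
      ∀ g' ∈ S, ∀ γ : Gamma v e, act γ g' = g' → chi γ = 1}

/-- `ñ^{odd*}(v,e)`: the same count for graphs without multiple edges. -/
noncomputable def nOddStar (v e : ℕ) : ℕ :=
  Nat.card {S : Set (Graph v e) //
    ∃ g : Graph v e, (IsX g ∧ NoMultiple g) ∧
      S = {g' | ∃ γ : Gamma v e, g' = act γ g} ∧
      ∀ g' ∈ S, ∀ γ : Gamma v e, act γ g' = g' → chi γ = 1}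

end GraphComplexOdd

namespace GraphComplexOdd
section Abs
open Equiv CategoryTheory
open scoped Classical

universe u v

noncomputable def psgn {α : Type*} [Finite α] (e : Perm α) : ℤˣ :=
  @Perm.sign α (Classical.decEq α) (Fintype.ofFinite α) e

theorem psgn_eq {α : Type*} [Finite α] [d : DecidableEq α] [f : Fintype α] (e : Perm α) :
    psgn e = Perm.sign e := by
  unfold psgn
  congr!

@[simp] theorem psgn_one {α : Type*} [Finite α] : psgn (1 : Perm α) = 1 := by
  simp [psgn]

@[simp] theorem psgn_refl {α : Type*} [Finite α] : psgn (Equiv.refl α) = 1 := psgn_one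

theorem psgn_mul {α : Type*} [Finite α] (e f : Perm α) : psgn (e * f) = psgn e * psgn f := by
  simp [psgn]

theorem psgn_trans {α : Type*} [Finite α] (e f : Perm α) :
    psgn (e.trans f : Perm α) = psgn e * psgn f := by
  have := psgn_mul f e
  rw [mul_comm] at this
  exact this

theorem psgn_conj {α β : Type*} [Finite α] [Finite β] (e : α ≃ β) (f : Perm α) (g : Perm β)
    (h : ∀ a, e (f a) = g (e a)) : psgn f = psgn g := by
  have := Fintype.ofFinite α
  have := Fintype.ofFinite β
  rw [psgn_eq, psgn_eq]
  exact Perm.sign_eq_sign_of_equiv f g e h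

theorem psgn_sum {α β : Type*} [Finite α] [Finite β] (f : Perm α) (g : Perm β) :
    psgn (Equiv.sumCongr f g) = psgn f * psgn g := by
  have := Fintype.ofFinite α
  have := Fintype.ofFinite β
  rw [psgn_eq, psgn_eq, psgn_eq]
  exact Perm.sign_sumCongr f g

theorem psgn_swap {α : Type*} [Finite α] {x y : α} (h : x ≠ y) (f : Perm α)
    (hx : f x = y) (hy : f y = x) (ho : ∀ z, z ≠ x → z ≠ y → f z = z) : psgn f = -1 := by
  have := Fintype.ofFinite α
  have : f = Equiv.swap x y := by
    ext z
    by_cases h1 : z = x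
    · subst h1; simp [hx]
    by_cases h2 : z = y
    · subst h2; simp [hy]
    rw [ho z h1 h2, swap_apply_of_ne_of_ne h1 h2]
  rw [this, psgn_eq, Perm.sign_swap h]

/-- split along a predicate -/
theorem psgn_split {α : Type*} [Finite α] (f : Perm α) (p : α → Prop)
    (h : ∀ a, p (f a) ↔ p a) :
    psgn f = psgn (f.subtypePerm (p := p) h) *
      psgn (f.subtypePerm (p := fun a => ¬ p a) (fun a => not_congr (h a))) := by
  rw [← psgn_sum]
  refine (psgn_conj (Equiv.sumCompl p) _ _ ?_).symm
  rintro (a | a) <;> simp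

class SG (A : Type u) extends Groupoid.{0} A where
  fin : ∀ x y : A, Finite (x ⟶ y)
  sg : ∀ {x : A}, (x ⟶ x) → ℤˣ
  sg_comp : ∀ {x : A} (f g : x ⟶ x), sg (f ≫ g) = sg f * sg g
  sg_conj : ∀ {x y : A} (f : x ⟶ y) (g : x ⟶ x) (g' : y ⟶ y), g ≫ f = f ≫ g' → sg g = sg g'

instance {A : Type u} [SG A] (x y : A) : Finite (x ⟶ y) := SG.fin x y

theorem sg_id {A : Type u} [SG A] (x : A) : SG.sg (𝟙 x) = 1 := by
  have := SG.sg_comp (𝟙 x) (𝟙 x)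
  simpa using this

def st (A : Type u) [SG A] : Setoid A where
  r x y := Nonempty (x ⟶ y)
  iseqv := ⟨fun x => ⟨𝟙 x⟩, fun ⟨f⟩ => ⟨Groupoid.inv f⟩, fun ⟨f⟩ ⟨g⟩ => ⟨f ≫ g⟩⟩

abbrev Cl (A : Type u) [SG A] := Quotient (st A)
abbrev cl {A : Type u} [SG A] (x : A) : Cl A := Quotient.mk (st A) x

theorem cl_eq {A : Type u} [SG A] {x y : A} : cl x = cl y ↔ Nonempty (x ⟶ y) := by
  constructor
  · intro h; exact Quotient.exact h
  · intro h; exact Quotient.sound (s := st A) h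

theorem out_hom {A : Type u} [SG A] (x : A) : Nonempty ((cl x).out ⟶ x) := by
  rw [← cl_eq]; exact Quotient.out_eq (s := st A) _

theorem cl_out {A : Type u} [SG A] (c : Cl A) : cl c.out = c := Quotient.out_eq (s := st A) _

def Ev {A : Type u} [SG A] (x : A) : Prop := ∀ f : x ⟶ x, SG.sg f = 1

theorem Ev_hom {A : Type u} [SG A] {x y : A} (f : x ⟶ y) (h : Ev x) : Ev y := by
  intro g
  rw [← h (f ≫ g ≫ Groupoid.inv f)]
  exact (SG.sg_conj f _ _ (by simp)).symm

def Inv {A : Type u} [SG A] {B : Type*} (d : A → B) : Prop := ∀ x y : A, (x ⟶ y) → d x = d y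

theorem Inv_prop {A : Type u} [SG A] {P : A → Prop} (h : ∀ x y : A, (x ⟶ y) → P x → P y) :
    Inv P := fun x y f => propext ⟨h x y f, h y x (Groupoid.inv f)⟩

noncomputable def wt {A : Type u} [SG A] (P : A → Prop) (d : A → ℕ) (x : A) : ℤ :=
  if P x ∧ Ev x then (-1) ^ d x else 0

theorem wt_inv {A : Type u} [SG A] {P : A → Prop} {d : A → ℕ} (hP : Inv P) (hd : Inv d) :
    Inv (wt P d) := by
  intro x y f
  unfold wt
  rw [hP x y f, hd x y f]
  have : Ev x ↔ Ev y := ⟨Ev_hom f, Ev_hom (Groupoid.inv f)⟩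
  simp [this]

noncomputable def XX {A : Type u} [SG A] (P : A → Prop) (d : A → ℕ) : ℤ :=
  ∑ᶠ c : Cl A, wt P d c.out

theorem XX_mem {A : Type u} [SG A] (P : A → Prop) (d : A → ℕ) :
    XX P d = ∑ᶠ c ∈ {c : Cl A | P c.out ∧ Ev c.out}, (-1 : ℤ) ^ d c.out := by
  unfold XX
  congr 1; ext c
  rw [finsum_eq_if]
  rfl

theorem XX_functor {A : Type u} {B : Type v} [SG A] [SG B] (P : A → Prop) (Q : B → Prop)
    (dA : A → ℕ) (dB : B → ℕ) (F : A → B) (hP : Inv P) (hQ : Inv Q) (hdB : Inv dB)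
    (hPQ : ∀ x, P x → Q (F x))
    (hdeg : ∀ x, P x → (-1 : ℤ) ^ dB (F x) = (-1) ^ dA x)
    (hmap : ∀ x y, P x → P y → (x ⟶ y) → Nonempty (F x ⟶ F y))
    (hmaps : ∀ x, P x → ∀ f : x ⟶ x, ∃ g : F x ⟶ F x, SG.sg g = SG.sg f)
    (hfull : ∀ x y, P x → P y → (F x ⟶ F y) → Nonempty (x ⟶ y))
    (hfulls : ∀ x, P x → ∀ g : F x ⟶ F x, ∃ f : x ⟶ x, SG.sg g = SG.sg f)
    (hsurj : ∀ y, Q y → Ev y → ∃ x, P x ∧ Nonempty (F x ⟶ y)) :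
    XX P dA = XX Q dB := by
  rw [XX_mem, XX_mem]
  refine finsum_mem_eq_of_bijOn (fun c => cl (F c.out)) ⟨?_, ?_, ?_⟩ ?_
  · rintro c ⟨h1, h2⟩
    obtain ⟨g⟩ := out_hom (F c.out)
    refine ⟨by rw [hQ _ _ g]; exact hPQ _ h1, Ev_hom (Groupoid.inv g) ?_⟩
    intro k
    obtain ⟨f, hf⟩ := hfulls _ h1 k
    rw [hf, h2]
  · rintro c ⟨h1, h2⟩ c' ⟨h1', h2'⟩ h
    obtain ⟨f⟩ := cl_eq.1 h
    have := cl_eq.2 (hfull _ _ h1 h1' f)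
    rwa [cl_out, cl_out] at this
  · rintro c ⟨h1, h2⟩
    obtain ⟨x, hx, ⟨f⟩⟩ := hsurj _ h1 h2
    obtain ⟨g⟩ := out_hom x
    have hx' : P (cl x).out := by rw [hP _ _ g]; exact hx
    refine ⟨cl x, ⟨hx', Ev_hom (Groupoid.inv g) ?_⟩, ?_⟩
    · intro k
      obtain ⟨k', hk'⟩ := hmaps x hx k
      rw [← hk']
      exact Ev_hom (Groupoid.inv f) h2 k'
    · obtain ⟨k⟩ := hmap _ _ hx' hx g
      show cl _ = c
      rw [cl_eq.2 ⟨k⟩, cl_eq.2 ⟨f⟩, cl_out]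
  · rintro c ⟨h1, h2⟩
    obtain ⟨g⟩ := out_hom (F c.out)
    rw [hdB _ _ g, hdeg _ h1]

def FinP {A : Type u} [SG A] (P : A → Prop) : Prop := {c : Cl A | P c.out}.Finite

theorem FinP.mono {A : Type u} [SG A] {P Q : A → Prop} (h : FinP Q) (hh : ∀ x, P x → Q x) :
    FinP P := Set.Finite.subset h (fun c hc => hh _ hc)

theorem XX_add {A : Type u} [SG A] (P R : A → Prop) (d : A → ℕ) (h : FinP P) :
    XX P d = XX (fun x => P x ∧ R x) d + XX (fun x => P x ∧ ¬ R x) d := by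
  unfold XX
  rw [← finsum_add_distrib]
  · congr 1; ext c
    unfold wt
    by_cases h1 : P c.out <;> by_cases h2 : R c.out <;> simp [h1, h2]
  · refine Set.Finite.subset h fun c hc => ?_
    by_contra h'
    exact hc (by simp only [Set.mem_ofPred_eq] at h'; simp [wt, h'])
  · refine Set.Finite.subset h fun c hc => ?_
    by_contra h'
    exact hc (by simp only [Set.mem_ofPred_eq] at h'; simp [wt, h'])

theorem XX_congr {A : Type u} [SG A] {P Q : A → Prop} {d : A → ℕ}
    (h : ∀ x, Ev x → (P x ↔ Q x)) : XX P d = XX Q d := by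
  unfold XX; congr 1; ext c
  unfold wt
  by_cases h1 : Ev c.out
  · simp [h1, h _ h1]
  · simp [h1]

theorem XX_empty {A : Type u} [SG A] {P : A → Prop} {d : A → ℕ}
    (h : ∀ x, Ev x → ¬ P x) : XX P d = 0 := by
  unfold XX
  rw [← finsum_zero (α := Cl A)]
  congr 1; ext c
  unfold wt
  rw [if_neg]
  rintro ⟨h1, h2⟩
  exact h _ h2 h1

structure Slots (A : Type u) [SG A] where
  S : A → Type
  fin : ∀ x, Finite (S x)
  map : ∀ {x y : A}, (x ⟶ y) → (S x ≃ S y)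
  map_id : ∀ x s, map (𝟙 x) s = s
  map_comp : ∀ {x y z : A} (f : x ⟶ y) (g : y ⟶ z) (s), map (f ≫ g) s = map g (map f s)

instance {A : Type u} [SG A] (Sl : Slots A) (x : A) : Finite (Sl.S x) := Sl.fin x

structure Pr {A : Type u} [SG A] (Sl : Slots A) where
  x : A
  T : Set (Sl.S x)

variable {A : Type u} [SG A] {Sl : Slots A}

theorem Slots.map_inv (Sl : Slots A) {x y : A} (f : x ⟶ y) (s) :
    Sl.map f (Sl.map (Groupoid.inv f) s) = s := by
  rw [← Sl.map_comp]; simp [Sl.map_id]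

theorem Slots.inv_map (Sl : Slots A) {x y : A} (f : x ⟶ y) (s) :
    Sl.map (Groupoid.inv f) (Sl.map f s) = s := by
  rw [← Sl.map_comp]; simp [Sl.map_id]

@[ext] structure PrHom (p q : Pr Sl) where
  f : p.x ⟶ q.x
  h : ∀ s, s ∈ p.T ↔ Sl.map f s ∈ q.T

def PrHom.eqv {p q : Pr Sl} (f : PrHom p q) : p.T ≃ q.T :=
  (Sl.map f.f).subtypeEquiv f.h

noncomputable instance : SG (Pr Sl) where
  Hom p q := PrHom p q
  id p := ⟨𝟙 _, fun s => by rw [Sl.map_id]⟩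
  comp f g := ⟨f.f ≫ g.f, fun s => by rw [Sl.map_comp, f.h, g.h]⟩
  inv f := ⟨Groupoid.inv f.f, fun s => by rw [f.h, Sl.map_inv]⟩
  id_comp f := by ext; simp
  comp_id f := by ext; simp
  assoc f g h := by ext; simp
  inv_comp f := by ext; simp
  comp_inv f := by ext; simp
  fin p q := Finite.of_injective (fun f : PrHom p q => f.f) (fun f g h => PrHom.ext h)
  sg {p} f := SG.sg f.f * psgn f.eqv
  sg_comp {p} f g := by
    have : psgn (α := p.T) ((⟨f.f ≫ g.f, fun s => by rw [Sl.map_comp, f.h, g.h]⟩ : PrHom p p).eqv)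
        = psgn f.eqv * psgn g.eqv := by
      rw [← psgn_trans]
      congr 1
      ext s
      simp [PrHom.eqv, Sl.map_comp]
    rw [SG.sg_comp, this]; exact mul_mul_mul_comm _ _ _ _
  sg_conj {p q} f g g' h := by
    have h' : g.f ≫ f.f = f.f ≫ g'.f := congrArg PrHom.f h
    rw [SG.sg_conj f.f _ _ h']
    congr 1
    refine psgn_conj f.eqv _ _ ?_
    intro a
    ext
    simp [PrHom.eqv, ← Sl.map_comp, h']

theorem Pr.sg_def {p : Pr Sl} (f : p ⟶ p) : SG.sg f = SG.sg f.f * psgn f.eqv := rfl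

theorem Pr.hom_ext {p q : Pr Sl} (f g : p ⟶ q) (h : f.f = g.f) : f = g := PrHom.ext h
@[simp] theorem Pr.comp_f {p q r : Pr Sl} (f : p ⟶ q) (g : q ⟶ r) : (f ≫ g).f = f.f ≫ g.f := rfl
@[simp] theorem Pr.inv_f {p q : Pr Sl} (f : p ⟶ q) :
  (Groupoid.inv f).f = Groupoid.inv f.f := rfl

end Abs
end GraphComplexOdd

namespace GraphComplexOdd
section LemC
open Equiv CategoryTheory
open scoped Classical

universe u

noncomputable def eps {α : Type*} [Finite α] (k : Perm α) (T : Set α) : ℤ :=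
  if h : ∀ s, k s ∈ T ↔ s ∈ T then (-1) ^ T.ncard * (psgn (k.subtypePerm (p := (· ∈ T)) h) : ℤ)
  else 0

theorem eps_union {α : Type*} [Finite α] (k : Perm α) (T U : Set α) (hd : Disjoint T U)
    (hT : ∀ s, k s ∈ T ↔ s ∈ T) (hU : ∀ s, k s ∈ U ↔ s ∈ U) :
    eps k (T ∪ U) = eps k T * eps k U := by
  have hTU : ∀ s, k s ∈ T ∪ U ↔ s ∈ T ∪ U := fun s => by
    rw [Set.mem_union, Set.mem_union, hT, hU]
  unfold eps
  rw [dif_pos hT, dif_pos hU, dif_pos hTU, Set.ncard_union_eq hd]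
  have : psgn (k.subtypePerm (p := (· ∈ T ∪ U)) hTU) =
      psgn (k.subtypePerm (p := (· ∈ T)) hT) * psgn (k.subtypePerm (p := (· ∈ U)) hU) := by
    rw [← psgn_sum]
    refine (psgn_conj (Equiv.Set.union hd) _ _ ?_)
    rintro ⟨a, ha⟩
    rcases ha with ha | ha
    · rw [Equiv.Set.union_apply_left hd (a := ⟨a, Or.inl ha⟩) ha]
      erw [Equiv.Set.union_apply_left hd (a := ⟨k a, Or.inl ((hT a).2 ha)⟩) ((hT a).2 ha)]
      rfl
    · rw [Equiv.Set.union_apply_right hd (a := ⟨a, Or.inr ha⟩) ha]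
      erw [Equiv.Set.union_apply_right hd (a := ⟨k a, Or.inr ((hU a).2 ha)⟩) ((hU a).2 ha)]
      rfl
  rw [this, pow_add, Units.val_mul]
  exact mul_mul_mul_comm _ _ _ _

def cyc {α : Type*} (k : Perm α) (s : α) : Set α := {t | k.SameCycle s t}

theorem cyc_inv {α : Type*} (k : Perm α) (s t : α) : k t ∈ cyc k s ↔ t ∈ cyc k s := by
  simp [cyc]

theorem eps_cyc {α : Type*} [Finite α] (k : Perm α) (s : α) : eps k (cyc k s) = -1 := by
  have := Fintype.ofFinite α
  unfold eps
  rw [dif_pos (cyc_inv k s)]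
  have h1 : psgn (k.subtypePerm (p := (· ∈ cyc k s)) (cyc_inv k s)) = Perm.sign (k.cycleOf s) := by
    rw [Perm.cycleOf, Perm.sign_ofSubtype, ← psgn_eq]
    rfl
  rw [h1]
  by_cases hs : k s = s
  · have : cyc k s = {s} := by
      ext t
      simp only [cyc, Set.mem_ofPred_eq, Set.mem_singleton_iff]
      constructor
      · rintro ⟨i, rfl⟩
        exact Equiv.Perm.zpow_apply_eq_self_of_apply_eq_self hs i
      · rintro rfl; exact Perm.SameCycle.refl _ _
    rw [this, (Perm.cycleOf_eq_one_iff k).2 hs]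
    simp
  · rw [(Perm.isCycle_cycleOf k hs).sign]
    have : (cyc k s).ncard = (k.cycleOf s).support.card := by
      rw [← Set.ncard_coe_finset]
      congr 1
      ext t
      rw [Finset.mem_coe, Perm.mem_support_cycleOf_iff]
      simp [cyc, hs]
    rw [this]
    push_cast
    rw [mul_neg, ← mul_pow]; simp

theorem eps_symmDiff {α : Type*} [Finite α] (k : Perm α) (s : α) (T : Set α) :
    eps k (symmDiff T (cyc k s)) = - eps k T := by
  have hC := cyc_inv k s
  by_cases hT : ∀ t, k t ∈ T ↔ t ∈ T
  · have hz : ∀ (i : ℤ) t, (k ^ i) t ∈ T ↔ t ∈ T := by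
      intro i
      induction i with
      | zero => simp
      | succ i ih => intro t; rw [add_comm, zpow_add, zpow_one, Perm.mul_apply, hT, ih]
      | pred i ih =>
        intro t
        rw [sub_eq_neg_add, zpow_add, Perm.mul_apply, ← hT, ← ih t]
        simp
    have hcs : ∀ t ∈ cyc k s, (t ∈ T ↔ s ∈ T) := by
      rintro t ⟨i, rfl⟩
      exact hz i s
    by_cases hs : s ∈ T
    · have hsub : cyc k s ⊆ T := fun t ht => (hcs t ht).2 hs
      have e1 : symmDiff T (cyc k s) = T \ cyc k s := by
        ext t; simp only [Set.mem_symmDiff, Set.mem_sdiff]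
        have := @hsub t
        tauto
      have hD : ∀ t, k t ∈ T \ cyc k s ↔ t ∈ T \ cyc k s := fun t => by
        rw [Set.mem_sdiff, Set.mem_sdiff, hT, hC]
      have := eps_union k (T \ cyc k s) (cyc k s) Set.disjoint_sdiff_left hD hC
      rw [Set.sdiff_union_of_subset hsub, eps_cyc] at this
      rw [e1, this]; ring
    · have hdis : Disjoint T (cyc k s) := by
        rw [Set.disjoint_left]
        intro t ht ht'
        exact hs ((hcs t ht').1 ht)
      have e1 : symmDiff T (cyc k s) = T ∪ cyc k s := hdis.symmDiff_eq_sup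
      rw [e1, eps_union k _ _ hdis hT hC, eps_cyc]; ring
  · have : ¬ ∀ t, k t ∈ symmDiff T (cyc k s) ↔ t ∈ symmDiff T (cyc k s) := by
      intro h
      apply hT
      intro t
      have h1 := h t
      have h2 := hC t
      simp only [Set.mem_symmDiff] at h1
      tauto
    unfold eps
    rw [dif_neg this, dif_neg hT]; simp

theorem sum_sg {A : Type u} [SG A] (x : A) [Fintype (x ⟶ x)] :
    ∑ k : (x ⟶ x), ((SG.sg k : ℤˣ) : ℤ) = if Ev x then (Fintype.card (x ⟶ x) : ℤ) else 0 := by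
  split_ifs with h
  · rw [Finset.sum_congr rfl (fun k _ => by rw [h k])]
    simp
  · unfold Ev at h
    push Not at h
    obtain ⟨f, hf⟩ := h
    have hf' : SG.sg f = -1 := (Int.units_eq_one_or _).resolve_left hf
    let e : (x ⟶ x) ≃ (x ⟶ x) :=
      ⟨fun k => f ≫ k, fun k => Groupoid.inv f ≫ k, fun k => by simp [← Category.assoc],
        fun k => by simp [← Category.assoc]⟩
    have h1 := Equiv.sum_comp e (fun k => ((SG.sg k : ℤˣ) : ℤ))
    have h2 : ∀ k, ((SG.sg (e k) : ℤˣ) : ℤ) = - ((SG.sg k : ℤˣ) : ℤ) := by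
      intro k
      show ((SG.sg (f ≫ k) : ℤˣ) : ℤ) = _
      rw [SG.sg_comp, hf']; simp
    simp only [h2, Finset.sum_neg_distrib] at h1
    omega

variable {A : Type u} [SG A] {Sl : Slots A}

theorem Pr.sg_eps (x : A) (T : Set (Sl.S x)) (k : (⟨x, T⟩ : Pr Sl) ⟶ ⟨x, T⟩) :
    (-1 : ℤ) ^ T.ncard * ((SG.sg k : ℤˣ) : ℤ) = SG.sg k.f * eps (Sl.map k.f) T := by
  unfold eps
  rw [dif_pos (fun s => (k.h s).symm), Pr.sg_def, Units.val_mul]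
  have : psgn k.eqv = psgn (Perm.subtypePerm (Sl.map k.f : Perm (Sl.S x)) (p := (· ∈ T)) (fun s => (k.h s).symm)) := rfl
  rw [this]; ring

theorem sum_stab (x : A) (P : Pr Sl → Prop) (deg : A → ℕ) [Fintype (Set (Sl.S x))]
    [Fintype (x ⟶ x)] [∀ T : Set (Sl.S x), Fintype ((⟨x, T⟩ : Pr Sl) ⟶ ⟨x, T⟩)]
    (tog : Set (Sl.S x)) (htog : ∀ (f : x ⟶ x) s, s ∈ tog ↔ Sl.map f s ∈ tog)
    (hPt : ∀ T U : Set (Sl.S x), (∀ s, s ∉ tog → (s ∈ T ↔ s ∈ U)) → P ⟨x, T⟩ → P ⟨x, U⟩)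
    (hne : ∀ T, P ⟨x, T⟩ → tog.Nonempty) :
    ∑ T : Set (Sl.S x), wt P (fun p => deg p.x + p.T.ncard) ⟨x, T⟩ *
      (Fintype.card ((⟨x, T⟩ : Pr Sl) ⟶ ⟨x, T⟩) : ℤ) = 0 := by
  have h1 : ∀ T : Set (Sl.S x), wt P (fun p => deg p.x + p.T.ncard) ⟨x, T⟩ *
      (Fintype.card ((⟨x, T⟩ : Pr Sl) ⟶ ⟨x, T⟩) : ℤ) =
      ∑ k : (x ⟶ x), (-1) ^ deg x * (SG.sg k : ℤˣ) *
        (if P ⟨x, T⟩ then eps (Sl.map k) T else 0) := by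
    intro T
    have h2 : wt P (fun p => deg p.x + p.T.ncard) ⟨x, T⟩ *
      (Fintype.card ((⟨x, T⟩ : Pr Sl) ⟶ ⟨x, T⟩) : ℤ) =
      if P ⟨x, T⟩ then (-1) ^ (deg x + T.ncard) * ∑ k : ((⟨x, T⟩ : Pr Sl) ⟶ ⟨x, T⟩),
        ((SG.sg k : ℤˣ) : ℤ) else 0 := by
      rw [sum_sg]; unfold wt
      by_cases h3 : P ⟨x, T⟩ <;> by_cases h4 : Ev (⟨x, T⟩ : Pr Sl) <;> simp [h3, h4]
    rw [h2]
    by_cases h3 : P ⟨x, T⟩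
    · simp only [h3, if_true]
      rw [Finset.mul_sum]
      rw [← Finset.sum_filter_add_sum_filter_not (s := Finset.univ (α := (x ⟶ x)))
        (fun k => ∀ s, Sl.map k s ∈ T ↔ s ∈ T)]
      rw [Finset.sum_eq_zero (s := Finset.univ.filter fun k => ¬ _), add_zero]
      · refine Finset.sum_bij (fun k _ => k.f) ?_ ?_ ?_ ?_
        · intro k _
          simp only [Finset.mem_filter, Finset.mem_univ, true_and]
          exact fun s => (k.h s).symm
        · intro k _ k' _ h; exact Pr.hom_ext _ _ h
        · intro k hk
          simp only [Finset.mem_filter, Finset.mem_univ, true_and] at hk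
          exact ⟨⟨k, fun s => (hk s).symm⟩, Finset.mem_univ _, rfl⟩
        · intro k _
          rw [pow_add, mul_assoc, Pr.sg_eps, mul_assoc]
      · intro k hk
        simp only [Finset.mem_filter, Finset.mem_univ, true_and] at hk
        unfold eps
        rw [dif_neg hk, mul_zero]
    · simp [h3]
  simp only [h1]
  rw [Finset.sum_comm]
  refine Finset.sum_eq_zero fun k _ => ?_
  rw [← Finset.mul_sum]
  refine mul_eq_zero_of_right _ ?_
  by_cases hn : tog.Nonempty
  · obtain ⟨s0, hs0⟩ := hn
    have hsub : ∀ t ∈ cyc (Sl.map k) s0, t ∈ tog := by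
      have hz : ∀ (i : ℤ) t, ((Sl.map k : Perm (Sl.S x)) ^ i) t ∈ tog ↔ t ∈ tog := by
        intro i
        induction i with
        | zero => simp
        | succ i ih => intro t; rw [add_comm, zpow_add, zpow_one, Perm.mul_apply, ← htog k, ih]
        | pred i ih =>
          intro t
          rw [sub_eq_neg_add, zpow_add, Perm.mul_apply, htog k, ← ih t]
          simp
      rintro t ⟨i, rfl⟩
      exact (hz i s0).2 hs0
    have hPd : ∀ T : Set (Sl.S x), P ⟨x, T⟩ → P ⟨x, symmDiff T (cyc (Sl.map k) s0)⟩ := by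
      intro T hT
      refine hPt T _ ?_ hT
      intro s hs
      have := hsub s
      rw [Set.mem_symmDiff]; tauto
    refine Finset.sum_involution (fun T _ => symmDiff T (cyc (Sl.map k) s0)) ?_ ?_ ?_ ?_
    · intro T _
      by_cases h3 : P ⟨x, T⟩
      · rw [if_pos h3, if_pos (hPd T h3), eps_symmDiff]; ring
      · have : ¬ P ⟨x, symmDiff T (cyc (Sl.map k) s0)⟩ := by
          intro h
          have := hPd _ h
          rw [symmDiff_symmDiff_cancel_right] at this
          exact h3 this
        simp [h3, this]
    · intro T _ _ h
      have : s0 ∈ symmDiff T (cyc (Sl.map k) s0) ↔ s0 ∈ T := by rw [h]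
      have h0 : s0 ∈ cyc (Sl.map k) s0 := Perm.SameCycle.refl _ _
      rw [Set.mem_symmDiff] at this; tauto
    · intro T _; exact Finset.mem_univ _
    · intro T _; exact symmDiff_symmDiff_cancel_right _ _
  · refine Finset.sum_eq_zero fun T _ => ?_
    rw [if_neg fun h => hn (hne T h)]

theorem Pr.card_hom (x : A) (T0 : Set (Sl.S x)) [Fintype (Set (Sl.S x))]
    [Fintype (x ⟶ x)] [∀ T : Set (Sl.S x), Fintype ((⟨x, T⟩ : Pr Sl) ⟶ ⟨x, T⟩)] :
    ∑ T : Set (Sl.S x), (if cl (⟨x, T⟩ : Pr Sl) = cl ⟨x, T0⟩ then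
      (Fintype.card ((⟨x, T⟩ : Pr Sl) ⟶ ⟨x, T⟩) : ℤ) else 0) = Fintype.card (x ⟶ x) := by
  have : ∀ T : Set (Sl.S x), Fintype ((⟨x, T⟩ : Pr Sl) ⟶ ⟨x, T0⟩) := fun T => Fintype.ofFinite _
  have h1 : ∀ T : Set (Sl.S x), (if cl (⟨x, T⟩ : Pr Sl) = cl ⟨x, T0⟩ then
      (Fintype.card ((⟨x, T⟩ : Pr Sl) ⟶ ⟨x, T⟩) : ℤ) else 0) =
      Fintype.card ((⟨x, T⟩ : Pr Sl) ⟶ ⟨x, T0⟩) := by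
    intro T
    split_ifs with h
    · obtain ⟨f⟩ := cl_eq.1 h
      norm_cast
      refine Fintype.card_congr ⟨fun k => k ≫ f, fun k => k ≫ Groupoid.inv f, ?_, ?_⟩
      · intro k; simp
      · intro k; simp
    · rw [cl_eq, not_nonempty_iff] at h
      simp
  simp only [h1]
  norm_cast
  rw [← Fintype.card_sigma]
  refine Fintype.card_congr ⟨fun k => k.2.f, fun k => ⟨Sl.map k ⁻¹' T0, k, fun s => Iff.rfl⟩, ?_, ?_⟩
  · rintro ⟨T, ⟨f, h⟩⟩
    change x ⟶ x at f
    change ∀ s : Sl.S x, s ∈ T ↔ Sl.map f s ∈ T0 at h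
    have : T = (Sl.map f ⁻¹' T0) := by ext s; exact h s
    subst this
    rfl
  · intro k; rfl

theorem Pr.fin (P : Pr Sl → Prop) (hP : Inv P)
    (hfin : FinP (fun x : A => ∃ T, P ⟨x, T⟩)) : FinP P := by
  unfold FinP at *
  have := hfin.to_subtype
  refine (Set.finite_range (fun r : (Σ c : {c : Cl A | ∃ T, P ⟨c.out, T⟩}, Set (Sl.S c.1.out)) =>
    cl (⟨r.1.1.out, r.2⟩ : Pr Sl))).subset ?_
  intro c hc
  obtain ⟨f⟩ := out_hom c.out.x
  let T' : Set (Sl.S (cl c.out.x).out) := Sl.map f ⁻¹' c.out.T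
  let k : (⟨_, T'⟩ : Pr Sl) ⟶ c.out := ⟨f, fun s => Iff.rfl⟩
  have hT' : P ⟨_, T'⟩ := by rw [hP _ _ k]; exact hc
  refine ⟨⟨⟨cl c.out.x, T', hT'⟩, T'⟩, ?_⟩
  show cl (⟨_, T'⟩ : Pr Sl) = c
  rw [cl_eq.2 ⟨k⟩, cl_out]

theorem lemC (P : Pr Sl → Prop) (tog : ∀ x, Set (Sl.S x)) (deg : A → ℕ)
    (hP : Inv P) (hdeg : Inv deg)
    (htog : ∀ x y (f : x ⟶ y) s, s ∈ tog x ↔ Sl.map f s ∈ tog y)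
    (hPt : ∀ x (T U : Set (Sl.S x)), (∀ s, s ∉ tog x → (s ∈ T ↔ s ∈ U)) → P ⟨x, T⟩ → P ⟨x, U⟩)
    (hne : ∀ x T, P ⟨x, T⟩ → (tog x).Nonempty)
    (hfin : FinP (fun x : A => ∃ T, P ⟨x, T⟩)) :
    XX P (fun p => deg p.x + p.T.ncard) = 0 := by
  set d : Pr Sl → ℕ := fun p => deg p.x + p.T.ncard with hd
  have hdI : Inv d := by
    intro p q f
    have := hdeg _ _ f.f
    simp only [hd, this]
    congr 1
    rw [← Nat.card_coe_set_eq, ← Nat.card_coe_set_eq]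
    exact Nat.card_congr f.eqv
  have hw := wt_inv hP hdI
  have hPf := Pr.fin P hP hfin
  unfold FinP at hPf
  unfold XX
  have e1 : ∑ᶠ c : Cl (Pr Sl), wt P d c.out = ∑ c ∈ hPf.toFinset, wt P d c.out := by
    refine finsum_eq_sum_of_support_subset _ ?_
    intro c hc
    simp only [Set.Finite.coe_toFinset, Set.mem_ofPred_eq]
    by_contra h
    exact hc (by simp [wt, h])
  rw [e1, ← Finset.sum_fiberwise_of_maps_to (t := hPf.toFinset.image (fun c => cl c.out.x))
    (g := fun c => cl c.out.x) (fun c hc => Finset.mem_image_of_mem _ hc)]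
  refine Finset.sum_eq_zero fun a _ => ?_
  set x := a.out with hx
  have i1 : Fintype (Set (Sl.S x)) := Fintype.ofFinite _
  have i2 : Fintype (x ⟶ x) := Fintype.ofFinite _
  have i3 : ∀ T : Set (Sl.S x), Fintype ((⟨x, T⟩ : Pr Sl) ⟶ ⟨x, T⟩) := fun T => Fintype.ofFinite _
  have h0 := sum_stab x P deg (tog x) (htog x x) (hPt x) (hne x)
  have hcard : (Fintype.card (x ⟶ x) : ℤ) ≠ 0 := by
    have : Nonempty (x ⟶ x) := ⟨𝟙 x⟩
    exact_mod_cast Fintype.card_ne_zero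
  have key : (∑ c ∈ hPf.toFinset with cl c.out.x = a, wt P d c.out) * (Fintype.card (x ⟶ x) : ℤ)
      = 0 := by
    rw [← h0, Finset.sum_mul]
    have e2 : ∀ c ∈ hPf.toFinset.filter (fun c => cl c.out.x = a),
        wt P d c.out * (Fintype.card (x ⟶ x) : ℤ) =
        ∑ T : Set (Sl.S x), if cl (⟨x, T⟩ : Pr Sl) = c then wt P d ⟨x, T⟩ *
          (Fintype.card ((⟨x, T⟩ : Pr Sl) ⟶ ⟨x, T⟩) : ℤ) else 0 := by
      intro c hc
      simp only [Finset.mem_filter] at hc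
      have : Nonempty (x ⟶ c.out.x) := by rw [← cl_eq, hc.2, hx, cl_out]
      obtain ⟨f⟩ := this
      let T' : Set (Sl.S x) := Sl.map f ⁻¹' c.out.T
      let k : (⟨_, T'⟩ : Pr Sl) ⟶ c.out := ⟨f, fun s => Iff.rfl⟩
      have hc' : c = cl ⟨x, T'⟩ := by rw [cl_eq.2 ⟨k⟩, cl_out]
      rw [← Pr.card_hom x T', Finset.mul_sum]
      refine Finset.sum_congr rfl fun T _ => ?_
      rw [← hc']
      split_ifs with h
      · have h' := h
        rw [← cl_out c, cl_eq] at h'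
        obtain ⟨g⟩ := h'
        rw [hw _ _ g]
      · simp
    rw [Finset.sum_congr rfl e2, Finset.sum_comm]
    refine Finset.sum_congr rfl fun T _ => ?_
    by_cases hT : P ⟨x, T⟩
    · rw [Finset.sum_ite_eq, if_pos]
      simp only [Finset.mem_filter, Set.Finite.mem_toFinset, Set.mem_ofPred_eq]
      obtain ⟨g⟩ := out_hom (⟨x, T⟩ : Pr Sl)
      refine ⟨by rw [hP _ _ g]; exact hT, ?_⟩
      rw [cl_eq.2 ⟨g.f⟩]
      exact cl_out a
    · have : wt P d ⟨x, T⟩ = 0 := by simp [wt, hT]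
      have h2 : wt P (fun p => deg p.x + p.T.ncard) ⟨x, T⟩ = 0 := this
      rw [h2]
      simp
  exact (mul_eq_zero.1 key).resolve_right hcard

end LemC
end GraphComplexOdd

namespace GraphComplexOdd
section Conc
open Equiv CategoryTheory
open scoped Classical

universe u v

theorem XX_functor' {A : Type u} {B : Type v} [SG A] [SG B] (P : A → Prop) (Q : B → Prop)
    (dA : A → ℕ) (dB : B → ℕ) (F : A → B) (map : ∀ {x y : A}, (x ⟶ y) → (F x ⟶ F y))
    (hP : Inv P) (hQ : Inv Q) (hdB : Inv dB)
    (hPQ : ∀ x, P x → Q (F x))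
    (hdeg : ∀ x, P x → (-1 : ℤ) ^ dB (F x) = (-1) ^ dA x)
    (hsg : ∀ x, P x → ∀ f : x ⟶ x, SG.sg (map f) = SG.sg f)
    (hfull : ∀ x y, P x → P y → ∀ g : F x ⟶ F y, ∃ f : x ⟶ y, map f = g)
    (hsurj : ∀ y, Q y → Ev y → ∃ x, P x ∧ Nonempty (F x ⟶ y)) :
    XX P dA = XX Q dB := by
  refine XX_functor P Q dA dB F hP hQ hdB hPQ hdeg (fun x y _ _ f => ⟨map f⟩)
    (fun x hx f => ⟨map f, hsg x hx f⟩) (fun x y hx hy g => ⟨(hfull x y hx hy g).choose⟩)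
    (fun x hx g => ?_) hsurj
  obtain ⟨f, rfl⟩ := hfull x x hx hx g
  exact ⟨f, hsg x hx f⟩

structure Ob : Type 1 where
  V : Type
  O : Type
  D : Type
  fV : Finite V
  fO : Finite O
  fD : Finite D
  m : V → V → ℕ
  q : O → V
  inc : O → D → Prop
  symm : ∀ x y, m x y = m y x
  diag : ∀ x, m x x = 0

attribute [instance] Ob.fV Ob.fO Ob.fD

@[ext] structure OHom (G H : Ob) where
  v : G.V ≃ H.V
  o : G.O ≃ H.O
  d : G.D ≃ H.D
  hm : ∀ x y, H.m (v x) (v y) = G.m x y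
  hq : ∀ o', H.q (o o') = v (G.q o')
  hi : ∀ o' δ, H.inc (o o') (d δ) ↔ G.inc o' δ

abbrev OddP (G : Ob) := {p : G.V × G.V // Odd (G.m p.1 p.2)}

def OHom.odd {G H : Ob} (f : OHom G H) : OddP G ≃ OddP H :=
  (Equiv.prodCongr f.v f.v).subtypeEquiv (fun p => by simp [f.hm])

def OHom.id (G : Ob) : OHom G G :=
  ⟨Equiv.refl _, Equiv.refl _, Equiv.refl _, by simp, by simp, by simp⟩
def OHom.comp {G H K : Ob} (f : OHom G H) (g : OHom H K) : OHom G K :=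
  ⟨f.v.trans g.v, f.o.trans g.o, f.d.trans g.d, by simp [f.hm, g.hm], by simp [f.hq, g.hq],
    by simp [f.hi, g.hi]⟩
def OHom.inv {G H : Ob} (f : OHom G H) : OHom H G :=
  ⟨f.v.symm, f.o.symm, f.d.symm, by simp [← f.hm], by
    intro o'; apply f.v.injective; rw [← f.hq]; simp, by simp [← f.hi]⟩

noncomputable instance : SG Ob where
  Hom := OHom
  id := OHom.id
  comp := OHom.comp
  inv := OHom.inv
  id_comp f := by ext <;> rfl
  comp_id f := by ext <;> rfl
  assoc f g h := by ext <;> rfl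
  inv_comp f := by ext <;> simp [OHom.comp, OHom.inv, OHom.id]
  comp_inv f := by ext <;> simp [OHom.comp, OHom.inv, OHom.id]
  fin G H := Finite.of_injective
    (fun f : OHom G H => ((f.v, f.o, f.d) : (G.V ≃ H.V) × (G.O ≃ H.O) × (G.D ≃ H.D))) (by
      intro f g h
      simp only [Prod.mk.injEq] at h
      exact OHom.ext h.1 h.2.1 h.2.2)
  sg f := psgn f.v * psgn f.odd * psgn f.d
  sg_comp f g := by
    have h1 : psgn (f.comp g).odd = psgn f.odd * psgn g.odd := by
      rw [← psgn_trans]; rfl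
    have h2 : psgn (f.comp g).v = psgn f.v * psgn g.v := by
      rw [← psgn_trans]; rfl
    have h3 : psgn (f.comp g).d = psgn f.d * psgn g.d := by
      rw [← psgn_trans]; rfl
    show psgn (f.comp g).v * psgn (f.comp g).odd * psgn (f.comp g).d = _
    rw [h1, h2, h3]
    rw [mul_mul_mul_comm (psgn f.v), mul_mul_mul_comm]
  sg_conj f g g' h := by
    have h : g.comp f = f.comp g' := h
    have hv : ∀ a, f.v (g.v a) = g'.v (f.v a) := fun a =>
      DFunLike.congr_fun (congrArg OHom.v h) a
    have hd : ∀ a, f.d (g.d a) = g'.d (f.d a) := fun a =>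
      DFunLike.congr_fun (congrArg OHom.d h) a
    rw [psgn_conj f.v g.v g'.v hv, psgn_conj f.d g.d g'.d hd, psgn_conj f.odd g.odd g'.odd]
    rintro ⟨⟨a, b⟩, hab⟩
    apply Subtype.ext
    exact Prod.ext (hv a) (hv b)

theorem Ob.sg_def {G : Ob} (f : G ⟶ G) : SG.sg f = psgn f.v * psgn f.odd * psgn f.d := rfl

noncomputable def degE (G : Ob) (x : G.V) : ℕ :=
  letI := Fintype.ofFinite G.V
  ∑ y, G.m x y

theorem degE_eq (G : Ob) (x : G.V) [i : Fintype G.V] : degE G x = ∑ y, G.m x y := by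
  unfold degE
  congr!

noncomputable def cc (G : Ob) (x : G.V) : ℕ := Nat.card {o // G.q o = x}

noncomputable def tm (G : Ob) : ℕ :=
  letI := Fintype.ofFinite G.V
  ∑ x, degE G x

theorem tm_eq (G : Ob) [i : Fintype G.V] : tm G = ∑ x, degE G x := by
  unfold tm
  congr!

theorem degE_hom {G H : Ob} (f : G ⟶ H) (x : G.V) : degE H (f.v x) = degE G x := by
  have := Fintype.ofFinite G.V
  have := Fintype.ofFinite H.V
  rw [degE_eq, degE_eq, ← Equiv.sum_comp f.v]
  simp [f.hm]

theorem cc_hom {G H : Ob} (f : G ⟶ H) (x : G.V) : cc H (f.v x) = cc G x := by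
  unfold cc
  refine (Nat.card_congr (f.o.subtypeEquiv ?_)).symm
  intro o; rw [f.hq]; simp

theorem tm_hom {G H : Ob} (f : G ⟶ H) : tm H = tm G := by
  have := Fintype.ofFinite G.V
  have := Fintype.ofFinite H.V
  rw [tm_eq, tm_eq, ← Equiv.sum_comp f.v]
  simp [degE_hom]

def Conn (G : Ob) : Prop := ∀ p : G.V → Prop, (∀ x y, 0 < G.m x y → (p x → p y)) →
  (∀ o o' δ, G.inc o δ → G.inc o' δ → (p (G.q o) → p (G.q o'))) → ∀ x y, (p x → p y)

theorem Conn_inv : Inv Conn := by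
  refine Inv_prop fun G H f h p h1 h2 x y hx => ?_
  have := h (fun x => p (f.v x)) (fun x y hxy => h1 _ _ (by rw [f.hm]; exact hxy))
    (fun o o' δ ho ho' => by
      rw [← f.hq, ← f.hq]
      exact h2 _ _ _ ((f.hi _ _).2 ho) ((f.hi _ _).2 ho')) (f.v.symm x) (f.v.symm y)
  simpa [hx] using this

def NL (G : Ob) : Prop := ∀ o o' δ, o ≠ o' → G.inc o δ → G.inc o' δ → G.q o ≠ G.q o'

theorem NL_inv : Inv NL := by
  refine Inv_prop fun G H f h o o' δ ho hi hi' => ?_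
  obtain ⟨o, rfl⟩ := f.o.surjective o
  obtain ⟨o', rfl⟩ := f.o.surjective o'
  obtain ⟨δ, rfl⟩ := f.d.surjective δ
  rw [f.hq, f.hq]
  intro h'
  exact h o o' δ (fun h => ho (by rw [h])) ((f.hi _ _).1 hi) ((f.hi _ _).1 hi') (f.v.injective h')

def Kind (k : Bool) (G : Ob) : Prop :=
  if k then ∃ e : G.D × Bool ≃ G.O, ∀ δ i δ', G.inc (e (δ, i)) δ' ↔ δ = δ' else IsEmpty G.D

theorem Kind_inv (k : Bool) : Inv (Kind k) := by
  refine Inv_prop fun G H f h => ?_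
  cases k
  · simp only [Kind, Bool.false_eq_true, if_false] at h ⊢
    exact f.d.symm.isEmpty
  · simp only [Kind, if_true] at h ⊢
    obtain ⟨e, he⟩ := h
    refine ⟨((Equiv.prodCongr f.d.symm (Equiv.refl _)).trans e).trans f.o, ?_⟩
    intro δ i δ'
    obtain ⟨δ, rfl⟩ := f.d.surjective δ
    obtain ⟨δ', rfl⟩ := f.d.surjective δ'
    simp [f.hi, he]

theorem Kind_card {k : Bool} {G : Ob} (h : Kind k G) : Nat.card G.D ≤ Nat.card G.O := by
  cases k
  · simp only [Kind, Bool.false_eq_true, if_false] at h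
    simp
  · simp only [Kind, if_true] at h
    obtain ⟨e, he⟩ := h
    rw [← Nat.card_congr e, Nat.card_prod]
    simp only [Nat.card_eq_fintype_card, Fintype.card_bool]
    omega

def Size (s b : ℕ) (G : Ob) : Prop := tm G + s * Nat.card G.O = 2 * (Nat.card G.V + b)

theorem Size_inv (s b : ℕ) : Inv (Size s b) := by
  refine Inv_prop fun G H f h => ?_
  unfold Size at *
  rw [tm_hom f, ← Nat.card_congr f.o, ← Nat.card_congr f.v, h]

def Valid (G : Ob) : Prop := ∀ x, 3 ≤ degE G x + 2 * cc G x

theorem Valid_inv : Inv Valid := by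
  refine Inv_prop fun G H f h x => ?_
  obtain ⟨x, rfl⟩ := f.v.surjective x
  rw [degE_hom, cc_hom]; exact h x

noncomputable def dg (G : Ob) : ℕ := Nat.card G.V + Nat.card G.D

theorem dg_inv : Inv dg := by
  intro G H f
  unfold dg
  rw [Nat.card_congr f.v, Nat.card_congr f.d]

theorem NE_inv : Inv (fun G : Ob => Nonempty G.O) :=
  Inv_prop fun G H f h => h.map f.o

theorem sum_cc (G : Ob) [Fintype G.V] : ∑ x, cc G x = Nat.card G.O := by
  unfold cc
  have := Fintype.ofFinite G.O
  rw [← Nat.card_congr (Equiv.sigmaFiberEquiv G.q), Nat.card_sigma]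

theorem Valid_card {G : Ob} {s b : ℕ} (hs : 2 ≤ s) (h : Valid G) (hS : Size s b G) :
    Nat.card G.V ≤ 2 * b := by
  have := Fintype.ofFinite G.V
  have h1 : ∑ x : G.V, 3 ≤ ∑ x, (degE G x + 2 * cc G x) := Finset.sum_le_sum fun x _ => h x
  rw [Finset.sum_add_distrib, ← Finset.mul_sum, sum_cc, ← tm_eq] at h1
  simp only [Finset.sum_const, Finset.card_univ, smul_eq_mul, ← Nat.card_eq_fintype_card] at h1
  unfold Size at hS
  have : 2 * Nat.card G.O ≤ s * Nat.card G.O := Nat.mul_le_mul_right _ hs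
  omega

def Bdd (N : ℕ) (G : Ob) : Prop :=
  Nat.card G.V ≤ N ∧ Nat.card G.O ≤ N ∧ Nat.card G.D ≤ N ∧ tm G ≤ N

abbrev Code (N : ℕ) := Σ (n k l : Fin (N + 1)),
  {m : Fin n → Fin n → Fin (N + 1) // (∀ x y, m x y = m y x) ∧ ∀ x, m x x = 0} ×
    (Fin k → Fin n) × (Fin k → Fin l → Prop)

def Code.ob {N : ℕ} (c : Code N) : Ob where
  V := Fin c.1
  O := Fin c.2.1
  D := Fin c.2.2.1
  fV := inferInstance
  fO := inferInstance
  fD := inferInstance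
  m x y := c.2.2.2.1.1 x y
  q := c.2.2.2.2.1
  inc := c.2.2.2.2.2
  symm x y := by rw [c.2.2.2.1.2.1]
  diag x := by rw [c.2.2.2.1.2.2]; rfl

theorem m_le_tm (G : Ob) (x y : G.V) : G.m x y ≤ tm G := by
  have := Fintype.ofFinite G.V
  rw [tm_eq]
  refine le_trans ?_ (Finset.single_le_sum (fun _ _ => Nat.zero_le _) (Finset.mem_univ x))
  rw [degE_eq]
  exact Finset.single_le_sum (f := fun y => G.m x y) (fun _ _ => Nat.zero_le _) (Finset.mem_univ y)

theorem Bdd_fin (N : ℕ) : FinP (Bdd N) := by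
  unfold FinP
  have : Finite (Code N) := inferInstance
  refine (Set.finite_range (fun c : Code N => cl c.ob)).subset ?_
  intro c hc
  obtain ⟨h1, h2, h3, h4⟩ := hc
  set G := c.out with hG
  let ev := Finite.equivFin G.V
  let eo := Finite.equivFin G.O
  let ed := Finite.equivFin G.D
  refine ⟨⟨⟨Nat.card G.V, by omega⟩, ⟨Nat.card G.O, by omega⟩, ⟨Nat.card G.D, by omega⟩,
    ⟨fun x y => ⟨G.m (ev.symm x) (ev.symm y), by have := m_le_tm G (ev.symm x) (ev.symm y); omega⟩,
      fun x y => by simp [G.symm (ev.symm x)], fun x => by simp [G.diag]⟩,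
    fun o => ev (G.q (eo.symm o)), fun o δ => G.inc (eo.symm o) (ed.symm δ)⟩, ?_⟩
  show cl _ = c
  refine Eq.trans (cl_eq.2 ?_) (cl_out c)
  refine ⟨⟨ev.symm, eo.symm, ed.symm, ?_, ?_, ?_⟩⟩
  · intro x y; rfl
  · intro o
    show G.q (eo.symm o) = ev.symm (ev (G.q (eo.symm o)))
    simp
  · intro o δ; rfl

theorem fin_of (k : Bool) (s b : ℕ) (hs : 2 ≤ s) (P : Ob → Prop)
    (h : ∀ G, P G → Kind k G ∧ Size s b G ∧ Valid G) : FinP P := by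
  refine (Bdd_fin (6 * b)).mono fun G hG => ?_
  obtain ⟨h1, h2, h3⟩ := h G hG
  have := Valid_card hs h3 h2
  have h4 := Kind_card h1
  unfold Size at h2
  have : 2 * Nat.card G.O ≤ s * Nat.card G.O := Nat.mul_le_mul_right _ hs
  refine ⟨?_, ?_, ?_, ?_⟩ <;> omega

end Conc
end GraphComplexOdd

namespace GraphComplexOdd
section StepB
open Equiv CategoryTheory
open scoped Classical

def Thin (G : Ob) (x : G.V) : Prop := degE G x = 1 ∧ cc G x = 1
def Z2 (G : Ob) (x : G.V) : Prop := degE G x = 0 ∧ cc G x = 2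
def TT (G : Ob) : Prop := ∃ x y, Thin G x ∧ Thin G y ∧ 0 < G.m x y
def Spec (G : Ob) : Prop := (∃ x, Z2 G x) ∨ TT G

theorem Thin_hom {G H : Ob} (f : G ⟶ H) (x : G.V) : Thin H (f.v x) ↔ Thin G x := by
  unfold Thin; rw [degE_hom, cc_hom]
theorem Z2_hom {G H : Ob} (f : G ⟶ H) (x : G.V) : Z2 H (f.v x) ↔ Z2 G x := by
  unfold Z2; rw [degE_hom, cc_hom]
theorem TT_inv : Inv TT := by
  refine Inv_prop fun G H f h => ?_
  obtain ⟨x, y, hx, hy, hxy⟩ := h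
  exact ⟨f.v x, f.v y, (Thin_hom f x).2 hx, (Thin_hom f y).2 hy, by rw [f.hm]; exact hxy⟩
theorem Spec_inv : Inv Spec := by
  refine Inv_prop fun G H f h => ?_
  rcases h with ⟨x, hx⟩ | h
  · exact Or.inl ⟨f.v x, (Z2_hom f x).2 hx⟩
  · right; rw [← TT_inv _ _ f]; exact h

theorem Inv.and {A : Type*} [SG A] {P Q : A → Prop} (h : Inv P) (h' : Inv Q) :
    Inv (fun x => P x ∧ Q x) := fun x y f => by beta_reduce; rw [h x y f, h' x y f]
theorem Inv.not {A : Type*} [SG A] {P : A → Prop} (h : Inv P) :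
    Inv (fun x => ¬ P x) := fun x y f => by beta_reduce; rw [h x y f]

theorem thin_nb {G : Ob} {x : G.V} (h : degE G x = 1) : ∃ y, 0 < G.m x y := by
  have := Fintype.ofFinite G.V
  by_contra h'
  push Not at h'
  rw [degE_eq, Finset.sum_eq_zero (fun y _ => Nat.le_zero.1 (h' y))] at h
  omega

theorem thin_m {G : Ob} {x y : G.V} (h : degE G x = 1) (hy : 0 < G.m x y) (z : G.V) :
    G.m x z = if z = y then 1 else 0 := by
  have := Fintype.ofFinite G.V
  rw [degE_eq, ← Finset.add_sum_erase _ _ (Finset.mem_univ y)] at h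
  split_ifs with hz
  · subst hz; omega
  · have : G.m x z ≤ ∑ w ∈ Finset.univ.erase y, G.m x w :=
      Finset.single_le_sum (f := fun w => G.m x w) (fun _ _ => Nat.zero_le _)
        (Finset.mem_erase.2 ⟨hz, Finset.mem_univ _⟩)
    omega

theorem cc_one_uniq {G : Ob} {x : G.V} (h : cc G x = 1) {o o' : G.O} (ho : G.q o = x)
    (ho' : G.q o' = x) : o = o' := by
  have := (Nat.card_eq_one_iff_unique.1 h).1
  exact congrArg Subtype.val (Subsingleton.elim (⟨o, ho⟩ : {o // G.q o = x}) ⟨o', ho'⟩)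

theorem cc_one_ex {G : Ob} {x : G.V} (h : cc G x = 1) : ∃ o, G.q o = x := by
  obtain ⟨⟨o, ho⟩⟩ := (Nat.card_eq_one_iff_unique.1 h).2
  exact ⟨o, ho⟩

theorem sum_split {α β α' β' : Type*} (e : α ⊕ β ≃ α' ⊕ β')
    (h1 : ∀ a, ∃ a', e (Sum.inl a) = Sum.inl a') (h2 : ∀ b, ∃ b', e (Sum.inr b) = Sum.inr b') :
    ∃ (e1 : α ≃ α') (e2 : β ≃ β'), e = Equiv.sumCongr e1 e2 := by
  choose f hf using h1
  choose g hg using h2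
  have bf : Function.Bijective f := by
    constructor
    · intro a a' h
      exact Sum.inl_injective (e.injective (by rw [hf, hf, h]))
    · intro a'
      obtain ⟨c, hc⟩ := e.surjective (Sum.inl a')
      rcases c with a | b
      · exact ⟨a, Sum.inl_injective (by rw [← hf, hc])⟩
      · rw [hg] at hc; cases hc
  have bg : Function.Bijective g := by
    constructor
    · intro a a' h
      exact Sum.inr_injective (e.injective (by rw [hg, hg, h]))
    · intro a'
      obtain ⟨c, hc⟩ := e.surjective (Sum.inr a')
      rcases c with a | b
      · rw [hf] at hc; cases hc
      · exact ⟨b, Sum.inr_injective (by rw [← hg, hc])⟩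
  refine ⟨Equiv.ofBijective f bf, Equiv.ofBijective g bg, ?_⟩
  ext c
  rcases c with a | b
  · simp [hf]
  · simp [hg]

@[reducible] def Osl : Slots Ob where
  S G := G.O
  fin G := G.fO
  map f := f.o
  map_id x s := rfl
  map_comp f g s := rfl

@[reducible] noncomputable def ExpB (p : Pr Osl) : Ob where
  V := p.x.V ⊕ p.T
  O := p.x.O
  D := p.x.D
  fV := by
    have : Finite (Osl.S p.x) := Osl.fin p.x
    infer_instance
  fO := inferInstance
  fD := inferInstance
  m := fun a b => match a, b with
    | Sum.inl x, Sum.inl y => p.x.m x y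
    | Sum.inl x, Sum.inr t => if x = p.x.q t.1 then 1 else 0
    | Sum.inr t, Sum.inl x => if x = p.x.q t.1 then 1 else 0
    | Sum.inr _, Sum.inr _ => 0
  q := fun o => if h : o ∈ p.T then Sum.inr ⟨o, h⟩ else Sum.inl (p.x.q o)
  inc := p.x.inc
  symm := by
    rintro (x | t) (y | t') <;> simp [p.x.symm]
  diag := by
    rintro (x | t) <;> simp [p.x.diag]

variable (p : Pr Osl)

theorem ExpB_q_mem {o : p.x.O} (h : o ∈ p.T) : (ExpB p).q o = Sum.inr ⟨o, h⟩ := dif_pos h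
theorem ExpB_q_nmem {o : p.x.O} (h : o ∉ p.T) : (ExpB p).q o = Sum.inl (p.x.q o) := dif_neg h
theorem ExpB_ll (x y : p.x.V) : (ExpB p).m (Sum.inl x) (Sum.inl y) = p.x.m x y := rfl
theorem ExpB_lr (x : p.x.V) (t : p.T) :
    (ExpB p).m (Sum.inl x) (Sum.inr t) = if x = p.x.q t.1 then 1 else 0 := rfl
theorem ExpB_rl (x : p.x.V) (t : p.T) :
    (ExpB p).m (Sum.inr t) (Sum.inl x) = if x = p.x.q t.1 then 1 else 0 := rfl
theorem ExpB_rr (t t' : p.T) : (ExpB p).m (Sum.inr t) (Sum.inr t') = 0 := rfl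

theorem ExpB_degE_l (x : p.x.V) : degE (ExpB p) (Sum.inl x) =
    degE p.x x + Nat.card {o // o ∈ p.T ∧ p.x.q o = x} := by
  have i1 := Fintype.ofFinite p.x.V
  have i2 : Fintype p.T := Fintype.ofFinite _
  have i3 : Fintype p.x.O := Fintype.ofFinite _
  have h := @degE_eq (ExpB p) (Sum.inl x) (inferInstanceAs (Fintype (p.x.V ⊕ p.T)))
  rw [h, degE_eq]
  refine (Fintype.sum_sum_type _).trans ?_
  congr 1
  simp only [ExpB_lr]
  rw [Finset.sum_boole, Nat.cast_id, ← Fintype.card_subtype, ← Nat.card_eq_fintype_card]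
  refine Nat.card_congr ?_
  exact ⟨fun t => ⟨t.1.1, t.1.2, t.2.symm⟩, fun t => ⟨⟨t.1, t.2.1⟩, t.2.2.symm⟩, fun _ => rfl,
    fun _ => rfl⟩

theorem ExpB_cc_l (x : p.x.V) : cc (ExpB p) (Sum.inl x) =
    Nat.card {o // o ∉ p.T ∧ p.x.q o = x} := by
  unfold cc
  refine Nat.card_congr (Equiv.subtypeEquivRight ?_)
  intro (o : p.x.O)
  by_cases h : o ∈ p.T
  · rw [ExpB_q_mem p h]
    exact ⟨fun h' => (by cases h'), fun h' => absurd h h'.1⟩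
  · rw [ExpB_q_nmem p h]
    exact ⟨fun h' => ⟨h, Sum.inl_injective h'⟩, fun h' => congrArg Sum.inl h'.2⟩

theorem cc_split (x : p.x.V) : cc p.x x = Nat.card {o // o ∈ p.T ∧ p.x.q o = x} +
    Nat.card {o // o ∉ p.T ∧ p.x.q o = x} := by
  have i3 : Fintype p.x.O := Fintype.ofFinite _
  unfold cc
  rw [← Nat.card_sum]
  refine Nat.card_congr ⟨fun o => if h : o.1 ∈ p.T then Sum.inl ⟨o.1, h, o.2⟩ else
    Sum.inr ⟨o.1, h, o.2⟩, Sum.elim (fun o => ⟨o.1, o.2.2⟩) (fun o => ⟨o.1, o.2.2⟩), ?_, ?_⟩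
  · intro o
    by_cases h : o.1 ∈ p.T <;> simp [h]
  · rintro (o | o)
    · exact dif_pos o.2.1
    · exact dif_neg o.2.1

theorem ExpB_sum (x : p.x.V) : degE (ExpB p) (Sum.inl x) + cc (ExpB p) (Sum.inl x) =
    degE p.x x + cc p.x x := by
  rw [ExpB_degE_l, ExpB_cc_l, cc_split]; ring

theorem ExpB_degE_r (t : p.T) : degE (ExpB p) (Sum.inr t) = 1 := by
  have i1 := Fintype.ofFinite p.x.V
  have i2 : Fintype p.T := Fintype.ofFinite _
  have h := @degE_eq (ExpB p) (Sum.inr t) (inferInstanceAs (Fintype (p.x.V ⊕ p.T)))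
  rw [h]
  refine (Fintype.sum_sum_type _).trans ?_
  simp [ExpB_rl, ExpB_rr]

theorem ExpB_cc_r (t : p.T) : cc (ExpB p) (Sum.inr t) = 1 := by
  unfold cc
  rw [Nat.card_eq_one_iff_unique]
  have h : ∀ o : p.x.O, (ExpB p).q o = Sum.inr t → o = t.1 := by
    intro o h
    by_cases ho : o ∈ p.T
    · rw [ExpB_q_mem p ho] at h
      rw [← Sum.inr_injective h]
    · rw [ExpB_q_nmem p ho] at h; cases h
  refine ⟨⟨fun a b => Subtype.ext ((h _ a.2).trans (h _ b.2).symm)⟩, ⟨⟨t.1, ?_⟩⟩⟩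
  exact ExpB_q_mem p t.2

theorem ExpB_thin_r (t : p.T) : Thin (ExpB p) (Sum.inr t) := ⟨ExpB_degE_r p t, ExpB_cc_r p t⟩

theorem ExpB_tm : tm (ExpB p) = tm p.x + 2 * Nat.card p.T := by
  have i1 := Fintype.ofFinite p.x.V
  have i2 : Fintype p.T := Fintype.ofFinite _
  have i3 : Fintype p.x.O := Fintype.ofFinite _
  have h := @tm_eq (ExpB p) (inferInstanceAs (Fintype (p.x.V ⊕ p.T)))
  rw [h, tm_eq]
  refine (Fintype.sum_sum_type _).trans ?_
  rw [Finset.sum_congr rfl (fun x _ => ExpB_degE_l p x),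
    Finset.sum_congr rfl (fun x _ => ExpB_degE_r p x), Finset.sum_add_distrib]
  have : ∑ x : p.x.V, Nat.card {o // o ∈ p.T ∧ p.x.q o = x} = Nat.card p.T := by
    rw [← Nat.card_congr (Equiv.sigmaFiberEquiv (fun t : p.T => p.x.q t.1)), Nat.card_sigma]
    refine Finset.sum_congr rfl fun x _ => Nat.card_congr ?_
    exact ⟨fun t => ⟨⟨t.1, t.2.1⟩, t.2.2⟩, fun t => ⟨t.1.1, t.1.2, t.2⟩, fun _ => rfl,
      fun _ => rfl⟩
  rw [this, Finset.sum_const, Finset.card_univ, ← Nat.card_eq_fintype_card]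
  simp only [smul_eq_mul]; ring

theorem ExpB_cardV : Nat.card (ExpB p).V = Nat.card p.x.V + Nat.card p.T := by
  have : Finite (Osl.S p.x) := Osl.fin p.x
  exact Nat.card_sum

theorem ExpB_size (s b : ℕ) : Size s b (ExpB p) ↔ Size s b p.x := by
  unfold Size
  rw [ExpB_tm, ExpB_cardV]
  show _ + s * Nat.card p.x.O = _ ↔ _
  constructor <;> intro h <;> omega

def Fam (G : Ob) (T : Set G.O) : Prop :=
  ∀ o o' δ, o ≠ o' → G.inc o δ → G.inc o' δ → G.q o = G.q o' → o ∈ T ∨ o' ∈ T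

theorem ExpB_NL : NL (ExpB p) ↔ Fam p.x p.T := by
  constructor
  · intro h o o' δ ho hi hi' hq
    by_contra hc
    push Not at hc
    refine h o o' δ ho hi hi' ?_
    rw [ExpB_q_nmem p hc.1, ExpB_q_nmem p hc.2, hq]
  · intro h o o' δ ho hi hi' hq
    by_cases h1 : o ∈ p.T <;> by_cases h2 : o' ∈ p.T
    · rw [ExpB_q_mem p h1, ExpB_q_mem p h2] at hq
      exact ho (congrArg Subtype.val (Sum.inr_injective hq))
    · rw [ExpB_q_mem p h1, ExpB_q_nmem p h2] at hq; cases hq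
    · rw [ExpB_q_nmem p h1, ExpB_q_mem p h2] at hq; cases hq
    · rw [ExpB_q_nmem p h1, ExpB_q_nmem p h2] at hq
      rcases h o o' δ ho hi hi' (Sum.inl_injective hq) with h | h
      · exact h1 h
      · exact h2 h

theorem ExpB_conn : Conn (ExpB p) ↔ Conn p.x := by
  constructor
  · intro h r h1 h2 x y hx
    let r' : (ExpB p).V → Prop := Sum.elim r (fun t => r (p.x.q t.1))
    have hr' : ∀ o, r' ((ExpB p).q o) = r (p.x.q o) := by
      intro o
      by_cases ho : o ∈ p.T
      · rw [ExpB_q_mem p ho]; rfl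
      · rw [ExpB_q_nmem p ho]; rfl
    refine h r' ?_ ?_ (Sum.inl x) (Sum.inl y) hx
    · rintro (a | t) (a' | t') hm ha
      · exact h1 _ _ hm ha
      · rw [ExpB_lr] at hm
        have : a = p.x.q t'.1 := by by_contra hc; rw [if_neg hc] at hm; omega
        subst this; exact ha
      · rw [ExpB_rl] at hm
        have : a' = p.x.q t.1 := by by_contra hc; rw [if_neg hc] at hm; omega
        subst this; exact ha
      · rw [ExpB_rr] at hm; omega
    · intro o o' δ ho ho'
      rw [hr', hr']; exact h2 o o' δ ho ho'
  · intro h r' h1 h2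
    have key : ∀ t : p.T, r' (Sum.inr t) ↔ r' (Sum.inl (p.x.q t.1)) := fun t =>
      ⟨h1 _ _ (by rw [ExpB_rl]; simp), h1 _ _ (by rw [ExpB_lr]; simp)⟩
    have key2 : ∀ o, r' ((ExpB p).q o) ↔ r' (Sum.inl (p.x.q o)) := by
      intro o
      by_cases ho : o ∈ p.T
      · rw [ExpB_q_mem p ho, key]
      · rw [ExpB_q_nmem p ho]
    have := h (fun x => r' (Sum.inl x)) (fun x y hxy => h1 _ _ hxy) (fun o o' δ ho ho' => by
      intro hr
      exact (key2 o').1 (h2 o o' δ ho ho' ((key2 o).2 hr)))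
    rintro (x | t) (y | t')
    · exact this _ _
    · rw [key]; exact this _ _
    · rw [key]; exact this _ _
    · rw [key, key]; exact this _ _

def Val3 (G : Ob) : Prop := ∀ x, 3 ≤ degE G x + cc G x

def Pb (k : Bool) (s b : ℕ) (p : Pr Osl) : Prop :=
  (Kind k p.x ∧ Size s b p.x ∧ Nonempty p.x.O ∧ Conn p.x ∧ Val3 p.x) ∧ Fam p.x p.T

def Bs (k : Bool) (s b : ℕ) (G : Ob) : Prop :=
  Kind k G ∧ Size s b G ∧ Nonempty G.O ∧ Conn G ∧ Valid G ∧ NL G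

theorem Bs_inv (k : Bool) (s b : ℕ) : Inv (Bs k s b) :=
  (Kind_inv k).and ((Size_inv s b).and (NE_inv.and (Conn_inv.and (Valid_inv.and NL_inv))))

theorem Val3_inv : Inv Val3 := by
  refine Inv_prop fun G H f h x => ?_
  obtain ⟨x, rfl⟩ := f.v.surjective x
  rw [degE_hom, cc_hom]; exact h x

theorem Fam_inv : Inv (fun p : Pr Osl => Fam p.x p.T) := by
  refine Inv_prop fun p p' f h o o' δ ho hi hi' => ?_
  obtain ⟨o, rfl⟩ := f.f.o.surjective o
  obtain ⟨o', rfl⟩ := f.f.o.surjective o'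
  obtain ⟨δ, rfl⟩ := f.f.d.surjective δ
  rw [f.f.hq, f.f.hq]
  intro h'
  have := h o o' δ (fun h => ho (by rw [h])) ((f.f.hi _ _).1 hi) ((f.f.hi _ _).1 hi')
    (f.f.v.injective h')
  exact this.imp (f.h o).1 (f.h o').1

theorem Inv.pr {Sl : Slots Ob} {P : Ob → Prop} (h : Inv P) : Inv (fun p : Pr Sl => P p.x) :=
  fun p p' f => h _ _ f.f

theorem Pb_inv (k : Bool) (s b : ℕ) : Inv (Pb k s b) :=
  ((Kind_inv k).and ((Size_inv s b).and (NE_inv.and (Conn_inv.and Val3_inv)))).pr.and Fam_inv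

theorem Pb_iff (k : Bool) (s b : ℕ) (p : Pr Osl) : Pb k s b p ↔
    (Bs k s b (ExpB p) ∧ ¬ Spec (ExpB p)) ∧ ∀ x, ¬ Thin (ExpB p) (Sum.inl x) := by
  constructor
  · rintro ⟨⟨h1, h2, h3, h4, h5⟩, h6⟩
    have hth : ∀ x, ¬ Thin (ExpB p) (Sum.inl x) := by
      intro x hx
      have := ExpB_sum p x
      have := h5 x
      have := hx.1
      have := hx.2
      omega
    refine ⟨⟨⟨h1, (ExpB_size p s b).2 h2, h3, (ExpB_conn p).2 h4, ?_, (ExpB_NL p).2 h6⟩, ?_⟩, hth⟩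
    · rintro (x | t)
      · have := ExpB_sum p x
        have := h5 x
        omega
      · rw [ExpB_degE_r, ExpB_cc_r]
    · rintro (⟨x | t, hx⟩ | ⟨x | t, y | t', hx, hy, hxy⟩)
      · have := ExpB_sum p x
        have := h5 x
        have := hx.1
        have := hx.2
        omega
      · have := hx.1
        rw [ExpB_degE_r] at this
        omega
      · exact hth _ hx
      · exact hth _ hx
      · exact hth _ hy
      · rw [ExpB_rr] at hxy; omega
  · rintro ⟨⟨⟨h1, h2, h3, h4, h5, h6⟩, h7⟩, h8⟩
    refine ⟨⟨h1, (ExpB_size p s b).1 h2, h3, (ExpB_conn p).1 h4, ?_⟩, (ExpB_NL p).1 h6⟩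
    intro x
    rw [← ExpB_sum]
    have a1 := h5 (Sum.inl x)
    have a2 := h8 x
    have a3 : ¬ Z2 (ExpB p) (Sum.inl x) := fun h => h7 (Or.inl ⟨_, h⟩)
    unfold Thin at a2
    unfold Z2 at a3
    omega

noncomputable def ExpB_map {p p' : Pr Osl} (f : p ⟶ p') : ExpB p ⟶ ExpB p' where
  v := Equiv.sumCongr f.f.v f.eqv
  o := f.f.o
  d := f.f.d
  hm := by
    rintro (x | t) (y | t')
    · exact f.f.hm x y
    · show (if f.f.v x = p'.x.q (f.f.o t'.1) then 1 else 0) = if x = p.x.q t'.1 then 1 else 0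
      rw [f.f.hq]; simp
    · show (if f.f.v y = p'.x.q (f.f.o t.1) then 1 else 0) = if y = p.x.q t.1 then 1 else 0
      rw [f.f.hq]; simp
    · rfl
  hq := by
    intro (o : p.x.O)
    by_cases ho : o ∈ p.T
    · rw [ExpB_q_mem p ho]
      exact ExpB_q_mem p' ((f.h o).1 ho)
    · rw [ExpB_q_nmem p ho]
      refine (ExpB_q_nmem p' (fun h => ho ((f.h o).2 h))).trans ?_
      exact congrArg Sum.inl (f.f.hq o)
  hi := f.f.hi

theorem ExpB_sg {p : Pr Osl} (f : p ⟶ p) : SG.sg (ExpB_map f) = SG.sg f := by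
  have i0 : Finite (Osl.S p.x) := Osl.fin p.x
  rw [Ob.sg_def, Pr.sg_def, Ob.sg_def]
  have h1 : psgn (ExpB_map f).v = psgn f.f.v * psgn f.eqv := psgn_sum _ _
  have h2 : psgn (ExpB_map f).odd = psgn f.f.odd := by
    let F : (OddP p.x ⊕ p.T) ⊕ p.T → OddP (ExpB p) := fun a => match a with
      | Sum.inl (Sum.inl r) => ⟨(Sum.inl r.1.1, Sum.inl r.1.2), r.2⟩
      | Sum.inl (Sum.inr t) => ⟨(Sum.inl (p.x.q t.1), Sum.inr t), by
          show Odd ((ExpB p).m (Sum.inl _) (Sum.inr _))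
          rw [ExpB_lr]; simp⟩
      | Sum.inr t => ⟨(Sum.inr t, Sum.inl (p.x.q t.1)), by
          show Odd ((ExpB p).m (Sum.inr _) (Sum.inl _))
          rw [ExpB_rl]; simp⟩
    have hF : Function.Bijective F := by
      constructor
      · rintro ((⟨⟨a, b⟩, h⟩ | t) | t) ((⟨⟨a', b'⟩, h'⟩ | t') | t') hh <;>
          have hh1 := congrArg (fun z => z.1.1) hh <;>
          have hh2 := congrArg (fun z => z.1.2) hh <;>
          simp only [F, Sum.inl.injEq, Sum.inr.injEq, reduceCtorEq] at hh1 hh2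
        · subst hh1; subst hh2; rfl
        · subst hh2; rfl
        · subst hh1; rfl
      · rintro ⟨⟨a | t, b | t'⟩, h⟩
        · exact ⟨Sum.inl (Sum.inl ⟨(a, b), h⟩), rfl⟩
        · have h' : Odd ((ExpB p).m (Sum.inl a) (Sum.inr t')) := h
          rw [ExpB_lr] at h'
          have : a = p.x.q t'.1 := by by_contra hc; rw [if_neg hc] at h'; simp at h'
          subst this
          exact ⟨Sum.inl (Sum.inr t'), rfl⟩
        · have h' : Odd ((ExpB p).m (Sum.inr t) (Sum.inl b)) := h
          rw [ExpB_rl] at h'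
          have : b = p.x.q t.1 := by by_contra hc; rw [if_neg hc] at h'; simp at h'
          subst this
          exact ⟨Sum.inr t, rfl⟩
        · have h' : Odd ((ExpB p).m (Sum.inr t) (Sum.inr t')) := h
          rw [ExpB_rr] at h'; simp at h'
    have e := psgn_conj (Equiv.ofBijective F hF)
      (Equiv.sumCongr (Equiv.sumCongr f.f.odd f.eqv) f.eqv) (ExpB_map f).odd (by
        rintro ((r | t) | t)
        · rfl
        · apply Subtype.ext
          refine Prod.ext ?_ rfl
          exact congrArg Sum.inl (f.f.hq t.1)
        · apply Subtype.ext
          refine Prod.ext rfl ?_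
          exact congrArg Sum.inl (f.f.hq t.1))
    rw [← e, psgn_sum, psgn_sum, mul_assoc, Int.units_mul_self, mul_one]
  rw [h1, h2]
  show _ * _ * psgn f.f.d = _
  rw [mul_right_comm (psgn f.f.v), mul_right_comm _ (psgn f.eqv)]

theorem ExpB_full (k : Bool) (s b : ℕ) {p p' : Pr Osl} (hp : Pb k s b p) (hp' : Pb k s b p')
    (g : ExpB p ⟶ ExpB p') : ∃ f : p ⟶ p', ExpB_map f = g := by
  rw [Pb_iff] at hp hp'
  have h1 : ∀ a, ∃ a', g.v (Sum.inl a) = Sum.inl a' := by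
    intro a
    rcases h : g.v (Sum.inl a) with a' | t
    · exact ⟨a', rfl⟩
    · exfalso
      apply hp.2 a
      refine (Thin_hom g _).1 ?_
      rw [h]
      exact ExpB_thin_r p' t
  have h2 : ∀ a, ∃ a', g.v (Sum.inr a) = Sum.inr a' := by
    intro a
    rcases h : g.v (Sum.inr a) with a' | t
    · exfalso
      apply hp'.2 a'
      rw [← h]
      exact (Thin_hom g _).2 (ExpB_thin_r p a)
    · exact ⟨t, rfl⟩
  obtain ⟨e1, e2, he⟩ := sum_split (α := p.x.V) (β := p.T) (α' := p'.x.V) (β' := p'.T) g.v h1 h2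
  have hl : ∀ a, g.v (Sum.inl a) = Sum.inl (e1 a) := fun a => by rw [he]; rfl
  have hr : ∀ a, g.v (Sum.inr a) = Sum.inr (e2 a) := fun a => by rw [he]; rfl
  have hT : ∀ o (h : o ∈ p.T), (e2 ⟨o, h⟩).1 = g.o o := by
    intro o h
    have a1 := g.hq o
    rw [ExpB_q_mem p h, hr] at a1
    by_cases h' : g.o o ∈ p'.T
    · rw [ExpB_q_mem p' h'] at a1
      rw [← Sum.inr_injective a1]
    · rw [ExpB_q_nmem p' h'] at a1; cases a1
  have hTi : ∀ o : p.x.O, o ∈ p.T ↔ g.o o ∈ p'.T := by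
    intro o
    constructor
    · intro h; rw [← hT o h]; exact (e2 ⟨o, h⟩).2
    · intro h
      by_contra h'
      have a1 := g.hq o
      rw [ExpB_q_nmem p h', hl, ExpB_q_mem p' h] at a1
      cases a1
  refine ⟨⟨⟨e1, g.o, g.d, ?_, ?_, g.hi⟩, hTi⟩, ?_⟩
  · intro x y
    have := g.hm (Sum.inl x) (Sum.inl y)
    rw [hl, hl] at this
    exact this
  · intro o
    by_cases h : o ∈ p.T
    · have a1 := g.hm (Sum.inl (p.x.q o)) (Sum.inr ⟨o, h⟩)
      rw [hl, hr, ExpB_lr, ExpB_lr, hT o h] at a1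
      by_contra hc
      rw [if_pos rfl, if_neg (fun h => hc h.symm)] at a1
      omega
    · have a1 := g.hq o
      rw [ExpB_q_nmem p h, hl, ExpB_q_nmem p' (fun h' => h ((hTi o).2 h'))] at a1
      exact Sum.inl_injective a1
  · refine OHom.ext ?_ rfl rfl
    ext c
    rcases c with a | t
    · rw [hl]; rfl
    · rw [hr]
      refine congrArg Sum.inr (Subtype.ext ?_)
      exact (hT t.1 t.2).symm

theorem ExpB_surj (H : Ob) (hS : ¬ TT H) :
    ∃ p : Pr Osl, (∀ x, ¬ Thin (ExpB p) (Sum.inl x)) ∧ Nonempty (ExpB p ⟶ H) := by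
  have hnb : ∀ x, Thin H x → ∃ y, 0 < H.m x y ∧ ¬ Thin H y := by
    intro x hx
    obtain ⟨y, hy⟩ := thin_nb hx.1
    exact ⟨y, hy, fun h => hS ⟨x, y, hx, h, hy⟩⟩
  choose nb hnb1 hnb2 using hnb
  let S : Ob :=
    { V := {x // ¬ Thin H x}
      O := H.O
      D := H.D
      fV := inferInstance
      fO := inferInstance
      fD := inferInstance
      m := fun x y => H.m x y
      q := fun o => if h : Thin H (H.q o) then ⟨nb _ h, hnb2 _ h⟩ else ⟨H.q o, h⟩
      inc := H.inc
      symm := fun x y => H.symm _ _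
      diag := fun x => H.diag _ }
  let p : Pr Osl := ⟨S, {o : H.O | Thin H (H.q o)}⟩
  let φ : (ExpB p).V → H.V := Sum.elim (fun x : {x // ¬ Thin H x} => x.1) (fun t => H.q t.1)
  have hφ : Function.Bijective φ := by
    constructor
    · rintro (x | t) (y | t') h
      · exact congrArg Sum.inl (Subtype.ext h)
      · exfalso
        apply x.2
        have h : x.1 = H.q t'.1 := h
        rw [h]; exact t'.2
      · exfalso
        apply y.2
        have h : H.q t.1 = y.1 := h
        rw [← h]; exact t.2
      · have h : H.q t.1 = H.q t'.1 := h
        have ht' : Thin H (H.q t'.1) := t'.2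
        exact congrArg Sum.inr (Subtype.ext (cc_one_uniq ht'.2 h rfl))
    · intro x
      by_cases hx : Thin H x
      · obtain ⟨o, ho⟩ := cc_one_ex hx.2
        exact ⟨Sum.inr ⟨o, by show Thin H (H.q o); rw [ho]; exact hx⟩, ho⟩
      · exact ⟨Sum.inl ⟨x, hx⟩, rfl⟩
  have hqT : ∀ (o : H.O) (h : Thin H (H.q o)), S.q o = ⟨nb _ h, hnb2 _ h⟩ := fun o h => dif_pos h
  have hqN : ∀ (o : H.O) (h : ¬ Thin H (H.q o)), S.q o = ⟨H.q o, h⟩ := fun o h => dif_neg h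
  have hlr : ∀ (x : S.V) (t : p.T), H.m x.1 (H.q t.1) = if x = S.q t.1 then 1 else 0 := by
    intro x t
    have ht : Thin H (H.q t.1) := t.2
    rw [H.symm, thin_m ht.1 (hnb1 _ ht), hqT _ ht]
    congr 1
    exact propext ⟨fun h => Subtype.ext h, fun h => congrArg Subtype.val h⟩
  let F : ExpB p ⟶ H := ⟨Equiv.ofBijective φ hφ, Equiv.refl _, Equiv.refl _, by
      rintro (x | t) (y | t')
      · rfl
      · refine (hlr x t').trans ?_
        congr
      · refine Eq.trans (H.symm _ _) ((hlr y t).trans ?_)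
        congr
      · show H.m (H.q t.1) (H.q t'.1) = 0
        by_contra hc
        exact hS ⟨_, _, t.2, t'.2, Nat.pos_of_ne_zero hc⟩, by
      intro (o : H.O)
      by_cases ho : o ∈ p.T
      · rw [ExpB_q_mem p ho]; rfl
      · rw [ExpB_q_nmem p ho]
        show H.q o = (S.q o).1
        rw [hqN o ho], fun o δ => Iff.rfl⟩
  refine ⟨p, ?_, ⟨F⟩⟩
  intro x hx
  exact x.2 ((Thin_hom F _).2 hx)

theorem stepB (k : Bool) (s b : ℕ) :
    XX (Pb k s b) (fun p => dg p.x + p.T.ncard) = XX (fun G => Bs k s b G ∧ ¬ Spec G) dg := by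
  refine XX_functor' _ _ _ _ ExpB ExpB_map (Pb_inv k s b) ((Bs_inv k s b).and Spec_inv.not) dg_inv
    (fun p hp => ((Pb_iff k s b p).1 hp).1) ?_ (fun p _ f => ExpB_sg f)
    (fun p p' hp hp' g => ExpB_full k s b hp hp' g) ?_
  · intro p _
    unfold dg
    rw [ExpB_cardV]
    show (-1 : ℤ) ^ (_ + Nat.card p.x.D) = _
    rw [Nat.card_coe_set_eq, add_right_comm]
  · intro H hH _
    obtain ⟨p, hp, ⟨F⟩⟩ := ExpB_surj H (fun h => hH.2 (Or.inr h))
    refine ⟨p, (Pb_iff k s b p).2 ⟨?_, hp⟩, ⟨F⟩⟩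
    have := ((Bs_inv k s b).and Spec_inv.not) _ _ F
    exact this.mpr hH

end StepB
end GraphComplexOdd

namespace GraphComplexOdd
section StepA
open Equiv CategoryTheory
open scoped Classical

@[reducible] def Vsl : Slots Ob where
  S G := G.V
  fin G := G.fV
  map f := f.v
  map_id x s := rfl
  map_comp f g s := rfl

@[reducible] noncomputable def ExpA (p : Pr Vsl) : Ob where
  V := {x : p.x.V // x ∉ p.T} ⊕ {o : p.x.O // p.x.q o ∈ p.T}
  O := p.x.O
  D := p.x.D
  fV := inferInstance
  fO := inferInstance
  fD := inferInstance
  m := fun a b => match a, b with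
    | Sum.inl x, Sum.inl y => p.x.m x.1 y.1
    | Sum.inl _, Sum.inr _ => 0
    | Sum.inr _, Sum.inl _ => 0
    | Sum.inr o, Sum.inr o' => if o ≠ o' ∧ p.x.q o.1 = p.x.q o'.1 then 1 else 0
  q := fun o => if h : p.x.q o ∈ p.T then Sum.inr ⟨o, h⟩ else Sum.inl ⟨p.x.q o, h⟩
  inc := p.x.inc
  symm := by
    rintro (x | t) (y | t')
    · simp [p.x.symm]
    · rfl
    · rfl
    · simp only [ne_comm, eq_comm]
  diag := by
    rintro (x | t) <;> simp [p.x.diag]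

variable (p : Pr Vsl)

theorem ExpA_q_mem {o : p.x.O} (h : p.x.q o ∈ p.T) : (ExpA p).q o = Sum.inr ⟨o, h⟩ := dif_pos h
theorem ExpA_q_nmem {o : p.x.O} (h : p.x.q o ∉ p.T) : (ExpA p).q o = Sum.inl ⟨p.x.q o, h⟩ :=
  dif_neg h
theorem ExpA_ll (x y) : (ExpA p).m (Sum.inl x) (Sum.inl y) = p.x.m x.1 y.1 := rfl
theorem ExpA_lr (x t) : (ExpA p).m (Sum.inl x) (Sum.inr t) = 0 := rfl
theorem ExpA_rl (x t) : (ExpA p).m (Sum.inr t) (Sum.inl x) = 0 := rfl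
theorem ExpA_rr (t t') : (ExpA p).m (Sum.inr t) (Sum.inr t') =
  if t ≠ t' ∧ p.x.q t.1 = p.x.q t'.1 then 1 else 0 := rfl

def piA : (ExpA p).V → p.x.V := Sum.elim (fun x => x.1) (fun o => p.x.q o.1)

theorem piA_q (o : p.x.O) : piA p ((ExpA p).q o) = p.x.q o := by
  by_cases h : p.x.q o ∈ p.T
  · rw [ExpA_q_mem p h]; rfl
  · rw [ExpA_q_nmem p h]; rfl

def AllZ : Prop := ∀ x : p.x.V, x ∈ p.T → Z2 p.x x

theorem Z2_m {G : Ob} {x : G.V} (h : degE G x = 0) (y : G.V) : G.m x y = 0 := by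
  have := Fintype.ofFinite G.V
  rw [degE_eq] at h
  exact (Finset.sum_eq_zero_iff.1 h) y (Finset.mem_univ _)

theorem partner {G : Ob} {o : G.O} (h : cc G (G.q o) = 2) :
    ∃ o', (o' ≠ o ∧ G.q o' = G.q o) ∧ ∀ o'', o'' ≠ o → G.q o'' = G.q o → o'' = o' := by
  obtain ⟨y, hy, hy'⟩ := (Nat.card_eq_two_iff' (⟨o, rfl⟩ : {o' // G.q o' = G.q o})).1 h
  refine ⟨y.1, ⟨fun h => hy (Subtype.ext h), y.2⟩, ?_⟩
  intro o'' h1 h2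
  exact congrArg Subtype.val (hy' ⟨o'', h2⟩ (fun h => h1 (congrArg Subtype.val h)))

variable {p}
variable (hT : AllZ p)
include hT

theorem ExpA_degE_l (x) : degE (ExpA p) (Sum.inl x) = degE p.x x.1 := by
  have i1 := Fintype.ofFinite p.x.V
  have i3 : Fintype p.x.O := Fintype.ofFinite _
  have h := @degE_eq (ExpA p) (Sum.inl x)
    (inferInstanceAs (Fintype ({x : p.x.V // x ∉ p.T} ⊕ {o : p.x.O // p.x.q o ∈ p.T})))
  rw [h, degE_eq]
  refine (Fintype.sum_sum_type _).trans ?_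
  rw [Finset.sum_eq_zero (s := Finset.univ (α := {o : p.x.O // p.x.q o ∈ p.T})) (fun t _ => rfl),
    add_zero]
  rw [← Fintype.sum_subtype_add_sum_subtype (fun x => x ∉ p.T) (fun y => p.x.m x.1 y)]
  rw [Finset.sum_eq_zero (s := Finset.univ (α := {y : p.x.V // ¬ y ∉ p.T})), add_zero]
  intro y _
  rw [p.x.symm]
  exact Z2_m (hT y.1 (not_not.1 y.2)).1 _

omit hT in
theorem ExpA_cc_l (x) : cc (ExpA p) (Sum.inl x) = cc p.x x.1 := by
  unfold cc
  refine Nat.card_congr (Equiv.subtypeEquivRight ?_)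
  intro (o : p.x.O)
  by_cases h : p.x.q o ∈ p.T
  · rw [ExpA_q_mem p h]
    exact ⟨fun h' => (by cases h'), fun h' => absurd (h' ▸ h) x.2⟩
  · rw [ExpA_q_nmem p h]
    exact ⟨fun h' => congrArg Subtype.val (Sum.inl_injective h'),
      fun h' => congrArg Sum.inl (Subtype.ext h')⟩

omit hT in
theorem ExpA_cc_r (t) : cc (ExpA p) (Sum.inr t) = 1 := by
  unfold cc
  rw [Nat.card_eq_one_iff_unique]
  have h : ∀ o : p.x.O, (ExpA p).q o = Sum.inr t → o = t.1 := by
    intro o h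
    by_cases ho : p.x.q o ∈ p.T
    · rw [ExpA_q_mem p ho] at h
      rw [← Sum.inr_injective h]
    · rw [ExpA_q_nmem p ho] at h; cases h
  refine ⟨⟨fun a b => Subtype.ext ((h _ a.2).trans (h _ b.2).symm)⟩, ⟨⟨t.1, ?_⟩⟩⟩
  exact ExpA_q_mem p t.2

theorem ExpA_degE_r (t) : degE (ExpA p) (Sum.inr t) = 1 := by
  have i1 := Fintype.ofFinite p.x.V
  have i3 : Fintype p.x.O := Fintype.ofFinite _
  have h := @degE_eq (ExpA p) (Sum.inr t)
    (inferInstanceAs (Fintype ({x : p.x.V // x ∉ p.T} ⊕ {o : p.x.O // p.x.q o ∈ p.T})))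
  rw [h]
  refine (Fintype.sum_sum_type _).trans ?_
  rw [Finset.sum_eq_zero (s := Finset.univ (α := {x : p.x.V // x ∉ p.T})) (fun t _ => rfl),
    zero_add]
  obtain ⟨o', ⟨h1, h2⟩, h3⟩ := partner (hT _ t.2).2
  have h2T : p.x.q o' ∈ p.T := by rw [h2]; exact t.2
  rw [Finset.sum_eq_single ⟨o', h2T⟩]
  · rw [ExpA_rr, if_pos]
    exact ⟨fun h => h1 (by rw [h]), h2.symm⟩
  · intro o'' _ ho''
    rw [ExpA_rr, if_neg]
    rintro ⟨a, b⟩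
    exact ho'' (Subtype.ext (h3 o''.1 (fun h => a (Subtype.ext h.symm)) b.symm))
  · intro h; exact absurd (Finset.mem_univ _) h

theorem ExpA_thin_r (t) : Thin (ExpA p) (Sum.inr t) := ⟨ExpA_degE_r hT t, ExpA_cc_r t⟩

theorem ExpA_OT : Nat.card {o : p.x.O // p.x.q o ∈ p.T} = 2 * Nat.card p.T := by
  have i1 := Fintype.ofFinite p.x.V
  have i2 : Fintype p.T := Fintype.ofFinite _
  have i3 : Fintype p.x.O := Fintype.ofFinite _
  rw [← Nat.card_congr (Equiv.sigmaFiberEquiv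
    (fun o : {o : p.x.O // p.x.q o ∈ p.T} => (⟨p.x.q o.1, o.2⟩ : p.T))), Nat.card_sigma]
  have : ∀ t : p.T, Nat.card {o : {o : p.x.O // p.x.q o ∈ p.T} //
      (⟨p.x.q o.1, o.2⟩ : p.T) = t} = 2 := by
    intro t
    rw [← (hT t.1 t.2).2]
    unfold cc
    exact Nat.card_congr ⟨fun o => ⟨o.1.1, congrArg Subtype.val o.2⟩,
      fun o => ⟨⟨o.1, by rw [o.2]; exact t.2⟩, Subtype.ext o.2⟩, fun _ => rfl, fun _ => rfl⟩
  rw [Finset.sum_congr rfl (fun t _ => this t), Finset.sum_const, Finset.card_univ,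
    ← Nat.card_eq_fintype_card, smul_eq_mul, mul_comm]

theorem ExpA_tm : tm (ExpA p) = tm p.x + 2 * Nat.card p.T := by
  have i1 := Fintype.ofFinite p.x.V
  have i3 : Fintype p.x.O := Fintype.ofFinite _
  have h := @tm_eq (ExpA p)
    (inferInstanceAs (Fintype ({x : p.x.V // x ∉ p.T} ⊕ {o : p.x.O // p.x.q o ∈ p.T})))
  rw [h, tm_eq]
  refine (Fintype.sum_sum_type _).trans ?_
  rw [Finset.sum_congr rfl (fun x _ => ExpA_degE_l hT x),
    Finset.sum_congr rfl (fun x _ => ExpA_degE_r hT x), Finset.sum_const, Finset.card_univ,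
    ← Nat.card_eq_fintype_card, ExpA_OT hT, smul_eq_mul, mul_one]
  congr 1
  rw [← Fintype.sum_subtype_add_sum_subtype (fun x => x ∉ p.T) (fun y => degE p.x y)]
  rw [Finset.sum_eq_zero (s := Finset.univ (α := {y : p.x.V // ¬ y ∉ p.T})), add_zero]
  intro y _
  exact (hT y.1 (not_not.1 y.2)).1

theorem ExpA_cardV : Nat.card (ExpA p).V = Nat.card p.x.V + Nat.card p.T := by
  have i1 := Fintype.ofFinite p.x.V
  have i3 : Fintype p.x.O := Fintype.ofFinite _
  have h1 : Nat.card (ExpA p).V = Nat.card {x : p.x.V // x ∉ p.T} + _ := Nat.card_sum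
  rw [h1, ExpA_OT hT, ← Nat.card_congr (Equiv.sumCompl (fun x : p.x.V => x ∈ p.T)), Nat.card_sum]
  have : Nat.card p.T = Nat.card {x : p.x.V // x ∈ p.T} := rfl
  rw [this]; ring

theorem ExpA_size (s b : ℕ) : Size s b (ExpA p) ↔ Size s b p.x := by
  unfold Size
  rw [ExpA_tm hT, ExpA_cardV hT]
  show _ + s * Nat.card p.x.O = _ ↔ _
  constructor <;> intro h <;> omega

theorem piA_surj : Function.Surjective (piA p) := by
  intro x
  by_cases h : x ∈ p.T
  · have := (hT x h).2
    unfold cc at this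
    obtain ⟨⟨o, ho⟩⟩ : Nonempty {o // p.x.q o = x} := by
      by_contra hc
      rw [not_nonempty_iff] at hc
      simp at this
    exact ⟨Sum.inr ⟨o, by rw [ho]; exact h⟩, ho⟩
  · exact ⟨Sum.inl ⟨x, h⟩, rfl⟩

def WW (G : Ob) (x : G.V) : Prop := Thin G x ∧ ∃ y, Thin G y ∧ 0 < G.m x y

omit hT in
theorem WW_hom {G H : Ob} (f : G ⟶ H) (x : G.V) : WW H (f.v x) ↔ WW G x := by
  unfold WW
  rw [Thin_hom]
  refine and_congr_right fun _ => ?_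
  constructor
  · rintro ⟨y, h1, h2⟩
    obtain ⟨y, rfl⟩ := f.v.surjective y
    rw [Thin_hom] at h1; rw [f.hm] at h2
    exact ⟨y, h1, h2⟩
  · rintro ⟨y, h1, h2⟩
    exact ⟨f.v y, (Thin_hom f y).2 h1, by rw [f.hm]; exact h2⟩

theorem ExpA_thin_l (x) : Thin (ExpA p) (Sum.inl x) ↔ Thin p.x x.1 := by
  unfold Thin
  rw [ExpA_degE_l hT, ExpA_cc_l]

theorem ExpA_W_r (t) : WW (ExpA p) (Sum.inr t) := by
  refine ⟨ExpA_thin_r hT t, ?_⟩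
  obtain ⟨o', ⟨h1, h2⟩, h3⟩ := partner (hT _ t.2).2
  have h2T : p.x.q o' ∈ p.T := by rw [h2]; exact t.2
  refine ⟨Sum.inr ⟨o', h2T⟩, ExpA_thin_r hT _, ?_⟩
  rw [ExpA_rr, if_pos]
  · omega
  · exact ⟨fun h => h1 (by rw [h]), h2.symm⟩

theorem ExpA_W_l (hTT : ¬ TT p.x) (x) : ¬ WW (ExpA p) (Sum.inl x) := by
  rintro ⟨h1, y | t, h2, h3⟩
  · rw [ExpA_thin_l hT] at h1 h2
    exact hTT ⟨_, _, h1, h2, h3⟩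
  · rw [ExpA_lr] at h3; omega

theorem ExpA_W (hTT : ¬ TT p.x) (a) : WW (ExpA p) a ↔ piA p a ∈ p.T := by
  rcases a with x | t
  · exact ⟨fun h => absurd h (ExpA_W_l hT hTT x), fun h => absurd h x.2⟩
  · exact ⟨fun _ => t.2, fun _ => ExpA_W_r hT t⟩

theorem piA_eq (hTT : ¬ TT p.x) (a b : (ExpA p).V) : piA p a = piA p b ↔
    (a = b ∨ (WW (ExpA p) a ∧ WW (ExpA p) b ∧ 0 < (ExpA p).m a b)) := by
  constructor
  · intro h
    by_cases hab : a = b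
    · exact Or.inl hab
    right
    rcases a with x | t <;> rcases b with y | t'
    · exact absurd (congrArg Sum.inl (Subtype.ext h)) hab
    · have h : x.1 = p.x.q t'.1 := h
      exact absurd (h ▸ t'.2) x.2
    · have h : p.x.q t.1 = y.1 := h
      exact absurd (h ▸ t.2) y.2
    · refine ⟨ExpA_W_r hT _, ExpA_W_r hT _, ?_⟩
      rw [ExpA_rr, if_pos]
      · omega
      · exact ⟨fun h => hab (congrArg Sum.inr h), h⟩
  · rintro (rfl | ⟨h1, h2, h3⟩)
    · rfl
    rcases a with x | t <;> rcases b with y | t'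
    · exact absurd h1 (ExpA_W_l hT hTT _)
    · exact absurd h1 (ExpA_W_l hT hTT _)
    · exact absurd h2 (ExpA_W_l hT hTT _)
    · rw [ExpA_rr] at h3
      by_contra hc
      rw [if_neg (fun h => hc h.2)] at h3
      omega

theorem piA_m (hTT : ¬ TT p.x) (a b : (ExpA p).V) : p.x.m (piA p a) (piA p b) =
    if WW (ExpA p) a ∨ WW (ExpA p) b then 0 else (ExpA p).m a b := by
  split_ifs with h
  · rw [ExpA_W hT hTT, ExpA_W hT hTT] at h
    rcases h with h | h
    · exact Z2_m (hT _ h).1 _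
    · rw [p.x.symm]; exact Z2_m (hT _ h).1 _
  · push Not at h
    rcases a with x | t <;> rcases b with y | t'
    · rfl
    · exact absurd (ExpA_W_r hT _) h.2
    · exact absurd (ExpA_W_r hT _) h.1
    · exact absurd (ExpA_W_r hT _) h.1

theorem ExpA_conn : Conn (ExpA p) ↔ Conn p.x := by
  constructor
  · intro h r h1 h2 x y hx
    obtain ⟨a, rfl⟩ := piA_surj hT x
    obtain ⟨a', rfl⟩ := piA_surj hT y
    refine h (fun a => r (piA p a)) ?_ ?_ a a' hx
    · rintro (a | t) (a' | t') hm ha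
      · exact h1 _ _ hm ha
      · rw [ExpA_lr] at hm; omega
      · rw [ExpA_rl] at hm; omega
      · rw [ExpA_rr] at hm
        have : p.x.q t.1 = p.x.q t'.1 := by
          by_contra hc; rw [if_neg (fun h => hc h.2)] at hm; omega
        have e : piA p (Sum.inr t') = piA p (Sum.inr t) := this.symm
        rw [e]; exact ha
    · intro o o' δ ho ho'
      rw [piA_q, piA_q]; exact h2 o o' δ ho ho'
  · intro h r' h1 h2
    have key : ∀ a b, piA p a = piA p b → r' a → r' b := by
      rintro (x | t) (y | t') hab ha
      · have : x = y := Subtype.ext hab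
        rw [← this]; exact ha
      · have hab : x.1 = p.x.q t'.1 := hab
        exact absurd (hab ▸ t'.2) x.2
      · have hab : p.x.q t.1 = y.1 := hab
        exact absurd (hab ▸ t.2) y.2
      · by_cases htt : t = t'
        · rw [← htt]; exact ha
        · refine h1 _ _ ?_ ha
          rw [ExpA_rr, if_pos ⟨htt, hab⟩]; omega
    have := h (fun x => ∃ a, piA p a = x ∧ r' a) (by
      rintro x y hxy ⟨a, rfl, ha⟩
      obtain ⟨b, rfl⟩ := piA_surj hT y
      refine ⟨b, rfl, ?_⟩
      rcases a with x | t <;> rcases b with y | t'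
      · exact h1 (Sum.inl x) (Sum.inl y) hxy ha
      · rw [p.x.symm] at hxy
        have := Z2_m (hT _ t'.2).1 (piA p (Sum.inl x))
        exact absurd this hxy.ne'
      · have := Z2_m (hT _ t.2).1 (piA p (Sum.inl y))
        exact absurd this hxy.ne'
      · have := Z2_m (hT _ t.2).1 (piA p (Sum.inr t'))
        exact absurd this hxy.ne') (by
      rintro o o' δ ho ho' ⟨a, h3, ha⟩
      refine ⟨(ExpA p).q o', piA_q p o', ?_⟩
      refine h2 o o' δ ho ho' (key a _ ?_ ha)
      rw [h3, piA_q])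
    intro a b ha
    obtain ⟨b', hb', hb''⟩ := this (piA p a) (piA p b) ⟨a, rfl, ha⟩
    exact key _ _ hb' hb''

def NB (G : Ob) : Prop := ∀ o o' δ, o ≠ o' → G.inc o δ → G.inc o' δ → Thin G (G.q o) →
  Thin G (G.q o') → G.m (G.q o) (G.q o') = 0

omit hT in
theorem ExpA_NL (h : NL p.x) : NL (ExpA p) := by
  intro o o' δ ho hi hi' hq
  refine h o o' δ ho hi hi' ?_
  rw [← piA_q, ← piA_q]
  exact congrArg _ hq

theorem ExpA_NL' (h : NL (ExpA p)) (hB : NB (ExpA p)) : NL p.x := by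
  intro o o' δ ho hi hi' hq
  by_cases h1 : p.x.q o ∈ p.T
  · have h2 : p.x.q o' ∈ p.T := hq ▸ h1
    have := hB o o' δ ho hi hi'
    rw [ExpA_q_mem p h1, ExpA_q_mem p h2] at this
    have := this (ExpA_thin_r hT _) (ExpA_thin_r hT _)
    rw [ExpA_rr, if_pos ⟨fun h => ho (congrArg Subtype.val h), hq⟩] at this
    omega
  · have h2 : p.x.q o' ∉ p.T := hq ▸ h1
    refine h o o' δ ho hi hi' ?_
    rw [ExpA_q_nmem p h1, ExpA_q_nmem p h2]
    exact congrArg Sum.inl (Subtype.ext hq)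

omit hT

def Pa (k : Bool) (s b : ℕ) (p : Pr Vsl) : Prop :=
  (Bs k s b p.x ∧ ¬ TT p.x ∧ ∃ x, Z2 p.x x) ∧ AllZ p

theorem AllZ_inv : Inv AllZ := by
  refine Inv_prop fun p p' f h x hx => ?_
  obtain ⟨x, rfl⟩ := f.f.v.surjective x
  exact (Z2_hom f.f x).2 (h x ((f.h x).2 hx))

theorem exZ2_inv : Inv (fun G => ∃ x, Z2 G x) :=
  Inv_prop fun _ _ f h => h.elim fun x hx => ⟨f.v x, (Z2_hom f x).2 hx⟩

theorem Pa_inv (k : Bool) (s b : ℕ) : Inv (Pa k s b) :=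
  ((Bs_inv k s b).and (TT_inv.not.and exZ2_inv)).pr.and AllZ_inv

theorem Pa_fwd (k : Bool) (s b : ℕ) (h : Pa k s b p) : Bs k s b (ExpA p) ∧ Spec (ExpA p) := by
  obtain ⟨⟨⟨h1, h2, h3, h4, h5, h6⟩, h7, h8⟩, hT⟩ := h
  refine ⟨⟨h1, (ExpA_size hT s b).2 h2, h3, (ExpA_conn hT).2 h4, ?_, ExpA_NL h6⟩, ?_⟩
  · rintro (x | t)
    · rw [ExpA_degE_l hT, ExpA_cc_l]; exact h5 _
    · rw [ExpA_degE_r hT, ExpA_cc_r]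
  · obtain ⟨x, hx⟩ := h8
    obtain ⟨a, rfl⟩ := piA_surj hT x
    rcases a with x | t
    · left
      refine ⟨Sum.inl x, ?_⟩
      unfold Z2
      rw [ExpA_degE_l hT, ExpA_cc_l]; exact hx
    · right
      obtain ⟨h1, y, h2⟩ := ExpA_W_r hT t
      exact ⟨_, y, h1, h2⟩

theorem Pa_bwd (k : Bool) (s b : ℕ) (hB : NB (ExpA p)) (hT : AllZ p)
    (h : Bs k s b (ExpA p) ∧ Spec (ExpA p))
    (hn : ∀ x, ¬ WW (ExpA p) (Sum.inl x)) : Pa k s b p := by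
  obtain ⟨⟨h1, h2, h3, h4, h5, h6⟩, h7⟩ := h
  refine ⟨⟨⟨h1, (ExpA_size hT s b).1 h2, h3, (ExpA_conn hT).1 h4, ?_, ExpA_NL' hT h6 hB⟩, ?_, ?_⟩,
    hT⟩
  · intro x
    by_cases hx : x ∈ p.T
    · rw [(hT x hx).1, (hT x hx).2]; omega
    · have := h5 (Sum.inl ⟨x, hx⟩)
      rw [ExpA_degE_l hT, ExpA_cc_l] at this; exact this
  · rintro ⟨x, y, hx, hy, hxy⟩
    have ht : ∀ z, Thin p.x z → z ∉ p.T := by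
      intro z hz hz'
      have := (hT z hz').1
      have := hz.1
      omega
    refine hn ⟨x, ht x hx⟩ ⟨(ExpA_thin_l hT _).2 hx, Sum.inl ⟨y, ht y hy⟩,
      (ExpA_thin_l hT _).2 hy, hxy⟩
  · rcases h7 with ⟨x | t, hx⟩ | ⟨x | t, y, h8, h9⟩
    · unfold Z2 at hx
      rw [ExpA_degE_l hT, ExpA_cc_l] at hx
      exact ⟨_, hx⟩
    · exact ⟨_, hT _ t.2⟩
    · exact absurd ⟨h8, y, h9⟩ (hn x)
    · exact ⟨_, hT _ t.2⟩

theorem PrV_q {p p' : Pr Vsl} (f : p ⟶ p') (o : p.x.O) :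
    p.x.q o ∈ p.T ↔ p'.x.q (f.f.o o) ∈ p'.T := by
  rw [f.f.hq]; exact f.h _

noncomputable def ExpA_map {p p' : Pr Vsl} (f : p ⟶ p') : ExpA p ⟶ ExpA p' where
  v := Equiv.sumCongr (f.f.v.subtypeEquiv (fun x => not_congr (f.h x)))
    (f.f.o.subtypeEquiv (PrV_q f))
  o := f.f.o
  d := f.f.d
  hm := by
    rintro (x | t) (y | t')
    · exact f.f.hm x.1 y.1
    · rfl
    · rfl
    · show (ExpA p').m (Sum.inr _) (Sum.inr _) = _
      rw [ExpA_rr, ExpA_rr]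
      simp [f.f.hq, Subtype.ext_iff]
  hq := by
    intro (o : p.x.O)
    by_cases ho : p.x.q o ∈ p.T
    · rw [ExpA_q_mem p ho]
      exact ExpA_q_mem p' ((PrV_q f o).1 ho)
    · rw [ExpA_q_nmem p ho]
      refine (ExpA_q_nmem p' (fun h => ho ((PrV_q f o).2 h))).trans ?_
      exact congrArg Sum.inl (Subtype.ext (f.f.hq o))
  hi := f.f.hi

theorem units_aux (c o d e x : ℤˣ) : c * o * (d * o) * x = e * c * d * x * e := by
  have e1 := Int.units_mul_self o
  have e2 := Int.units_mul_self e
  calc c * o * (d * o) * x = (o * o) * (c * d * x) := by ac_rfl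
    _ = (e * e) * (c * d * x) := by rw [e1, e2]
    _ = _ := by ac_rfl

theorem ExpA_sg {p : Pr Vsl} (hT : AllZ p) (f : p ⟶ p) : SG.sg (ExpA_map f) = SG.sg f := by
  rw [Ob.sg_def, Pr.sg_def, Ob.sg_def]
  have hp : ∀ t : {o : p.x.O // p.x.q o ∈ p.T}, ∃ t' : {o : p.x.O // p.x.q o ∈ p.T},
      (t ≠ t' ∧ p.x.q t.1 = p.x.q t'.1) ∧ ∀ t'', (t ≠ t'' ∧ p.x.q t.1 = p.x.q t''.1) → t'' = t' := by
    intro t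
    obtain ⟨o', ⟨h1, h2⟩, h3⟩ := partner (hT _ t.2).2
    have h2T : p.x.q o' ∈ p.T := by rw [h2]; exact t.2
    refine ⟨⟨o', h2T⟩, ⟨fun h => h1 (by rw [h]), h2.symm⟩, ?_⟩
    rintro t'' ⟨a, b⟩
    exact Subtype.ext (h3 _ (fun h => a (Subtype.ext h.symm)) b.symm)
  choose pt hpt1 hpt2 using hp
  set fo : Perm {o : p.x.O // p.x.q o ∈ p.T} := f.f.o.subtypeEquiv (PrV_q f) with hfo
  set fc : Perm {x : p.x.V // x ∉ p.T} := f.f.v.subtypeEquiv (fun x => not_congr (f.h x)) with hfc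
  have h1 : psgn (ExpA_map f).v = psgn fc * psgn fo := psgn_sum _ _
  have h3 : psgn f.f.v = psgn f.eqv * psgn fc :=
    psgn_split f.f.v (fun x => x ∈ p.T) (fun a => (f.h a).symm)
  have hpf : ∀ t, pt (fo t) = fo (pt t) := by
    intro t
    refine (hpt2 (fo t) (fo (pt t)) ⟨fun h => (hpt1 t).1 (fo.injective h), ?_⟩).symm
    show p.x.q (f.f.o t.1) = p.x.q (f.f.o (pt t).1)
    rw [f.f.hq, f.f.hq, (hpt1 t).2]
  have h2 : psgn (ExpA_map f).odd = psgn f.f.odd * psgn fo := by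
    have hodd : ∀ a b : p.x.V, Odd (p.x.m a b) → a ∉ p.T ∧ b ∉ p.T := by
      intro a b h
      constructor
      · intro ha
        rw [Z2_m (hT a ha).1] at h; simp at h
      · intro ha
        rw [p.x.symm, Z2_m (hT b ha).1] at h; simp at h
    let F : OddP p.x ⊕ {o : p.x.O // p.x.q o ∈ p.T} → OddP (ExpA p) := fun a => match a with
      | Sum.inl r => ⟨(Sum.inl ⟨r.1.1, (hodd _ _ r.2).1⟩, Sum.inl ⟨r.1.2, (hodd _ _ r.2).2⟩), r.2⟩
      | Sum.inr t => ⟨(Sum.inr t, Sum.inr (pt t)), by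
          show Odd ((ExpA p).m (Sum.inr _) (Sum.inr _))
          rw [ExpA_rr, if_pos (hpt1 t)]; simp⟩
    have hF : Function.Bijective F := by
      constructor
      · rintro (⟨⟨a, b⟩, h⟩ | t) (⟨⟨a', b'⟩, h'⟩ | t') hh <;>
          have hh1 := congrArg (fun z => z.1.1) hh <;>
          have hh2 := congrArg (fun z => z.1.2) hh <;>
          simp only [F, Sum.inl.injEq, Sum.inr.injEq, reduceCtorEq, Subtype.mk.injEq] at hh1 hh2
        · subst hh1; subst hh2; rfl
        · subst hh1; rfl
      · rintro ⟨⟨a | t, b | t'⟩, h⟩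
        · exact ⟨Sum.inl ⟨(a.1, b.1), h⟩, rfl⟩
        · have h' : Odd ((ExpA p).m (Sum.inl a) (Sum.inr t')) := h
          rw [ExpA_lr] at h'; simp at h'
        · have h' : Odd ((ExpA p).m (Sum.inr t) (Sum.inl b)) := h
          rw [ExpA_rl] at h'; simp at h'
        · have h' : Odd ((ExpA p).m (Sum.inr t) (Sum.inr t')) := h
          rw [ExpA_rr] at h'
          have h'' : t ≠ t' ∧ p.x.q t.1 = p.x.q t'.1 := by
            by_contra hc; rw [if_neg hc] at h'; simp at h'
          have := hpt2 t t' h''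
          subst this
          exact ⟨Sum.inr t, rfl⟩
    have e := psgn_conj (Equiv.ofBijective F hF)
      (Equiv.sumCongr f.f.odd fo) (ExpA_map f).odd (by
        rintro (r | t)
        · rfl
        · apply Subtype.ext
          refine Prod.ext rfl ?_
          exact congrArg Sum.inr (hpf t))
    rw [← e, psgn_sum]
  rw [h1, h2, h3]
  show _ * _ * psgn f.f.d = _
  exact units_aux _ _ _ _ _

theorem surj_equiv {A A2 B B2 : Type*} (e : A ≃ A2) (π : A → B) (π2 : A2 → B2)
    (h1 : Function.Surjective π) (h2 : Function.Surjective π2)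
    (h : ∀ a b, π a = π b ↔ π2 (e a) = π2 (e b)) : ∃ f : B ≃ B2, ∀ a, f (π a) = π2 (e a) := by
  choose s hs using h1
  have key : ∀ a, π2 (e (s (π a))) = π2 (e a) := fun a => (h _ _).1 (hs _)
  refine ⟨Equiv.ofBijective (fun b => π2 (e (s b))) ⟨?_, ?_⟩, key⟩
  · intro b b' hb
    have := (h _ _).2 hb
    rwa [hs, hs] at this
  · intro b2
    obtain ⟨a2, rfl⟩ := h2 b2
    exact ⟨π (e.symm a2), by beta_reduce; rw [key]; simp⟩

theorem ExpA_full (k : Bool) (s b : ℕ) {p p' : Pr Vsl} (hp : Pa k s b p) (hp' : Pa k s b p')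
    (g : ExpA p ⟶ ExpA p') : ∃ f : p ⟶ p', ExpA_map f = g := by
  have hT := hp.2
  have hT' := hp'.2
  have hN := hp.1.2.1
  have hN' := hp'.1.2.1
  obtain ⟨e, he⟩ := surj_equiv g.v (piA p) (piA p') (piA_surj hT) (piA_surj hT') (by
    intro a a'
    rw [piA_eq hT hN, piA_eq hT' hN', WW_hom, WW_hom, g.hm]
    simp)
  have hTe : ∀ x, x ∈ p.T ↔ e x ∈ p'.T := by
    intro x
    obtain ⟨a, rfl⟩ := piA_surj hT x
    rw [he, ← ExpA_W hT hN, ← ExpA_W hT' hN', WW_hom]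
  have hqe : ∀ o : p.x.O, p'.x.q (g.o o) = e (p.x.q o) := by
    intro o
    have a1 := congrArg (piA p') (g.hq o)
    rw [← he] at a1
    exact ((piA_q p' (g.o o)).symm.trans a1).trans (congrArg e (piA_q p o))
  refine ⟨⟨⟨e, g.o, g.d, ?_, hqe, g.hi⟩, hTe⟩, ?_⟩
  · intro x y
    obtain ⟨a, rfl⟩ := piA_surj hT x
    obtain ⟨a', rfl⟩ := piA_surj hT y
    rw [he, he, piA_m hT hN, piA_m hT' hN', WW_hom, WW_hom, g.hm]
  · refine OHom.ext ?_ rfl rfl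
    ext c
    rcases c with x | t
    · rcases h : g.v (Sum.inl x) with y | t
      · have := he (Sum.inl x)
        rw [h] at this
        exact congrArg Sum.inl (Subtype.ext this)
      · exfalso
        apply ExpA_W_l hT hN x
        refine (WW_hom g _).1 ?_
        rw [h]; exact ExpA_W_r hT' t
    · have a1 := g.hq t.1
      have a2 : (ExpA p).q t.1 = Sum.inr t := ExpA_q_mem p t.2
      rw [a2] at a1
      rw [← a1]
      exact (ExpA_q_mem p' _).symm

end StepA
end GraphComplexOdd

namespace GraphComplexOdd
section StepA2
open Equiv CategoryTheory
open scoped Classical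

def WR (H : Ob) (a b : H.V) : Prop := a = b ∨ (WW H a ∧ WW H b ∧ 0 < H.m a b)

def WS (H : Ob) : Setoid H.V where
  r := WR H
  iseqv := by
    refine ⟨fun a => Or.inl rfl, ?_, ?_⟩
    · rintro a b (rfl | ⟨h1, h2, h3⟩)
      · exact Or.inl rfl
      · exact Or.inr ⟨h2, h1, by rw [H.symm]; exact h3⟩
    · rintro a b c (rfl | ⟨h1, h2, h3⟩)
      · exact id
      rintro (rfl | ⟨h4, h5, h6⟩)
      · exact Or.inr ⟨h1, h2, h3⟩
      · left
        rw [H.symm] at h3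
        have := thin_m h2.1.1 h3 c
        by_contra hc
        rw [if_neg (fun h => hc h.symm)] at this
        omega

def wq (H : Ob) (a : H.V) : Quotient (WS H) := Quotient.mk _ a

theorem wq_eq {H : Ob} {a b : H.V} : wq H a = wq H b ↔ WR H a b :=
  Quotient.eq (r := WS H)

theorem wq_out {H : Ob} (c : Quotient (WS H)) : wq H c.out = c := Quotient.out_eq c

theorem WR_W {H : Ob} {a b : H.V} (h : WR H a b) : WW H a ↔ WW H b := by
  rcases h with rfl | h
  · rfl
  · exact ⟨fun _ => h.2.1, fun _ => h.1⟩

theorem wq_outW {H : Ob} (a : H.V) : WW H (wq H a).out ↔ WW H a :=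
  WR_W (wq_eq.1 (wq_out _))

theorem wq_outN {H : Ob} (a : H.V) (h : ¬ WW H a) : (wq H a).out = a := by
  rcases wq_eq.1 (wq_out (wq H a)) with h' | h'
  · exact h'
  · exact absurd h'.2.1 h

theorem WR_m {H : Ob} {a b : H.V} (ha : WW H a) (hm : 0 < H.m a b) : WW H b := by
  obtain ⟨h1, y, h2, h3⟩ := ha
  have : b = y := by
    by_contra hc
    have := thin_m h1.1 h3 b
    rw [if_neg hc] at this
    omega
  subst this
  exact ⟨h2, a, h1, by rw [H.symm]; exact hm⟩

@[reducible] noncomputable def QA (H : Ob) : Ob where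
  V := Quotient (WS H)
  O := H.O
  D := H.D
  fV := inferInstance
  fO := inferInstance
  fD := inferInstance
  m := fun c c' => if WW H c.out ∨ WW H c'.out then 0 else H.m c.out c'.out
  q := fun o => wq H (H.q o)
  inc := H.inc
  symm := by intro x y; simp only [or_comm, H.symm]
  diag := by intro x; simp [H.diag]

@[reducible] noncomputable def PA (H : Ob) : Pr Vsl := ⟨QA H, {c : Quotient (WS H) | WW H c.out}⟩

theorem PA_T {H : Ob} (c : Quotient (WS H)) : c ∈ (PA H).T ↔ WW H c.out := Iff.rfl
theorem PA_q (H : Ob) (o : H.O) : (PA H).x.q o ∈ (PA H).T ↔ WW H (H.q o) := wq_outW _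
theorem QA_m {H : Ob} (c c' : Quotient (WS H)) :
  (QA H).m c c' = if WW H c.out ∨ WW H c'.out then 0 else H.m c.out c'.out := rfl

theorem PA_AllZ (H : Ob) : AllZ (PA H) := by
  intro (c : Quotient (WS H)) hc
  rw [PA_T] at hc
  constructor
  · have := Fintype.ofFinite (QA H).V
    have h := degE_eq (QA H) c
    refine h.trans (Finset.sum_eq_zero fun y _ => ?_)
    rw [QA_m, if_pos (Or.inl hc)]
  · have hc' := hc
    obtain ⟨h1, y, h2, h3⟩ := hc'
    obtain ⟨o1, ho1⟩ := cc_one_ex h1.2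
    obtain ⟨o2, ho2⟩ := cc_one_ex h2.2
    have hy := WR_m hc h3
    have q1 : wq H (H.q o1) = c := by rw [ho1, wq_out]
    have q2 : wq H (H.q o2) = c := by
      rw [ho2]
      conv_rhs => rw [← wq_out c]
      exact (wq_eq.2 (Or.inr ⟨hc, hy, h3⟩)).symm
    have key : Nat.card {o // (QA H).q o = c} = 2 := by
      rw [Nat.card_eq_two_iff' (⟨o1, q1⟩ : {o // (QA H).q o = c})]
      refine ⟨⟨o2, q2⟩, ?_, ?_⟩
      · intro h
        have h : o2 = o1 := congrArg Subtype.val h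
        rw [h, ho1] at ho2
        rw [← ho2, H.diag] at h3
        omega
      · rintro ⟨o, ho⟩ hne
        apply Subtype.ext
        have ho : wq H (H.q o) = c := ho
        rw [← wq_out c] at ho
        rcases wq_eq.1 ho with h | ⟨a1, a2, a3⟩
        · exact absurd (Subtype.ext (cc_one_uniq h1.2 h ho1)) hne
        · have : H.q o = y := by
            by_contra hcc
            have := thin_m h1.1 h3 (H.q o)
            rw [if_neg hcc, H.symm] at this
            omega
          exact cc_one_uniq h2.2 this ho2
    exact key

noncomputable def phiA (H : Ob) : (ExpA (PA H)).V → H.V :=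
  Sum.elim (fun c => Quotient.out (s := WS H) c.1) (fun o => H.q o.1)

theorem phiA_l (H : Ob) (c) : phiA H (Sum.inl c) = Quotient.out (s := WS H) c.1 := rfl
theorem phiA_r (H : Ob) (o) : phiA H (Sum.inr o) = H.q o.1 := rfl

theorem phiA_bij (H : Ob) : Function.Bijective (phiA H) := by
  constructor
  · rintro (c | o) (c' | o') h
    · rw [phiA_l, phiA_l] at h
      exact congrArg Sum.inl (Subtype.ext (Quotient.out_injective h))
    · rw [phiA_l, phiA_r] at h
      exact absurd (show WW H _ by rw [h]; exact (PA_q H o'.1).1 o'.2) c.2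
    · rw [phiA_l, phiA_r] at h
      exact absurd (show WW H _ by rw [← h]; exact (PA_q H o.1).1 o.2) c'.2
    · rw [phiA_r, phiA_r] at h
      have := (PA_q H o'.1).1 o'.2
      exact congrArg Sum.inr (Subtype.ext (cc_one_uniq this.1.2 h rfl))
  · intro a
    by_cases ha : WW H a
    · obtain ⟨o, ho⟩ := cc_one_ex ha.1.2
      exact ⟨Sum.inr ⟨o, (PA_q H o).2 (by rw [ho]; exact ha)⟩, ho⟩
    · exact ⟨Sum.inl ⟨wq H a, fun h => ha ((wq_outW a).1 h)⟩, wq_outN a ha⟩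

theorem phiA_lr (H : Ob) (c) (o) : H.m (phiA H (Sum.inl c)) (phiA H (Sum.inr o)) = 0 := by
  rw [phiA_l, phiA_r]
  by_contra h
  have := (PA_q H o.1).1 o.2
  exact c.2 (WR_m this (by rw [H.symm]; omega))

noncomputable def isoA (H : Ob) : ExpA (PA H) ⟶ H where
  v := Equiv.ofBijective (phiA H) (phiA_bij H)
  o := Equiv.refl _
  d := Equiv.refl _
  hm := by
    intro x y
    show H.m (phiA H x) (phiA H y) = _
    rcases x with c | o <;> rcases y with c' | o'
    · rw [ExpA_ll, phiA_l, phiA_l]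
      refine ((QA_m c.1 c'.1).trans (if_neg ?_)).symm
      rintro (h | h)
      · exact c.2 h
      · exact c'.2 h
    · rw [phiA_lr]
    · rw [H.symm, phiA_lr]
    · rw [ExpA_rr, phiA_r, phiA_r]
      have w := (PA_q H o.1).1 o.2
      have w' := (PA_q H o'.1).1 o'.2
      split_ifs with h
      · rcases wq_eq.1 h.2 with h' | ⟨-, -, h3⟩
        · exact absurd (Subtype.ext (cc_one_uniq w'.1.2 h' rfl)) h.1
        · have := thin_m w.1.1 h3 (H.q o'.1)
          rw [if_pos rfl] at this; exact this
      · by_contra hc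
        apply h
        refine ⟨fun hoo => hc (by rw [hoo, H.diag]), wq_eq.2 (Or.inr ⟨w, w', by omega⟩)⟩
  hq := by
    intro (o : H.O)
    show H.q o = phiA H ((ExpA (PA H)).q o)
    by_cases h : (PA H).x.q o ∈ (PA H).T
    · rw [ExpA_q_mem _ h]; rfl
    · rw [ExpA_q_nmem _ h, phiA_l]
      exact (wq_outN _ (fun h' => h ((PA_q H o).2 h'))).symm
  hi := fun _ _ => Iff.rfl

theorem stepA (k : Bool) (s b : ℕ) (hs : 2 ≤ s) (hNB : ∀ G, Bs k s b G → NB G) :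
    XX (fun G => Bs k s b G ∧ Spec G) dg = 0 := by
  have h1 : XX (Pa k s b) (fun p => dg p.x + p.T.ncard) = XX (fun G => Bs k s b G ∧ Spec G) dg := by
    refine XX_functor' _ _ _ _ ExpA ExpA_map (Pa_inv k s b) ((Bs_inv k s b).and Spec_inv) dg_inv
      (fun p hp => Pa_fwd k s b hp) ?_ (fun p hp f => ExpA_sg hp.2 f)
      (fun p p' hp hp' g => ExpA_full k s b hp hp' g) ?_
    · intro p hp
      have : dg (ExpA p) = dg p.x + p.T.ncard := by
        unfold dg
        rw [ExpA_cardV hp.2]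
        have : p.T.ncard = Nat.card p.T := rfl
        rw [this]
        show _ + Nat.card p.x.D = _
        omega
      rw [this]
    · intro H hH _
      have hB : Bs k s b (ExpA (PA H)) ∧ Spec (ExpA (PA H)) :=
        (((Bs_inv k s b).and Spec_inv) _ _ (isoA H)).mpr hH
      refine ⟨PA H, Pa_bwd k s b (hNB _ hB.1) (PA_AllZ H) hB ?_, ⟨isoA H⟩⟩
      intro c h
      exact c.2 ((WW_hom (isoA H) _).2 h)
  rw [← h1]
  refine lemC (Sl := Vsl) (Pa k s b) (fun G => {x : G.V | Z2 G x}) dg (Pa_inv k s b) dg_inv ?_ ?_ ?_ ?_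
  · intro x y f z
    exact (Z2_hom f z).symm
  · rintro x T U h ⟨h1, h2⟩
    refine ⟨h1, ?_⟩
    intro z hz
    by_contra hc
    exact hc (h2 z ((h z hc).2 hz))
  · rintro x T ⟨⟨_, _, h⟩, _⟩
    exact h
  · refine fin_of k s b hs _ ?_
    rintro G ⟨T, ⟨⟨h1, h2, h3, h4, h5, h6⟩, _⟩, _⟩
    exact ⟨h1, h2, h5⟩

end StepA2
end GraphComplexOdd

namespace GraphComplexOdd
section StepC
open Equiv CategoryTheory
open scoped Classical

def Fr (G : Ob) (o : G.O) : Prop := ∀ o' δ, o' ≠ o → G.inc o δ → G.inc o' δ → G.q o' ≠ G.q o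

theorem Fr_hom {G H : Ob} (f : G ⟶ H) (o : G.O) : Fr H (f.o o) ↔ Fr G o := by
  constructor
  · intro h o' δ h1 h2 h3 h4
    exact h (f.o o') (f.d δ) (fun h => h1 (f.o.injective h)) ((f.hi _ _).2 h2) ((f.hi _ _).2 h3)
      (by rw [f.hq, f.hq, h4])
  · intro h o' δ h1 h2 h3 h4
    obtain ⟨o', rfl⟩ := f.o.surjective o'
    obtain ⟨δ, rfl⟩ := f.d.surjective δ
    rw [f.hq, f.hq] at h4
    exact h o' δ (fun h => h1 (by rw [h])) ((f.hi _ _).1 h2) ((f.hi _ _).1 h3) (f.v.injective h4)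

theorem exFr_inv : Inv (fun G => ∃ o, Fr G o) :=
  Inv_prop fun _ _ f h => h.elim fun x hx => ⟨f.o x, (Fr_hom f x).2 hx⟩

theorem Pb_fin (k : Bool) (s b : ℕ) (hs : 2 ≤ s) :
    FinP (fun G : Ob => ∃ T, Pb k s b ⟨G, T⟩) := by
  refine fin_of k s b hs _ ?_
  rintro G ⟨T, ⟨h1, h2, h3, h4, h5⟩, h6⟩
  refine ⟨h1, h2, fun x => ?_⟩
  have := h5 x
  show 3 ≤ degE G x + 2 * cc G x
  have : 3 ≤ degE G x + cc G x := h5 x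
  omega

theorem vanB (k : Bool) (s b : ℕ) (hs : 2 ≤ s) :
    XX (fun p : Pr Osl => Pb k s b p ∧ ∃ o, Fr p.x o) (fun p => dg p.x + p.T.ncard) = 0 := by
  refine lemC (Sl := Osl) (fun p : Pr Osl => Pb k s b p ∧ ∃ o, Fr p.x o)
    (fun G => {o : G.O | Fr G o}) dg ((Pb_inv k s b).and exFr_inv.pr) dg_inv ?_ ?_ ?_ ?_
  · intro x y f z
    exact (Fr_hom f z).symm
  · rintro x T U h ⟨⟨h1, h2⟩, h3⟩
    refine ⟨⟨h1, ?_⟩, h3⟩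
    intro o o' δ a1 a2 a3 a4
    have f1 : o ∉ {o : x.O | Fr x o} := fun hf => hf o' δ a1.symm a2 a3 a4.symm
    have f2 : o' ∉ {o : x.O | Fr x o} := fun hf => hf o δ a1 a3 a2 a4
    have := h2 o o' δ a1 a2 a3 a4
    exact this.imp (h o f1).1 (h o' f2).1
  · rintro x T ⟨_, h⟩
    exact h
  · exact (Pb_fin k s b hs).mono fun G hG => hG.elim fun T hT => ⟨T, hT.1⟩

theorem Bs_fin (k : Bool) (s b : ℕ) (hs : 2 ≤ s) : FinP (Bs k s b) :=
  fin_of k s b hs _ fun _ h => ⟨h.1, h.2.1, h.2.2.2.2.1⟩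

theorem Bs_red (k : Bool) (s b : ℕ) (hs : 2 ≤ s) (hNB : ∀ G, Bs k s b G → NB G) :
    XX (Bs k s b) dg = XX (fun p : Pr Osl => Pb k s b p ∧ ¬ ∃ o, Fr p.x o)
      (fun p => dg p.x + p.T.ncard) := by
  rw [XX_add (Bs k s b) Spec dg (Bs_fin k s b hs), stepA k s b hs hNB, zero_add, ← stepB,
    XX_add (Pb k s b) (fun p => ∃ o, Fr p.x o) _ (Pr.fin _ (Pb_inv k s b) (Pb_fin k s b hs)),
    vanB k s b hs, zero_add]

theorem KM_zero (b : ℕ) : XX (Bs false 4 b) dg = 0 := by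
  rw [Bs_red false 4 b (by norm_num)]
  · refine XX_empty ?_
    rintro p _ ⟨⟨⟨h1, _, ⟨o⟩, _⟩, _⟩, h⟩
    have h1 : IsEmpty p.x.D := h1
    exact h ⟨o, fun o' δ => isEmptyElim δ⟩
  · rintro G ⟨h1, _⟩ o o' δ
    have h1 : IsEmpty G.D := h1
    exact isEmptyElim δ

theorem inc_kind {G : Ob} (h : Kind true G) {o o' o'' : G.O} {δ : G.D} (hne : o ≠ o')
    (h1 : G.inc o δ) (h2 : G.inc o' δ) (h3 : G.inc o'' δ) : o'' = o ∨ o'' = o' := by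
  obtain ⟨e, he⟩ := h
  obtain ⟨⟨a, i⟩, rfl⟩ := e.surjective o
  obtain ⟨⟨a', i'⟩, rfl⟩ := e.surjective o'
  obtain ⟨⟨a'', i''⟩, rfl⟩ := e.surjective o''
  rw [he] at h1 h2 h3
  subst h1; subst h2; subst h3
  rw [e.injective.eq_iff, e.injective.eq_iff]
  cases i <;> cases i' <;> cases i'' <;> simp_all

theorem inc_uniq {G : Ob} (h : Kind true G) {o : G.O} {δ δ' : G.D}
    (h1 : G.inc o δ) (h2 : G.inc o δ') : δ = δ' := by
  obtain ⟨e, he⟩ := h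
  obtain ⟨⟨a, i⟩, rfl⟩ := e.surjective o
  rw [he] at h1 h2
  rw [← h1, ← h2]

theorem NB_KD (b : ℕ) (hb : 2 ≤ b) (G : Ob) (hG : Bs true 2 b G) : NB G := by
  obtain ⟨h1, h2, h3, h4, h5, h6⟩ := hG
  intro o o' δ hne hi hi' ht ht'
  by_contra hm
  have hm : 0 < G.m (G.q o) (G.q o') := by omega
  have hm' : 0 < G.m (G.q o') (G.q o) := by rw [G.symm]; exact hm
  have hqq : G.q o ≠ G.q o' := h6 o o' δ hne hi hi'
  have hV : ∀ x, x = G.q o ∨ x = G.q o' := by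
    intro x
    refine h4 (fun x => x = G.q o ∨ x = G.q o') ?_ ?_ (G.q o) x (Or.inl rfl)
    · rintro x y hxy (rfl | rfl)
      · right; by_contra hc
        have := thin_m ht.1 hm y
        rw [if_neg hc] at this; omega
      · left; by_contra hc
        have := thin_m ht'.1 hm' y
        rw [if_neg hc] at this; omega
    · intro o1 o2 δ1 a1 a2 hq
      have ho1 : o1 = o ∨ o1 = o' :=
        hq.imp (fun h => cc_one_uniq ht.2 h rfl) (fun h => cc_one_uniq ht'.2 h rfl)
      have hδ : δ1 = δ := by
        rcases ho1 with rfl | rfl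
        · exact inc_uniq h1 a1 hi
        · exact inc_uniq h1 a1 hi'
      subst hδ
      exact (inc_kind h1 hne hi hi' a2).imp (fun h => by rw [h]) (fun h => by rw [h])
  have i := Fintype.ofFinite G.V
  have hu : (Finset.univ : Finset G.V) = {G.q o, G.q o'} := by
    ext x; simpa using hV x
  unfold Size at h2
  rw [← sum_cc, tm_eq, Nat.card_eq_fintype_card, ← Finset.card_univ, hu, Finset.sum_pair hqq,
    Finset.sum_pair hqq, Finset.card_pair hqq, ht.1, ht.2, ht'.1, ht'.2] at h2
  omega

@[reducible] def LD (M : Ob) : Ob where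
  V := M.V
  O := M.O × Bool
  D := M.O
  fV := inferInstance
  fO := inferInstance
  fD := inferInstance
  m := M.m
  q := fun o => M.q o.1
  inc := fun o δ => o.1 = δ
  symm := M.symm
  diag := M.diag

@[reducible] def PD (M : Ob) : Pr Osl := ⟨LD M, {o : M.O × Bool | o.2 = true}⟩

theorem LD_degE (M : Ob) (x : M.V) : degE (LD M) x = degE M x := rfl
theorem LD_tm (M : Ob) : tm (LD M) = tm M := rfl
theorem LD_cc (M : Ob) (x : M.V) : cc (LD M) x = 2 * cc M x := by
  unfold cc
  have : 2 * Nat.card {o // M.q o = x} = Nat.card ({o // M.q o = x} × Bool) := by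
    rw [Nat.card_prod, mul_comm]; simp
  rw [this]
  exact Nat.card_congr ⟨fun o => (⟨o.1.1, o.2⟩, o.1.2), fun o => ⟨(o.1.1, o.2), o.1.2⟩,
    fun _ => rfl, fun _ => rfl⟩

theorem LD_iff (b : ℕ) (M : Ob) [IsEmpty M.D] :
    (Pb true 2 b (PD M) ∧ ¬ ∃ o, Fr (PD M).x o) ↔ Bs false 4 b M := by
  constructor
  · rintro ⟨⟨⟨h1, h2, ⟨h3⟩, h4, h5⟩, h6⟩, h7⟩
    refine ⟨‹_›, ?_, ⟨h3.1⟩, ?_, ?_, fun o o' δ => isEmptyElim δ⟩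
    · unfold Size at *
      have h2 : tm M + 2 * Nat.card (M.O × Bool) = 2 * (Nat.card M.V + b) := h2
      rw [Nat.card_prod] at h2
      simp at h2
      omega
    · intro p a1 a2
      refine h4 p a1 ?_
      rintro ⟨o, i⟩ ⟨o', i'⟩ δ rfl h
      have h : o' = o := h
      subst h; exact id
    · intro x
      rw [← LD_cc]; exact h5 x
  · rintro ⟨h1, h2, ⟨h3⟩, h4, h5, h6⟩
    refine ⟨⟨⟨⟨Equiv.refl _, fun _ _ _ => Iff.rfl⟩, ?_, ⟨(h3, true)⟩, ?_, ?_⟩, ?_⟩, ?_⟩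
    · unfold Size at *
      show tm M + 2 * Nat.card (M.O × Bool) = 2 * (Nat.card M.V + b)
      rw [Nat.card_prod]
      simp
      omega
    · intro p a1 a2
      exact h4 p a1 (fun o o' δ => isEmptyElim δ)
    · intro x
      have := LD_cc M x
      have h := h5 x
      rw [← this] at h; exact h
    · rintro ⟨o, i⟩ ⟨o', i'⟩ δ hne h h' _
      have h : o = δ := h
      have h' : o' = δ := h'
      subst h; subst h'
      show i = true ∨ i' = true
      by_contra hc
      push Not at hc
      simp at hc
      exact hne (by rw [hc.1, hc.2])
    · rintro ⟨⟨o, i⟩, h⟩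
      exact h (o, !i) o (by simp) rfl rfl rfl

def LD_map {M M' : Ob} (f : M ⟶ M') : PD M ⟶ PD M' where
  f := ⟨f.v, Equiv.prodCongr f.o (Equiv.refl _), f.o, f.hm, fun o => f.hq o.1,
    fun o δ => f.o.injective.eq_iff⟩
  h := fun _ => Iff.rfl

theorem LD_sg {M : Ob} [IsEmpty M.D] (f : M ⟶ M) : SG.sg (LD_map f) = SG.sg f := by
  rw [Pr.sg_def, Ob.sg_def, Ob.sg_def]
  have h1 : psgn (LD_map f).eqv = psgn f.o := by
    let E : M.O ≃ (PD M).T := ⟨fun o => ⟨(o, true), rfl⟩, fun o => o.1.1, fun _ => rfl, by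
      rintro ⟨⟨o, i⟩, h⟩
      have h : i = true := h
      subst h; rfl⟩
    exact (psgn_conj E f.o _ (fun _ => rfl)).symm
  have h2 : psgn f.d = 1 := by
    have : f.d = Equiv.refl _ := Subsingleton.elim _ _
    rw [this]; exact psgn_refl
  rw [h1, h2]
  show psgn f.v * psgn f.odd * psgn f.o * psgn f.o = _
  rw [mul_assoc _ (psgn f.o), Int.units_mul_self]

theorem LD_full {M M' : Ob} [IsEmpty M.D] [IsEmpty M'.D] (g : PD M ⟶ PD M') :
    ∃ f : M ⟶ M', LD_map f = g := by
  let go : M.O × Bool ≃ M'.O × Bool := g.f.o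
  let gd : M.O ≃ M'.O := g.f.d
  have k1 : ∀ o i, (go (o, i)).1 = gd o := fun o i => (g.f.hi (o, i) o).2 rfl
  have k2 : ∀ o i, (go (o, i)).2 = i := by
    intro o i
    have : i = true ↔ (go (o, i)).2 = true := g.h (o, i)
    revert this
    cases i <;> simp
  refine ⟨⟨g.f.v, gd, Equiv.equivOfIsEmpty _ _, g.f.hm, ?_, fun o δ => isEmptyElim δ⟩, ?_⟩
  · intro o
    have : M'.q (go (o, true)).1 = g.f.v (M.q o) := g.f.hq (o, true)
    rwa [k1] at this
  · refine Pr.hom_ext _ _ (OHom.ext rfl ?_ rfl)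
    refine Equiv.ext fun a => ?_
    have : ((gd a.1, a.2) : M'.O × Bool) = go (a.1, a.2) :=
      Prod.ext (k1 a.1 a.2).symm (k2 a.1 a.2).symm
    exact this

theorem LD_surj (b : ℕ) (p : Pr Osl) (hp : Pb true 2 b p ∧ ¬ ∃ o, Fr p.x o) (hev : Ev p) :
    ∃ M, Bs false 4 b M ∧ Nonempty (PD M ⟶ p) := by
  have hp0 := hp
  obtain ⟨⟨⟨h1, -⟩, h6⟩, h7⟩ := hp
  have hk := h1
  obtain ⟨e, he⟩ := h1
  have hq : ∀ δ i, p.x.q (e (δ, !i)) = p.x.q (e (δ, i)) := by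
    intro δ i
    push Not at h7
    have := h7 (e (δ, i))
    unfold Fr at this
    push Not at this
    obtain ⟨o', δ', a1, a2, a3, a4⟩ := this
    rw [he] at a2
    subst a2
    have := inc_kind hk (o := e (δ, i)) (o' := e (δ, !i)) (o'' := o') (δ := δ)
      (by simp) ((he _ _ _).2 rfl) ((he _ _ _).2 rfl) a3
    rcases this with h | h
    · exact absurd h a1
    · rw [← h]; exact a4
  have hor : ∀ δ, e (δ, false) ∈ p.T ∨ e (δ, true) ∈ p.T := fun δ =>
    h6 _ _ δ (by simp) ((he _ _ _).2 rfl) ((he _ _ _).2 rfl) (hq δ true)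
  have hnot : ∀ δ, ¬ (e (δ, false) ∈ p.T ∧ e (δ, true) ∈ p.T) := by
    rintro δ ⟨a1, a2⟩
    let σ : Perm p.x.O := Equiv.swap (e (δ, false)) (e (δ, true))
    have sT : ∀ o, o ∈ p.T ↔ σ o ∈ p.T := by
      intro o
      by_cases c1 : o = e (δ, false)
      · subst c1; simp [σ, a1, a2]
      by_cases c2 : o = e (δ, true)
      · subst c2; simp [σ, a1, a2]
      simp only [σ, Equiv.swap_apply_of_ne_of_ne c1 c2]
    let f : p.x ⟶ p.x := ⟨Equiv.refl _, σ, Equiv.refl _, fun _ _ => rfl, by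
      intro o
      by_cases c1 : o = e (δ, false)
      · subst c1; simpa [σ] using (hq δ false)
      by_cases c2 : o = e (δ, true)
      · subst c2; simpa [σ] using (hq δ true)
      simp only [σ, Equiv.swap_apply_of_ne_of_ne c1 c2]; rfl, by
      intro o δ'
      by_cases c1 : o = e (δ, false)
      · subst c1; simp [σ, he]
      by_cases c2 : o = e (δ, true)
      · subst c2; simp [σ, he]
      simp only [σ, Equiv.swap_apply_of_ne_of_ne c1 c2]; rfl⟩
    let F : p ⟶ p := ⟨f, sT⟩
    have hs := hev F
    have e1 : SG.sg f = 1 := by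
      have : f = 𝟙 _ ∨ psgn f.v = 1 ∧ psgn f.odd = 1 ∧ psgn f.d = 1 :=
        Or.inr ⟨psgn_refl, psgn_refl, psgn_refl⟩
      rcases this with h | ⟨h, h', h''⟩
      · rw [h, sg_id]
      · rw [Ob.sg_def, h, h', h'']; rfl
    have e2 : psgn F.eqv = -1 := by
      refine psgn_swap (x := (⟨_, a1⟩ : p.T)) (y := ⟨_, a2⟩) (by simp) _ ?_ ?_ ?_
      · apply Subtype.ext
        show σ _ = _
        simp [σ]
      · apply Subtype.ext
        show σ _ = _
        simp [σ]
      · intro z z1 z2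
        apply Subtype.ext
        show σ z.1 = z.1
        exact Equiv.swap_apply_of_ne_of_ne (fun h => z1 (Subtype.ext h)) (fun h => z2 (Subtype.ext h))
    have e3 : SG.sg F = SG.sg f * psgn F.eqv := rfl
    rw [e3, e1, e2] at hs
    exact absurd hs (by decide)
  let t : p.x.D → Bool := fun δ => decide (e (δ, true) ∈ p.T)
  have ht : ∀ δ i, e (δ, i) ∈ p.T ↔ i = t δ := by
    intro δ i
    have a := hor δ
    have a' := hnot δ
    by_cases c : e (δ, true) ∈ p.T
    · have : t δ = true := by simp [t, c]
      rw [this]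
      cases i <;> simp_all
    · have : t δ = false := by simp [t, c]
      rw [this]
      cases i <;> simp_all
  let M : Ob :=
    { V := p.x.V, O := p.x.D, D := Empty, fV := inferInstance, fO := inferInstance,
      fD := inferInstance, m := p.x.m, q := fun δ => p.x.q (e (δ, true)), inc := fun _ _ => False,
      symm := p.x.symm, diag := p.x.diag }
  have hMD : IsEmpty M.D := inferInstanceAs (IsEmpty Empty)
  let r : p.x.D × Bool → p.x.D × Bool := fun a => (a.1, a.2 == t a.1)
  have hr : Function.Involutive r := by
    rintro ⟨δ, i⟩
    refine Prod.ext rfl ?_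
    show ((i == t δ) == t δ) = i
    cases i <;> cases t δ <;> rfl
  let F : PD M ⟶ p := ⟨⟨Equiv.refl _, (Function.Involutive.toPerm r hr).trans e, Equiv.refl _,
    fun _ _ => rfl, by
      rintro ⟨δ, i⟩
      show p.x.q (e (δ, i == t δ)) = p.x.q (e (δ, true))
      cases (i == t δ)
      · exact hq δ true
      · rfl, by
      rintro ⟨δ, i⟩ δ'
      exact he δ _ δ'⟩, by
    rintro ⟨δ, i⟩
    show i = true ↔ e (δ, i == t δ) ∈ p.T
    rw [ht]
    cases i <;> cases t δ <;> simp⟩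
  refine ⟨M, (LD_iff b M).1 ?_, ⟨F⟩⟩
  exact (((Pb_inv true 2 b).and exFr_inv.not.pr) _ _ F).mpr hp0

theorem KD_zero (b : ℕ) (hb : 2 ≤ b) : XX (Bs true 2 b) dg = 0 := by
  rw [Bs_red true 2 b le_rfl (NB_KD b hb), ← KM_zero b]
  symm
  refine XX_functor' (Bs false 4 b) (fun p : Pr Osl => Pb true 2 b p ∧ ¬ ∃ o, Fr p.x o) dg _
    PD LD_map (Bs_inv _ _ _) ((Pb_inv true 2 b).and exFr_inv.not.pr) ?_ ?_ ?_ ?_ ?_ ?_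
  · intro p p' f
    have h1 := dg_inv _ _ f.f
    have h2 : Nat.card p.T = Nat.card p'.T := Nat.card_congr f.eqv
    show _ + Nat.card p.T = _ + Nat.card p'.T
    rw [h1, h2]
  · intro M hM
    have : IsEmpty M.D := hM.1
    exact (LD_iff b M).2 hM
  · intro M hM
    have : IsEmpty M.D := hM.1
    have h1 : dg (PD M).x = Nat.card M.V + Nat.card M.O := rfl
    have h2 : dg M = Nat.card M.V := by unfold dg; simp
    have h3 : (PD M).T.ncard = Nat.card M.O :=
      Nat.card_congr ⟨fun o => o.1.1, fun o => ⟨(o, true), rfl⟩, by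
        rintro ⟨⟨o, i⟩, h⟩
        have h : i = true := h
        subst h; rfl, fun _ => rfl⟩
    rw [h1, h2, h3, add_assoc, pow_add, Even.neg_one_pow ⟨_, rfl⟩, mul_one]
  · intro M hM
    have : IsEmpty M.D := hM.1
    exact LD_sg
  · intro M M' hM hM'
    have : IsEmpty M.D := hM.1
    have : IsEmpty M'.D := hM'.1
    exact LD_full
  · exact fun p hp hev => LD_surj b p hp hev

end StepC
end GraphComplexOdd

namespace GraphComplexOdd
section StepD
open Equiv CategoryTheory
open scoped Classical

def s2 {α β : Type*} (e : α ≃ β) : Sym2 α ≃ Sym2 β where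
  toFun := Sym2.map e
  invFun := Sym2.map e.symm
  left_inv x := by induction x with | _ a b => simp
  right_inv x := by induction x with | _ a b => simp

theorem s2_mk {α β : Type*} (e : α ≃ β) (a b : α) : s2 e s(a, b) = s(e a, e b) := rfl

@[reducible] def Bsl : Slots Ob where
  S G := Sym2 G.V
  fin G := inferInstance
  map f := s2 f.v
  map_id x s := by
    induction s with | _ a b => rfl
  map_comp f g s := by
    induction s with | _ a b => rfl

def Bun (G : Ob) : Set (Sym2 G.V) := {s | ∀ x y, s = s(x, y) → 2 ≤ G.m x y}

theorem Bun_mk {G : Ob} {x y : G.V} : s(x, y) ∈ Bun G ↔ 2 ≤ G.m x y := by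
  constructor
  · exact fun h => h x y rfl
  · intro h a b hab
    rcases Sym2.eq_iff.1 hab with ⟨rfl, rfl⟩ | ⟨rfl, rfl⟩
    · exact h
    · rw [G.symm]; exact h

theorem Bun_hom {G H : Ob} (f : G ⟶ H) (s : Sym2 G.V) : s ∈ Bun G ↔ s2 f.v s ∈ Bun H := by
  induction s with | _ a b => rw [s2_mk, Bun_mk, Bun_mk, f.hm]

def K0 (b : ℕ) (G : Ob) : Prop := (IsEmpty G.O ∧ IsEmpty G.D) ∧ tm G = 2 * (Nat.card G.V + b) ∧
  Conn G ∧ ∀ x, 3 ≤ degE G x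

theorem K0_inv (b : ℕ) : Inv (K0 b) := by
  refine Inv_prop fun G H f h => ?_
  obtain ⟨⟨h1, h2⟩, h3, h4, h5⟩ := h
  refine ⟨⟨f.o.symm.isEmpty, f.d.symm.isEmpty⟩, ?_, (Conn_inv _ _ f).mp h4, ?_⟩
  · rw [tm_hom f, h3, Nat.card_congr f.v]
  · intro x
    obtain ⟨x, rfl⟩ := f.v.surjective x
    rw [degE_hom]; exact h5 x

theorem K0_fin (b : ℕ) : FinP (K0 b) := by
  refine fin_of false 2 b le_rfl _ ?_
  rintro G ⟨⟨h1, h2⟩, h3, h4, h5⟩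
  refine ⟨h2, ?_, fun x => ?_⟩
  · unfold Size; rw [h3]; simp
  · have := h5 x; omega

def NM (G : Ob) : Prop := (Bun G).Nonempty

theorem NM_inv : Inv NM :=
  Inv_prop fun _ _ f h => h.elim fun x hx => ⟨s2 f.v x, (Bun_hom f x).1 hx⟩

def Pc (b : ℕ) (p : Pr Bsl) : Prop := K0 b p.x ∧ p.T ⊆ Bun p.x

theorem sub_inv : Inv (fun p : Pr Bsl => p.T ⊆ Bun p.x) := by
  refine Inv_prop fun p p' f h s hs => ?_
  obtain ⟨s, rfl⟩ := (s2 f.f.v).surjective s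
  exact (Bun_hom f.f s).1 (h ((f.h s).2 hs))

theorem Pc_inv (b : ℕ) : Inv (Pc b) := (K0_inv b).pr.and sub_inv

theorem Tne_inv : Inv (fun p : Pr Bsl => p.T.Nonempty) :=
  Inv_prop fun _ _ f h => h.elim fun x hx => ⟨s2 f.f.v x, (f.h x).1 hx⟩

theorem Pc_zero (b : ℕ) : XX (fun p => Pc b p ∧ NM p.x) (fun p => dg p.x + p.T.ncard) = 0 := by
  refine lemC (Sl := Bsl) (fun p => Pc b p ∧ NM p.x) Bun dg ((Pc_inv b).and NM_inv.pr) dg_inv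
    (fun x y f s => Bun_hom f s) ?_ ?_ ?_
  · rintro x T U h ⟨⟨h1, h2⟩, h3⟩
    refine ⟨⟨h1, ?_⟩, h3⟩
    intro z hz
    by_contra hc
    exact hc (h2 ((h z hc).2 hz))
  · rintro x T ⟨_, h⟩
    exact h
  · exact (K0_fin b).mono fun G ⟨T, hT⟩ => hT.1.1

theorem Pc_empty (b : ℕ) : XX (fun p => (Pc b p ∧ NM p.x) ∧ ¬ p.T.Nonempty)
    (fun p : Pr Bsl => dg p.x + p.T.ncard) = XX (fun G => K0 b G ∧ NM G) dg := by
  symm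
  refine XX_functor' _ _ _ _ (fun G => (⟨G, ∅⟩ : Pr Bsl))
    (fun {G H} f => (⟨f, fun s => Iff.rfl⟩ : PrHom (⟨G, ∅⟩ : Pr Bsl) ⟨H, ∅⟩))
    ((K0_inv b).and NM_inv) (((Pc_inv b).and NM_inv.pr).and Tne_inv.not) ?_ ?_ ?_ ?_ ?_ ?_
  · intro p p' f
    have h1 := dg_inv _ _ f.f
    have h2 : Nat.card p.T = Nat.card p'.T := Nat.card_congr f.eqv
    show _ + Nat.card p.T = _ + Nat.card p'.T
    rw [h1, h2]
  · rintro G ⟨h1, h2⟩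
    exact ⟨⟨⟨h1, Set.empty_subset _⟩, h2⟩, by simp⟩
  · intro G _
    simp
  · intro G _ f
    rw [Pr.sg_def]
    have : ∀ (h : Perm (∅ : Set (Sym2 G.V))), psgn h = 1 := by
      intro h
      rw [Subsingleton.elim h 1]; exact psgn_one
    refine (congrArg _ (this _)).trans (mul_one _)
  · intro G H _ _ g
    exact ⟨g.f, rfl⟩
  · rintro ⟨G, T⟩ ⟨⟨⟨h1, h2⟩, h3⟩, h4⟩ _
    have h4 : ∀ s, s ∉ T := fun s hs => h4 ⟨s, hs⟩
    refine ⟨G, ⟨h1, h3⟩, ⟨⟨𝟙 G, fun s => ⟨fun h => absurd h (Set.notMem_empty _), fun h => absurd h (h4 _)⟩⟩⟩⟩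

@[reducible] noncomputable def JD (p : Pr Bsl) : Ob where
  V := p.x.V
  O := {a : p.x.V × p.x.V // s(a.1, a.2) ∈ p.T}
  D := p.T
  fV := inferInstance
  fO := inferInstance
  fD := inferInstance
  m := fun x y => p.x.m x y - if s(x, y) ∈ p.T then 2 else 0
  q := fun a => a.1.1
  inc := fun a δ => s(a.1.1, a.1.2) = δ.1
  symm := by intro x y; rw [p.x.symm, Sym2.eq_swap]
  diag := by intro x; rw [p.x.diag]; simp

variable {p : Pr Bsl}

theorem JD_m (x y : p.x.V) : (JD p).m x y = p.x.m x y - if s(x, y) ∈ p.T then 2 else 0 := rfl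

variable (hT : p.T ⊆ Bun p.x)
include hT

theorem JD_add (x y : p.x.V) : (JD p).m x y + (2 * if s(x, y) ∈ p.T then 1 else 0) = p.x.m x y := by
  rw [JD_m]
  split_ifs with h
  · have := Bun_mk.1 (hT h); omega
  · omega

theorem JD_ne {x y : p.x.V} (h : s(x, y) ∈ p.T) : x ≠ y := by
  rintro rfl
  have := Bun_mk.1 (hT h)
  rw [p.x.diag] at this
  omega

omit hT in
theorem JD_cc (x : p.x.V) [Fintype p.x.V] :
    cc (JD p) x = ∑ y, if s(x, y) ∈ p.T then 1 else 0 := by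
  rw [Finset.sum_boole, Nat.cast_id, ← Fintype.card_subtype, ← Nat.card_eq_fintype_card]
  unfold cc
  refine Nat.card_congr ⟨fun a => ⟨a.1.1.2, ?_⟩, fun y => ⟨⟨(x, y.1), y.2⟩, rfl⟩, ?_, fun _ => rfl⟩
  · obtain ⟨⟨⟨a, b⟩, h⟩, h'⟩ := a
    have h' : a = x := h'
    subst h'; exact h
  · rintro ⟨⟨⟨a, b⟩, h⟩, h'⟩
    have h' : a = x := h'
    subst h'; rfl

theorem JD_deg (x : p.x.V) : degE (JD p) x + 2 * cc (JD p) x = degE p.x x := by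
  have i := Fintype.ofFinite p.x.V
  rw [JD_cc, degE_eq p.x]
  have := degE_eq (JD p) x
  rw [this, Finset.mul_sum, ← Finset.sum_add_distrib]
  exact Finset.sum_congr rfl fun y _ => JD_add hT x y

theorem JD_tm : tm (JD p) + 2 * Nat.card (JD p).O = tm p.x := by
  have i : Fintype p.x.V := Fintype.ofFinite p.x.V
  have i2 : Fintype (JD p).V := i
  rw [← sum_cc, tm_eq p.x, tm_eq (JD p), Finset.mul_sum, ← Finset.sum_add_distrib]
  have := Finset.sum_congr (s₁ := (Finset.univ : Finset p.x.V)) rfl fun y _ => JD_deg hT y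
  refine Eq.trans ?_ this
  congr!

theorem JD_kind : Kind true (JD p) := by
  have hout : ∀ δ : p.T, ∃ a : p.x.V × p.x.V, s(a.1, a.2) = δ.1 := by
    rintro ⟨s, hs⟩
    revert hs
    refine Sym2.ind (fun a b => ?_) s
    exact fun _ => ⟨(a, b), rfl⟩
  choose r hr using hout
  have hr' : ∀ δ, (r δ).1 ≠ (r δ).2 := fun δ => JD_ne hT (by rw [hr]; exact δ.2)
  let F : p.T × Bool → {a : p.x.V × p.x.V // s(a.1, a.2) ∈ p.T} := fun a =>
    if a.2 then ⟨r a.1, by rw [hr]; exact a.1.2⟩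
    else ⟨(r a.1).swap, by rw [Prod.fst_swap, Prod.snd_swap, Sym2.eq_swap, hr]; exact a.1.2⟩
  have hFs : ∀ δ i, s((F (δ, i)).1.1, (F (δ, i)).1.2) = δ.1 := by
    intro δ i
    cases i
    · simp only [F, Bool.false_eq_true, if_false, Prod.fst_swap, Prod.snd_swap]
      rw [Sym2.eq_swap, hr]
    · simp only [F, if_true]; rw [hr]
  have hF : Function.Bijective F := by
    constructor
    · rintro ⟨δ, i⟩ ⟨δ', i'⟩ h
      have : δ = δ' := by
        apply Subtype.ext
        rw [← hFs δ i, ← hFs δ' i', h]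
      subst this
      have h1 := congrArg (fun z => z.1.1) h
      have := hr' δ
      cases i <;> cases i'
      · rfl
      · exact absurd h1.symm this
      · exact absurd h1 this
      · rfl
    · rintro ⟨⟨a, b⟩, h⟩
      have := hr ⟨_, h⟩
      rcases Sym2.eq_iff.1 this with ⟨h1, h2⟩ | ⟨h1, h2⟩
      · refine ⟨(⟨_, h⟩, true), Subtype.ext (Prod.ext ?_ ?_)⟩ <;> simp [F, h1, h2]
      · refine ⟨(⟨_, h⟩, false), Subtype.ext (Prod.ext ?_ ?_)⟩ <;> simp [F, h1, h2]
  refine ⟨Equiv.ofBijective F hF, ?_⟩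
  intro δ i δ'
  show s((F (δ, i)).1.1, (F (δ, i)).1.2) = δ'.1 ↔ _
  rw [hFs]
  exact Subtype.ext_iff.symm

theorem JD_conn (hO : IsEmpty p.x.O) : Conn (JD p) ↔ Conn p.x := by
  constructor
  · intro h r h1 h2
    refine h r ?_ ?_
    · intro x y hxy
      refine h1 x y ?_
      have := JD_add hT x y
      omega
    · rintro ⟨⟨a, b⟩, h⟩ ⟨⟨a', b'⟩, h'⟩ ⟨δ, hδ⟩ e1 e2
      have e1 : s(a, b) = δ := e1
      have e2 : s(a', b') = δ := e2
      have e3 := e1.trans e2.symm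
      show r a → r a'
      rcases Sym2.eq_iff.1 e3 with ⟨rfl, rfl⟩ | ⟨rfl, rfl⟩
      · exact id
      · have h5 : 2 ≤ p.x.m a b := Bun_mk.1 (hT h)
        exact h1 a b (by omega)
  · intro h r h1 h2
    refine h r ?_ (fun o => isEmptyElim o)
    intro x y hxy
    by_cases hs : s(x, y) ∈ p.T
    · exact h2 ⟨(x, y), hs⟩ ⟨(y, x), by rw [Sym2.eq_swap]; exact hs⟩ ⟨_, hs⟩ rfl Sym2.eq_swap
    · refine h1 x y ?_
      rw [JD_m, if_neg hs]; omega

theorem JD_NL : NL (JD p) := by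
  rintro ⟨⟨a, b⟩, h⟩ ⟨⟨a', b'⟩, h'⟩ ⟨δ, hδ⟩ hne e1 e2 hq
  have e1 : s(a, b) = δ := e1
  have e2 : s(a', b') = δ := e2
  have hq : a = a' := hq
  subst hq
  have e3 := e1.trans e2.symm
  have : b = b' := by
    rcases Sym2.eq_iff.1 e3 with ⟨_, h⟩ | ⟨h1, h2⟩
    · exact h
    · exact h2.trans h1
  subst this
  exact hne rfl

theorem JD_iff (b : ℕ) (hO : IsEmpty p.x.O) (hD : IsEmpty p.x.D) :
    Bs true 2 b (JD p) ↔ (K0 b p.x ∧ p.T.Nonempty) := by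
  have hV : Valid (JD p) ↔ ∀ x, 3 ≤ degE p.x x := forall_congr' fun x => by
    rw [JD_deg hT]
  have hS : Size 2 b (JD p) ↔ tm p.x = 2 * (Nat.card p.x.V + b) := by
    unfold Size
    rw [JD_tm hT]
  have hN : Nonempty (JD p).O ↔ p.T.Nonempty := by
    constructor
    · rintro ⟨a⟩; exact ⟨_, a.2⟩
    · rintro ⟨s, hs⟩
      revert hs
      refine Sym2.ind (fun a b => ?_) s
      exact fun hs => ⟨⟨(a, b), hs⟩⟩
  unfold Bs K0
  rw [hV, hS, hN, JD_conn hT hO]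
  have := JD_kind hT
  have := JD_NL hT
  tauto

omit hT

noncomputable def JD_map {p p' : Pr Bsl} (f : p ⟶ p') : JD p ⟶ JD p' where
  v := f.f.v
  o := (Equiv.prodCongr f.f.v f.f.v).subtypeEquiv (fun a => f.h s(a.1, a.2))
  d := f.eqv
  hm := by
    intro x y
    rw [JD_m, JD_m, f.f.hm]
    congr 1
    exact if_congr (f.h s(x, y)).symm rfl rfl
  hq := fun a => rfl
  hi := by
    intro a δ
    show s2 f.f.v s(a.1.1, a.1.2) = s2 f.f.v δ.1 ↔ _
    exact (s2 f.f.v).injective.eq_iff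

theorem JD_odd (hT : p.T ⊆ Bun p.x) (x y : p.x.V) : Odd (p.x.m x y) ↔ Odd ((JD p).m x y) := by
  rw [← JD_add hT x y, Nat.odd_add]
  exact iff_true_right (even_two_mul _)

theorem JD_sg (hT : p.T ⊆ Bun p.x) (hD : IsEmpty p.x.D) (f : p ⟶ p) :
    SG.sg (JD_map f) = SG.sg f := by
  rw [Pr.sg_def, Ob.sg_def, Ob.sg_def]
  have h2 : psgn f.f.d = 1 := by
    have : f.f.d = Equiv.refl _ := Subsingleton.elim _ _
    rw [this]; exact psgn_refl
  have h1 : psgn f.f.odd = psgn (JD_map f).odd :=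
    psgn_conj (Equiv.subtypeEquivRight (fun a : p.x.V × p.x.V => JD_odd hT a.1 a.2)) _ _ (fun _ => rfl)
  rw [h1, h2, mul_one]
  rfl

theorem JD_full {p' : Pr Bsl} (hT : p.T ⊆ Bun p.x) (hT' : p'.T ⊆ Bun p'.x)
    (hO : IsEmpty p.x.O) (hD : IsEmpty p.x.D) (hO' : IsEmpty p'.x.O) (hD' : IsEmpty p'.x.D)
    (g : JD p ⟶ JD p') : ∃ f : p ⟶ p', JD_map f = g := by
  let gv : p.x.V ≃ p'.x.V := g.v
  let go : {a : p.x.V × p.x.V // s(a.1, a.2) ∈ p.T} ≃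
    {a : p'.x.V × p'.x.V // s(a.1, a.2) ∈ p'.T} := g.o
  let gd : p.T ≃ p'.T := g.d
  have k1 : ∀ a, (go a).1.1 = gv a.1.1 := fun a => g.hq a
  have k2 : ∀ a (δ : p.T), s((go a).1.1, (go a).1.2) = (gd δ).1 ↔ s(a.1.1, a.1.2) = δ.1 :=
    fun a δ => g.hi a δ
  have k3 : ∀ a, (go a).1 = (gv a.1.1, gv a.1.2) := by
    intro a
    have hsw : s(a.1.2, a.1.1) ∈ p.T := by rw [Sym2.eq_swap]; exact a.2
    have e1 := (k2 a ⟨_, a.2⟩).2 rfl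
    have e2 := (k2 ⟨(a.1.2, a.1.1), hsw⟩ ⟨_, a.2⟩).2 Sym2.eq_swap
    have e3 := e1.trans e2.symm
    rw [k1, k1] at e3
    have hne := JD_ne hT a.2
    rcases Sym2.eq_iff.1 e3 with ⟨h, _⟩ | ⟨_, h⟩
    · exact absurd (gv.injective h) hne
    · exact Prod.ext (k1 a) h
  have hTT : ∀ s, s ∈ p.T ↔ s2 gv s ∈ p'.T := by
    intro s
    refine Sym2.ind (fun x y => ?_) s
    rw [s2_mk]
    constructor
    · intro h
      have h1 := (go ⟨(x, y), h⟩).2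
      rw [k3] at h1
      exact h1
    · intro h
      obtain ⟨a, ha⟩ := go.surjective ⟨(gv x, gv y), h⟩
      have h1 := k3 a
      rw [ha] at h1
      have h2 := gv.injective (congrArg Prod.fst h1)
      have h3 := gv.injective (congrArg Prod.snd h1)
      have := a.2
      simp only at h2 h3
      rwa [← h2, ← h3] at this
  refine ⟨⟨⟨gv, Equiv.equivOfIsEmpty _ _, Equiv.equivOfIsEmpty _ _, ?_, fun o => isEmptyElim o,
    fun o => isEmptyElim o⟩, hTT⟩, ?_⟩
  · intro x y
    have := g.hm x y
    rw [← JD_add hT x y, ← JD_add hT' (gv x) (gv y)]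
    congr 1
    congr 1
    exact if_congr (hTT s(x, y)).symm rfl rfl
  · refine OHom.ext rfl ?_ ?_
    · exact Equiv.ext fun a => Subtype.ext (k3 a).symm
    · refine Equiv.ext fun δ => Subtype.ext ?_
      obtain ⟨s, hs⟩ := δ
      revert hs
      refine Sym2.ind (fun x y hs => ?_) s
      have h1 := (k2 ⟨(x, y), hs⟩ ⟨_, hs⟩).2 rfl
      rw [k3] at h1
      exact h1

end StepD
end GraphComplexOdd

namespace GraphComplexOdd
section StepE
open Equiv CategoryTheory
open scoped Classical

@[reducible] noncomputable def RD (H : Ob) (T : Set (Sym2 H.V)) (hT : ∀ x, s(x, x) ∉ T) : Ob where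
  V := H.V
  O := Empty
  D := Empty
  fV := inferInstance
  fO := inferInstance
  fD := inferInstance
  m := fun x y => H.m x y + if s(x, y) ∈ T then 2 else 0
  q := fun a => a.elim
  inc := fun a => a.elim
  symm := by intro x y; rw [H.symm, Sym2.eq_swap]
  diag := by intro x; rw [H.diag, if_neg (hT x)]

theorem JD_surj (b : ℕ) (H : Ob) (hB : Bs true 2 b H) (hE : Ev H) :
    ∃ p : Pr Bsl, (Pc b p ∧ p.T.Nonempty) ∧ Nonempty (JD p ⟶ H) := by
  obtain ⟨hK, -, -, -, -, hNL⟩ := id hB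
  simp only [Kind, if_true] at hK
  obtain ⟨e, he⟩ := hK
  obtain ⟨Q, hQ⟩ : ∃ Q : H.D → Bool → H.V, ∀ δ i, Q δ i = H.q (e (δ, i)) := ⟨_, fun _ _ => rfl⟩
  have hQn : ∀ δ i, Q δ i ≠ Q δ (!i) := by
    intro δ i
    rw [hQ, hQ]
    refine hNL _ _ δ ?_ ((he _ _ _).2 rfl) ((he _ _ _).2 rfl)
    intro h
    have := congrArg Prod.snd (e.injective h)
    cases i <;> simp at this
  have hinj : ∀ δ δ', s(Q δ false, Q δ true) = s(Q δ' false, Q δ' true) → δ = δ' := by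
    intro δ δ' h
    by_contra hne
    obtain ⟨j, hj⟩ : ∃ j, ∀ i, Q δ' (xor i j) = Q δ i := by
      rcases Sym2.eq_iff.1 h with ⟨h1, h2⟩ | ⟨h1, h2⟩
      · exact ⟨false, fun i => by cases i <;> simp [h1, h2]⟩
      · exact ⟨true, fun i => by cases i <;> simp [h1, h2]⟩
    let π : H.D × Bool → H.D × Bool := fun a =>
      (Equiv.swap δ δ' a.1, if a.1 = δ ∨ a.1 = δ' then xor a.2 j else a.2)
    have hπ : Function.Involutive π := by
      rintro ⟨z, i⟩
      by_cases h1 : z = δ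
      · subst h1; simp [π, Bool.xor_assoc]
      by_cases h2 : z = δ'
      · subst h2; simp [π, Bool.xor_assoc]
      · simp [π, h1, h2, Equiv.swap_apply_of_ne_of_ne]
    let f : OHom H H := ⟨Equiv.refl _, (e.symm.trans hπ.toPerm).trans e, Equiv.swap δ δ',
      fun _ _ => rfl, by
        intro o
        obtain ⟨⟨z, i⟩, rfl⟩ := e.surjective o
        show H.q (e (π (e.symm (e (z, i))))) = H.q (e (z, i))
        rw [e.symm_apply_apply]
        show H.q (e ((π (z, i)).1, (π (z, i)).2)) = _
        rw [← hQ, ← hQ]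
        by_cases h1 : z = δ
        · subst h1; simp [π, hj]
        by_cases h2 : z = δ'
        · subst h2; simp only [π, Equiv.swap_apply_right, or_true, if_true]
          rw [← hj, Bool.xor_assoc, Bool.xor_self, Bool.xor_false]
        · simp [π, h1, h2, Equiv.swap_apply_of_ne_of_ne], by
        intro o z'
        obtain ⟨⟨z, i⟩, rfl⟩ := e.surjective o
        show H.inc (e (π (e.symm (e (z, i))))) _ ↔ _
        rw [e.symm_apply_apply]
        show H.inc (e ((π (z, i)).1, (π (z, i)).2)) _ ↔ _
        rw [he, he]
        exact (Equiv.swap δ δ').injective.eq_iff⟩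
    have h1 : SG.sg (x := H) f = 1 := hE f
    rw [Ob.sg_def] at h1
    have e1 : psgn f.v = 1 := psgn_refl
    have e2 : psgn f.odd = 1 := psgn_refl
    have e3 : psgn f.d = -1 := psgn_swap hne _ (Equiv.swap_apply_left _ _)
      (Equiv.swap_apply_right _ _) (fun z => Equiv.swap_apply_of_ne_of_ne)
    have h2 : psgn f.v * psgn f.odd * psgn f.d = 1 := h1
    rw [e1, e2, e3] at h2
    exact absurd h2 (by decide)
  let T : Set (Sym2 H.V) := Set.range (fun δ => s(Q δ false, Q δ true))
  have hsT : ∀ δ i, s(Q δ i, Q δ (!i)) = s(Q δ false, Q δ true) := by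
    intro δ i
    cases i
    · rfl
    · exact Sym2.eq_swap
  have hTd : ∀ x, s(x, x) ∉ T := by
    rintro x ⟨δ, h⟩
    have : s(Q δ false, Q δ true) = s(x, x) := h
    rcases Sym2.eq_iff.1 this with ⟨h1, h2⟩ | ⟨h1, h2⟩ <;>
    exact hQn δ false (h1.trans h2.symm)
  let p : Pr Bsl := ⟨RD H T hTd, T⟩
  have hTB : p.T ⊆ Bun p.x := by
    intro s
    refine Sym2.ind (fun x y => ?_) s
    intro h
    refine Bun_mk.2 ?_
    show 2 ≤ H.m x y + if s(x, y) ∈ T then 2 else 0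
    rw [if_pos h]; omega
  let F : H.D × Bool → {a : H.V × H.V // s(a.1, a.2) ∈ T} := fun a =>
    ⟨(Q a.1 a.2, Q a.1 (!a.2)), a.1, (hsT _ _).symm⟩
  have hF : Function.Bijective F := by
    constructor
    · rintro ⟨δ, i⟩ ⟨δ', i'⟩ h
      have h1 : (Q δ i, Q δ (!i)) = (Q δ' i', Q δ' (!i')) := congrArg Subtype.val h
      obtain ⟨h2, h3⟩ := Prod.ext_iff.1 h1
      simp only at h2 h3
      have : δ = δ' := by
        apply hinj
        rw [← hsT δ i, ← hsT δ' i', h2, h3]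
      subst this
      by_cases hi : i = i'
      · rw [hi]
      · have : i' = !i := by cases i <;> cases i' <;> simp_all
        subst this
        exact absurd h2 (hQn _ _)
    · rintro ⟨⟨x, y⟩, δ, h⟩
      have h : s(Q δ false, Q δ true) = s(x, y) := h
      rcases Sym2.eq_iff.1 h with ⟨h1, h2⟩ | ⟨h1, h2⟩
      · exact ⟨(δ, false), Subtype.ext (Prod.ext h1 h2)⟩
      · exact ⟨(δ, true), Subtype.ext (Prod.ext h2 h1)⟩
  let f : H ⟶ JD p := (⟨Equiv.refl _, e.symm.trans (Equiv.ofBijective F hF),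
    Equiv.ofInjective _ (fun δ δ' h => hinj δ δ' h), by
      intro x y
      show (H.m x y + if s(x, y) ∈ T then 2 else 0) - (if s(x, y) ∈ T then 2 else 0) = _
      omega, by
      intro o
      obtain ⟨⟨z, i⟩, rfl⟩ := e.surjective o
      show (F (e.symm (e (z, i)))).1.1 = H.q _
      rw [e.symm_apply_apply, ← hQ], by
      intro o z'
      obtain ⟨⟨z, i⟩, rfl⟩ := e.surjective o
      show s((F (e.symm (e (z, i)))).1.1, (F (e.symm (e (z, i)))).1.2) = s(Q z' false, Q z' true) ↔ _
      rw [e.symm_apply_apply, he]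
      show s(Q z i, Q z (!i)) = _ ↔ _
      rw [hsT]
      exact ⟨fun h => hinj _ _ h, fun h => by rw [h]⟩⟩ : OHom H (JD p))
  have hO : IsEmpty p.x.O := inferInstanceAs (IsEmpty Empty)
  have hD : IsEmpty p.x.D := inferInstanceAs (IsEmpty Empty)
  have h3 := (JD_iff hTB b hO hD).1 ((Bs_inv true 2 b _ _ f).mp hB)
  exact ⟨p, ⟨⟨h3.1, hTB⟩, h3.2⟩, ⟨Groupoid.inv f⟩⟩

theorem Pd_inv (b : ℕ) : Inv (fun p : Pr Bsl => Pc b p ∧ p.T.Nonempty) := (Pc_inv b).and Tne_inv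

theorem Pd_zero (b : ℕ) (hb : 2 ≤ b) : XX (fun p : Pr Bsl => Pc b p ∧ p.T.Nonempty)
    (fun p : Pr Bsl => dg p.x + p.T.ncard) = 0 := by
  rw [← KD_zero b hb]
  refine XX_functor' _ _ _ _ JD (fun f => JD_map f) (Pd_inv b) (Bs_inv true 2 b) dg_inv
    ?_ ?_ ?_ ?_ (JD_surj b)
  · rintro p ⟨⟨h1, h2⟩, h3⟩
    exact (JD_iff h2 b h1.1.1 h1.1.2).2 ⟨h1, h3⟩
  · rintro p ⟨⟨h1, h2⟩, h3⟩
    have := h1.1.2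
    congr 1
    unfold dg
    show Nat.card p.x.V + Nat.card p.T = Nat.card p.x.V + Nat.card p.x.D + Nat.card p.T
    rw [Nat.card_eq_zero.2 (Or.inl this), add_zero]
  · rintro p ⟨⟨h1, h2⟩, h3⟩ f
    exact JD_sg h2 h1.1.2 f
  · rintro p p' ⟨⟨h1, h2⟩, h3⟩ ⟨⟨h1', h2'⟩, h3'⟩ g
    exact JD_full h2 h2' h1.1.1 h1.1.2 h1'.1.1 h1'.1.2 g

theorem K0_main (b : ℕ) (hb : 2 ≤ b) : XX (K0 b) dg = XX (fun G => K0 b G ∧ ¬ NM G) dg := by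
  rw [XX_add (K0 b) NM dg (K0_fin b), ← Pc_empty b, ← sub_eq_zero]
  have hfin : FinP (fun p : Pr Bsl => Pc b p ∧ NM p.x) := by
    refine Pr.fin _ ((Pc_inv b).and NM_inv.pr) ?_
    exact (K0_fin b).mono fun G ⟨T, hT⟩ => hT.1.1
  have h1 := Pc_zero b
  rw [XX_add _ (fun p : Pr Bsl => p.T.Nonempty) _ hfin] at h1
  have h2 : XX (fun p : Pr Bsl => (Pc b p ∧ NM p.x) ∧ p.T.Nonempty)
      (fun p : Pr Bsl => dg p.x + p.T.ncard) = 0 := by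
    rw [← Pd_zero b hb]
    refine XX_congr fun p _ => ⟨fun h => ⟨h.1.1, h.2⟩, fun h => ⟨⟨h.1, ?_⟩, h.2⟩⟩
    obtain ⟨s, hs⟩ := h.2
    exact ⟨s, h.1.2 hs⟩
  rw [h2, zero_add] at h1
  rw [h1]; ring

end StepE
end GraphComplexOdd

namespace GraphComplexOdd
section Link
open Equiv CategoryTheory
open scoped Classical

theorem psgn_bool {α : Type*} [Fintype α] (π : Perm (α × Bool))
    (h : ∀ a c, π (a, !c) = ((π (a, c)).1, !(π (a, c)).2)) :
    psgn π = ∏ a, if (π (a, false)).2 = true then (-1 : ℤˣ) else 1 := by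
  have hval : ∀ a c, π (a, c) = ((π (a, false)).1, xor c (π (a, false)).2) := by
    intro a c
    cases c
    · simp
    · have := h a false
      rw [Bool.not_false] at this
      rw [this]; simp
  have hs : Function.Bijective (fun a => (π (a, false)).1) := by
    rw [← Finite.injective_iff_bijective]
    intro a a' haa
    simp only at haa
    have h1 := hval a (π (a, false)).2
    have h2 := hval a' (π (a', false)).2
    rw [Bool.xor_self] at h1 h2
    rw [haa] at h1
    exact congrArg Prod.fst (π.injective (h1.trans h2.symm))
  have e : π = (Equiv.prodCongrRight (fun a =>
      if (π (a, false)).2 = true then Equiv.boolNot else Equiv.refl Bool)).trans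
      (Equiv.prodCongrLeft (fun _ : Bool => Equiv.ofBijective _ hs)) := by
    apply Equiv.ext
    rintro ⟨a, c⟩
    rw [hval]
    by_cases h1 : (π (a, false)).2 = true
    · simp [h1]
    · simp [h1]
  have e1 : psgn ((Equiv.prodCongrRight (fun a =>
      if (π (a, false)).2 = true then Equiv.boolNot else Equiv.refl Bool))) =
      ∏ a, if (π (a, false)).2 = true then (-1 : ℤˣ) else 1 := by
    rw [psgn_eq, Perm.sign_prodCongrRight]
    refine Finset.prod_congr rfl fun a _ => ?_
    split_ifs
    · decide
    · simp
  have e2 : psgn (Equiv.prodCongrLeft (fun _ : Bool => Equiv.ofBijective _ hs)) = 1 := by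
    rw [psgn_eq, Perm.sign_prodCongrLeft]
    simp
  conv_lhs => rw [e]
  rw [psgn_trans, e1, e2, mul_one]

theorem fib_lift {ι κ β : Type*} [Finite ι] [Finite κ] (h : ι → β) (h' : κ → β)
    (hc : ∀ s, Nat.card {i // h i = s} = Nat.card {i // h' i = s}) :
    ∃ μ : ι ≃ κ, ∀ i, h' (μ i) = h i := by
  have : ∀ s, Nonempty ({i // h i = s} ≃ {i // h' i = s}) := fun s => Finite.card_eq.1 (hc s)
  let E := fun s => (this s).some
  refine ⟨(Equiv.sigmaFiberEquiv h).symm.trans ((Equiv.sigmaCongrRight E).trans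
    (Equiv.sigmaFiberEquiv h')), fun i => ?_⟩
  exact (E (h i) ⟨i, rfl⟩).2

variable {v e : ℕ}

def sy (g : Graph v e) (i : Fin e) : Sym2 (Fin v) := s((g i).1, (g i).2)

def LL (g : Graph v e) : Prop := ∀ i, (g i).1 ≠ (g i).2

@[reducible] noncomputable def ob (g : Graph v e) : Ob where
  V := Fin v
  O := Empty
  D := Empty
  fV := inferInstance
  fO := inferInstance
  fD := inferInstance
  m := fun x y => if x = y then 0 else Nat.card {i // sy g i = s(x, y)}
  q := fun a => a.elim
  inc := fun a => a.elim
  symm := by intro x y; rw [Sym2.eq_swap]; simp [eq_comm]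
  diag := by intro x; simp

theorem ob_m (g : Graph v e) (x y : Fin v) :
    (ob g).m x y = if x = y then 0 else Nat.card {i // sy g i = s(x, y)} := rfl

theorem sy_ne {g : Graph v e} (hg : LL g) (x : Fin v) (i : Fin e) : sy g i ≠ s(x, x) := by
  intro h
  rcases Sym2.eq_iff.1 h with ⟨h1, h2⟩ | ⟨h1, h2⟩ <;> exact hg i (h1.trans h2.symm)

theorem ob_mL {g : Graph v e} (hg : LL g) (x y : Fin v) :
    (ob g).m x y = Nat.card {i // sy g i = s(x, y)} := by
  rw [ob_m]
  split_ifs with h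
  · subst h
    symm
    rw [Nat.card_eq_zero]
    exact Or.inl ⟨fun i => sy_ne hg x i.1 i.2⟩
  · rfl

theorem flip_sym {V : Type*} (τ : Perm (Fin 2)) (p : V × V) :
    s((flipPair τ p).1, (flipPair τ p).2) = s(p.1, p.2) := by
  unfold flipPair
  split_ifs
  · rfl
  · exact Sym2.eq_swap

theorem act_mu (γ : Gamma v e) (g : Graph v e) (i : Fin e) :
    act γ g (γ.2.1 i) = Prod.map γ.1 γ.1 (flipPair (γ.2.2 i) (g i)) := by
  unfold act
  have : γ.2.1⁻¹ (γ.2.1 i) = i := γ.2.1.symm_apply_apply i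
  rw [this]

theorem act_sy (γ : Gamma v e) (g : Graph v e) (i : Fin e) :
    sy (act γ g) (γ.2.1 i) = s2 γ.1 (sy g i) := by
  unfold sy
  rw [act_mu, ← flip_sym (γ.2.2 i) (g i)]
  rfl

theorem LL_sy {g : Graph v e} : LL g ↔ ∀ i x, sy g i ≠ s(x, x) := by
  refine ⟨fun h i x => sy_ne h x i, fun h i hi => h i (g i).1 ?_⟩
  unfold sy; rw [← hi]

theorem LL_act {g : Graph v e} (γ : Gamma v e) (hg : LL g) : LL (act γ g) := by
  rw [LL_sy] at *
  intro i x
  obtain ⟨i, rfl⟩ := γ.2.1.surjective i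
  rw [act_sy]
  intro h
  apply hg i (γ.1.symm x)
  apply (s2 γ.1).injective
  rw [h, s2_mk]; simp

noncomputable def actHom (γ : Gamma v e) (g : Graph v e) : OHom (ob g) (ob (act γ g)) where
  v := γ.1
  o := Equiv.refl _
  d := Equiv.refl _
  hm := by
    intro x y
    rw [ob_m, ob_m]
    refine if_congr γ.1.injective.eq_iff rfl ?_
    refine (Nat.card_congr (γ.2.1.subtypeEquiv fun i => ?_)).symm
    rw [act_sy, ← s2_mk, (s2 γ.1).injective.eq_iff]
  hq := fun a => a.elim
  hi := fun a => a.elim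

theorem lift_hom {g g' : Graph v e} (hg : LL g) (hg' : LL g') (f : ob g ⟶ ob g') :
    ∃ γ : Gamma v e, γ.1 = f.v ∧ g' = act γ g := by
  let ρ : Perm (Fin v) := f.v
  obtain ⟨μ, hμ⟩ := fib_lift (fun i => s2 ρ (sy g i)) (sy g') (by
    intro s
    induction s with | _ x y => ?_
    obtain ⟨x, rfl⟩ := ρ.surjective x
    obtain ⟨y, rfl⟩ := ρ.surjective y
    have h1 : (ob g').m (ρ x) (ρ y) = (ob g).m x y := f.hm x y
    rw [ob_mL hg, ob_mL hg'] at h1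
    rw [h1, ← s2_mk]
    simp only [(s2 ρ).injective.eq_iff])
  have : ∀ i, ∃ τ : Perm (Fin 2), g' (μ i) = Prod.map ρ ρ (flipPair τ (g i)) := by
    intro i
    have h1 : s((g' (μ i)).1, (g' (μ i)).2) = s(ρ (g i).1, ρ (g i).2) := hμ i
    rcases Sym2.eq_iff.1 h1 with ⟨h1, h2⟩ | ⟨h1, h2⟩
    · exact ⟨1, Prod.ext h1 h2⟩
    · refine ⟨Equiv.swap 0 1, ?_⟩
      have : flipPair (Equiv.swap 0 1) (g i) = (g i).swap := by
        unfold flipPair; rw [if_neg]; simp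
      rw [this]
      exact Prod.ext h1 h2
  choose ν hν using this
  refine ⟨(ρ, μ, ν), rfl, ?_⟩
  funext i
  obtain ⟨i, rfl⟩ := μ.surjective i
  rw [hν]
  exact (act_mu (ρ, μ, ν) g i).symm

theorem loop_odd {g : Graph v e} (h : ∀ γ : Gamma v e, act γ g = g → chi γ = 1) : LL g := by
  intro i hi
  let γ : Gamma v e := (1, 1, Function.update 1 i (Equiv.swap 0 1))
  have h1 : act γ g = g := by
    funext j
    have := act_mu γ g j
    have e1 : γ.2.1 j = j := rfl
    rw [e1] at this
    rw [this]
    by_cases hj : j = i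
    · subst hj
      have h3 : (g j).swap = g j := Prod.ext hi.symm hi
      have : flipPair (γ.2.2 j) (g j) = g j := by
        unfold flipPair; split_ifs
        · rfl
        · exact h3
      rw [this]; rfl
    · have : γ.2.2 j = 1 := by simp [γ, hj]
      rw [this]; rfl
  have h2 := h γ h1
  unfold chi at h2
  rw [Finset.prod_eq_single i] at h2
  · simp [γ, Perm.sign_swap] at h2
  · intro j _ hj
    simp [γ, hj]
  · simp

end Link
end GraphComplexOdd

namespace GraphComplexOdd
section Link2
open Equiv CategoryTheory
open scoped Classical
variable {v e : ℕ}

def tw (ρ : Perm (Fin v)) (p : Fin v × Fin v) : ℤˣ :=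
  if (p.1 < p.2 ↔ ρ p.1 < ρ p.2) then 1 else -1

def epo (p : Fin v × Fin v) : ℤˣ := if p.1 < p.2 then 1 else -1

def srt (p : Fin v × Fin v) : Fin v × Fin v := if p.1 < p.2 then p else p.swap

theorem tw_swap (ρ : Perm (Fin v)) (p : Fin v × Fin v) (h : p.1 ≠ p.2) :
    tw ρ p.swap = tw ρ p := by
  have h' : ρ p.1 ≠ ρ p.2 := fun h2 => h (ρ.injective h2)
  unfold tw
  refine if_congr ?_ rfl rfl
  simp only [Prod.fst_swap, Prod.snd_swap]
  rcases lt_or_gt_of_ne h with h1 | h1 <;> rcases lt_or_gt_of_ne h' with h2 | h2 <;>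
    simp [h1, h2, h1.not_gt, h2.not_gt]

theorem sgn2 : ∀ τ : Perm (Fin 2), Perm.sign τ = if τ 0 = 0 then 1 else -1 := by decide

theorem nu_sign {g : Graph v e} (hg : LL g) {γ : Gamma v e} (h : act γ g = g) (i : Fin e) :
    Perm.sign (γ.2.2 i) = epo (g i) * epo (g (γ.2.1 i)) * tw γ.1 (g i) := by
  have h1 := act_mu γ g i
  rw [h] at h1
  have hn := hg i
  have h' : γ.1 (g i).1 ≠ γ.1 (g i).2 := fun h2 => hn (γ.1.injective h2)
  rw [h1, sgn2]
  unfold flipPair epo tw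
  by_cases ht : γ.2.2 i 0 = 0 <;> rcases lt_or_gt_of_ne hn with h1 | h1 <;>
    rcases lt_or_gt_of_ne h' with h2 | h2 <;> simp [ht, h1, h2, h1.not_gt, h2.not_gt]

theorem prod_nu {g : Graph v e} (hg : LL g) {γ : Gamma v e} (h : act γ g = g) :
    ∏ i, Perm.sign (γ.2.2 i) = ∏ i, tw γ.1 (g i) := by
  rw [Finset.prod_congr rfl fun i _ => nu_sign hg h i, Finset.prod_mul_distrib,
    Finset.prod_mul_distrib, Equiv.prod_comp γ.2.1 (fun i => epo (g i)), ← Finset.prod_mul_distrib]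
  simp

theorem srt_iff {g : Graph v e} (hg : LL g) (i : Fin e) (p : Fin v × Fin v) :
    srt (g i) = p ↔ p.1 < p.2 ∧ sy g i = s(p.1, p.2) := by
  have := hg i
  unfold srt sy
  obtain ⟨x, y⟩ := p
  generalize g i = q at *
  obtain ⟨a, b⟩ := q
  simp only [Sym2.eq_iff, Prod.swap_prod_mk] at *
  split_ifs with h1
  · simp only [Prod.mk.injEq]
    constructor
    · rintro ⟨rfl, rfl⟩; exact ⟨h1, Or.inl ⟨rfl, rfl⟩⟩
    · rintro ⟨h2, ⟨rfl, rfl⟩ | ⟨rfl, rfl⟩⟩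
      · exact ⟨rfl, rfl⟩
      · omega
  · simp only [Prod.mk.injEq]
    constructor
    · rintro ⟨rfl, rfl⟩; exact ⟨by omega, Or.inr ⟨rfl, rfl⟩⟩
    · rintro ⟨h2, ⟨rfl, rfl⟩ | ⟨rfl, rfl⟩⟩
      · omega
      · exact ⟨rfl, rfl⟩

theorem prod_tw {g : Graph v e} (hg : LL g) (ρ : Perm (Fin v)) :
    ∏ i, tw ρ (g i) =
      ∏ p : {p : Fin v × Fin v // p.1 < p.2 ∧ Odd ((ob g).m p.1 p.2)}, tw ρ p.1 := by
  have h1 : ∀ i, tw ρ (g i) = tw ρ (srt (g i)) := by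
    intro i
    unfold srt
    split_ifs
    · rfl
    · rw [tw_swap _ _ (hg i)]
  rw [Finset.prod_congr rfl fun i _ => h1 i,
    ← Finset.prod_fiberwise (Finset.univ : Finset (Fin e)) (fun i => srt (g i))]
  rw [← Finset.prod_subtype (Finset.univ.filter fun p : Fin v × Fin v =>
    p.1 < p.2 ∧ Odd ((ob g).m p.1 p.2)) (by simp) (fun p => tw ρ p), Finset.prod_filter]
  refine Finset.prod_congr rfl fun p _ => ?_
  rw [Finset.prod_congr (g := fun _ => tw ρ p) rfl (by
    intro i hi
    rw [Finset.mem_filter] at hi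
    rw [hi.2]), Finset.prod_const]
  by_cases hp : p.1 < p.2
  · have : (Finset.univ.filter fun i => srt (g i) = p).card = (ob g).m p.1 p.2 := by
      rw [ob_mL hg, Nat.card_eq_fintype_card, Fintype.card_subtype]
      congr 1
      ext i
      simp [srt_iff hg, hp]
    rw [this]
    generalize (ob g).m p.1 p.2 = k
    simp only [hp, true_and]
    split_ifs with ho
    · obtain ⟨k', hk⟩ := ho
      rw [hk, pow_add, pow_mul, pow_one]
      simp
    · obtain ⟨k', hk⟩ := Nat.not_odd_iff_even.1 ho
      rw [hk, ← two_mul, pow_mul]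
      simp
  · have : (Finset.univ.filter fun i => srt (g i) = p) = ∅ := by
      ext i
      simp [srt_iff hg, hp]
    rw [this]
    simp [hp]

theorem odd_tw {g : Graph v e} (f : ob g ⟶ ob g) :
    psgn f.odd =
      ∏ p : {p : Fin v × Fin v // p.1 < p.2 ∧ Odd ((ob g).m p.1 p.2)}, tw f.v p.1 := by
  let R := {p : Fin v × Fin v // p.1 < p.2 ∧ Odd ((ob g).m p.1 p.2)}
  let F : R × Bool → OddP (ob g) := fun a =>
    if a.2 then ⟨a.1.1.swap, by
      have := a.1.2.2
      rw [(ob g).symm] at this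
      exact this⟩ else ⟨a.1.1, a.1.2.2⟩
  have F0 : ∀ a : R, (F (a, false)).1 = a.1 := fun a => rfl
  have F1 : ∀ a : R, (F (a, true)).1 = a.1.swap := fun a => rfl
  have hF : Function.Bijective F := by
    constructor
    · rintro ⟨⟨⟨a, b⟩, h1, h2⟩, i⟩ ⟨⟨⟨a', b'⟩, h1', h2'⟩, i'⟩ h
      have h := congrArg Subtype.val h
      simp only at h1 h1'
      cases i <;> cases i' <;> simp only [F0, F1, Prod.swap_prod_mk, Prod.mk.injEq] at h
      · obtain ⟨rfl, rfl⟩ := h; rfl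
      · obtain ⟨rfl, rfl⟩ := h; omega
      · obtain ⟨rfl, rfl⟩ := h; omega
      · obtain ⟨rfl, rfl⟩ := h; rfl
    · rintro ⟨⟨a, b⟩, h⟩
      have hab : a ≠ b := by
        rintro rfl
        have h : Odd ((ob g).m a a) := h
        rw [(ob g).diag] at h
        exact absurd h (by decide)
      by_cases h1 : (a : Fin v) < b
      · exact ⟨(⟨(a, b), h1, h⟩, false), rfl⟩
      · have h2 : (b : Fin v) < a := lt_of_le_of_ne (not_lt.1 h1) (Ne.symm hab)
        refine ⟨(⟨(b, a), h2, ?_⟩, true), rfl⟩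
        have h : Odd ((ob g).m a b) := h
        rw [(ob g).symm] at h
        exact h
  let E := Equiv.ofBijective F hF
  have hE : ∀ a c, (E (a, !c)).1 = (E (a, c)).1.swap := by
    intro a c; cases c <;> rfl
  let π : Perm (R × Bool) := (E.trans f.odd).trans E.symm
  have hπ : ∀ a, E (π a) = f.odd (E a) := fun a => E.apply_symm_apply _
  have h1 : psgn f.odd = psgn π := (psgn_conj E _ _ hπ).symm
  rw [h1, psgn_bool]
  · refine Finset.prod_congr rfl fun a _ => ?_
    have h2 := hπ (a, false)
    generalize π (a, false) = z at h2 ⊢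
    obtain ⟨a', c⟩ := z
    have h3 : (E (a', c)).1 = (f.v a.1.1, f.v a.1.2) := congrArg Subtype.val h2
    have h4 := a.2.1
    have h5 := a'.2.1
    unfold tw
    cases c
    · have h3 : a'.1 = (f.v a.1.1, f.v a.1.2) := h3
      rw [h3] at h5
      rw [if_neg (by simp), if_pos (iff_of_true h4 h5)]
    · have h3 : a'.1.swap = (f.v a.1.1, f.v a.1.2) := h3
      have h6 : (a'.1.swap).2 < (a'.1.swap).1 := h5
      rw [h3] at h6
      rw [if_pos rfl, if_neg]
      intro hc
      exact lt_asymm (hc.1 h4) h6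
  · intro a c
    apply E.injective
    apply Subtype.ext
    rw [hπ, hE]
    show _ = (E (π (a, c))).1.swap
    rw [hπ]
    show Prod.map f.v f.v (E (a, !c)).1 = (Prod.map f.v f.v (E (a, c)).1).swap
    rw [hE]; rfl

theorem sg_chi {g : Graph v e} (hg : LL g) {γ : Gamma v e} (h : act γ g = g)
    (f : ob g ⟶ ob g) (hf : f.v = γ.1) : ((SG.sg f : ℤˣ) : ℤ) = chi γ := by
  have h1 : SG.sg f = Perm.sign γ.1 * ∏ i, Perm.sign (γ.2.2 i) := by
    rw [prod_nu hg h, prod_tw hg, Ob.sg_def, odd_tw, hf]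
    have h2 : psgn f.d = 1 := by
      have : f.d = Equiv.refl _ := Equiv.ext fun a => a.elim
      rw [this]; exact psgn_refl
    rw [h2, mul_one]
    congr 1
    exact psgn_eq _
  rw [h1]
  unfold chi
  push_cast
  rfl

theorem Ev_iff {g : Graph v e} (hg : LL g) :
    Ev (ob g) ↔ ∀ γ : Gamma v e, act γ g = g → chi γ = 1 := by
  constructor
  · intro h γ hγ
    have k : ∀ g', g' = g → ∀ f : ob g ⟶ ob g', f.v = γ.1 → ∃ f : ob g ⟶ ob g, f.v = γ.1 := by
      rintro g' rfl f hf; exact ⟨f, hf⟩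
    obtain ⟨f, hf⟩ := k _ hγ (actHom γ g) rfl
    rw [← sg_chi hg hγ f hf, h f]; rfl
  · intro h f
    obtain ⟨γ, h1, h2⟩ := lift_hom hg hg f
    have := sg_chi hg h2.symm f h1.symm
    rw [h _ h2.symm] at this
    exact Units.ext this

end Link2
end GraphComplexOdd

namespace GraphComplexOdd
section Link3
open Equiv CategoryTheory
open scoped Classical
variable {v e : ℕ}

theorem ob_deg {g : Graph v e} (hg : LL g) (x : Fin v) : degE (ob g) x = valence g x := by
  have h0 : degE (ob g) x = ∑ y : Fin v, (ob g).m x y := degE_eq (ob g) x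
  rw [h0, Finset.sum_congr rfl fun y _ => ob_mL hg x y]
  have h1 : ∀ y, Nat.card {i // sy g i = s(x, y)} = ∑ i, if sy g i = s(x, y) then 1 else 0 := by
    intro y
    rw [Finset.sum_boole, Nat.cast_id, ← Fintype.card_subtype, Nat.card_eq_fintype_card]
  rw [Finset.sum_congr rfl fun y _ => h1 y, Finset.sum_comm]
  unfold valence
  refine Finset.sum_congr rfl fun i _ => ?_
  have hn := hg i
  unfold sy
  generalize g i = q at *
  obtain ⟨a, b⟩ := q
  simp only at *
  by_cases ha : a = x
  · subst ha
    have : ∀ y, s(a, b) = s(a, y) ↔ b = y := by intro y; simp; aesop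
    simp only [this]
    simp [hn.symm]
  by_cases hb : b = x
  · subst hb
    have : ∀ y, s(a, b) = s(b, y) ↔ a = y := by intro y; rw [Sym2.eq_swap]; simp; aesop
    simp only [this]
    simp [hn]
  · have : ∀ y, s(a, b) ≠ s(x, y) := by
      intro y h
      rcases Sym2.eq_iff.1 h with ⟨h1, h2⟩ | ⟨h1, h2⟩
      · exact ha h1
      · exact hb h2
    simp [this, ha, hb]

theorem ob_tm {g : Graph v e} (hg : LL g) : tm (ob g) = 2 * e := by
  have h0 : tm (ob g) = ∑ y : Fin v, degE (ob g) y := tm_eq (ob g)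
  rw [h0, Finset.sum_congr rfl fun y _ => ob_deg hg y]
  unfold valence
  rw [Finset.sum_comm]
  simp [Finset.sum_add_distrib]
  ring

theorem ob_pos {g : Graph v e} (hg : LL g) (x y : Fin v) : 0 < (ob g).m x y ↔ adj g x y := by
  rw [ob_mL hg, Nat.card_pos_iff]
  constructor
  · rintro ⟨⟨i, hi⟩, _⟩
    refine ⟨i, ?_⟩
    rcases Sym2.eq_iff.1 hi with ⟨h1, h2⟩ | ⟨h1, h2⟩
    · exact Or.inl (Prod.ext h1 h2)
    · exact Or.inr (Prod.ext h1 h2)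
  · rintro ⟨i, h | h⟩
    · exact ⟨⟨i, by unfold sy; rw [h]⟩, inferInstance⟩
    · exact ⟨⟨i, by unfold sy; rw [h]; exact Sym2.eq_swap⟩, inferInstance⟩

theorem ob_conn {g : Graph v e} (hg : LL g) :
    Conn (ob g) ↔ ∀ a b : Fin v, Relation.EqvGen (adj g) a b := by
  constructor
  · intro h a b
    refine h (fun x => Relation.EqvGen (adj g) a x) ?_ (fun o => o.elim) a b (Relation.EqvGen.refl a)
    intro x y hxy h1
    exact h1.trans _ _ _ (Relation.EqvGen.rel _ _ ((ob_pos hg x y).1 hxy))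
  · intro h p h1 _ x y
    have k : ∀ x y : Fin v, Relation.EqvGen (adj g) x y → (p x ↔ p y) := by
      intro x y hxy
      induction hxy with
      | rel x y h2 =>
        have h3 := (ob_pos hg x y).2 h2
        exact ⟨h1 x y h3, h1 y x (by rw [(ob g).symm]; exact h3)⟩
      | refl x => exact Iff.rfl
      | symm x y _ ih => exact ih.symm
      | trans x y z _ _ ih1 ih2 => exact ih1.trans ih2
    exact (k x y (h x y)).1

theorem ob_K0 {b : ℕ} {g : Graph v (b + v)} (hg : LL g) : K0 b (ob g) ↔ IsX g := by
  unfold K0 IsX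
  rw [ob_conn hg, ob_tm hg]
  have h1 : (∀ x : (ob g).V, 3 ≤ degE (ob g) x) ↔ ∀ x : Fin v, 3 ≤ valence g x :=
    forall_congr' fun x => by rw [ob_deg hg]
  have h2 : Nat.card (ob g).V = v := Nat.card_fin v
  have h3 : IsEmpty (ob g).O := inferInstanceAs (IsEmpty Empty)
  have h4 : IsEmpty (ob g).D := inferInstanceAs (IsEmpty Empty)
  rw [h1, h2]
  have h5 : 2 * (b + v) = 2 * (v + b) := by ring
  tauto

theorem ob_NM {g : Graph v e} (hg : LL g) : ¬ NM (ob g) ↔ NoMultiple g := by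
  unfold NoMultiple
  have hs : ∀ i i', (sy g i' = sy g i ↔ g i' = g i ∨ g i' = (g i).swap) := by
    intro i i'
    unfold sy
    rw [Sym2.eq_iff, Prod.ext_iff, Prod.ext_iff]; rfl
  constructor
  · intro h i i' hne
    rw [← not_or, ← hs]
    intro h1
    apply h
    refine ⟨s((g i).1, (g i).2), Bun_mk.2 ?_⟩
    rw [ob_mL hg, Nat.succ_le_iff, Finite.one_lt_card_iff_nontrivial]
    exact ⟨⟨i, rfl⟩, ⟨i', h1⟩, fun h => hne (congrArg Subtype.val h)⟩
  · rintro h ⟨s, hs'⟩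
    revert hs'
    refine Sym2.ind (fun x y => ?_) s
    intro h1
    have h1 := Bun_mk.1 h1
    rw [ob_mL hg, Nat.succ_le_iff, Finite.one_lt_card_iff_nontrivial] at h1
    obtain ⟨⟨i, hi⟩, ⟨i', hi'⟩, hne⟩ := h1
    have := h i i' (fun h => hne (Subtype.ext h))
    rw [← not_or, ← hs] at this
    exact this (hi'.trans hi.symm)

theorem half_sum (m : Fin v → Fin v → ℕ) (hs : ∀ x y, m x y = m y x) (hd : ∀ x, m x x = 0) :
    ∑ x, ∑ y, m x y = 2 * ∑ p : {p : Fin v × Fin v // p.1 < p.2}, m p.1.1 p.1.2 := by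
  have h1 : ∀ p : Fin v × Fin v, m p.1 p.2 = (if p.1 < p.2 then m p.1 p.2 else 0) +
      (if p.2 < p.1 then m p.2 p.1 else 0) := by
    rintro ⟨x, y⟩
    rcases lt_trichotomy x y with h | h | h
    · simp [h, h.not_gt]
    · subst h; simp [hd]
    · simp [h, h.not_gt, hs x y]
  have h2 : ∑ p : Fin v × Fin v, (if p.2 < p.1 then m p.2 p.1 else 0) =
      ∑ p : Fin v × Fin v, (if p.1 < p.2 then m p.1 p.2 else 0) :=
    Equiv.sum_comp (Equiv.prodComm (Fin v) (Fin v))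
      (fun p : Fin v × Fin v => if p.1 < p.2 then m p.1 p.2 else 0)
  have h3 : ∑ p : Fin v × Fin v, (if p.1 < p.2 then m p.1 p.2 else 0) =
      ∑ p : {p : Fin v × Fin v // p.1 < p.2}, m p.1.1 p.1.2 := by
    rw [← Finset.sum_filter]
    exact Finset.sum_subtype _ (by simp) (fun p : Fin v × Fin v => m p.1 p.2)
  rw [← Fintype.sum_prod_type' (f := fun x y => m x y), Finset.sum_congr rfl fun p _ => h1 p,
    Finset.sum_add_distrib, h2, h3]
  ring

theorem ob_real {b : ℕ} (G : Ob) (hG : K0 b G) (hv : Nat.card G.V = v) :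
    ∃ g : Graph v (b + v), LL g ∧ Nonempty (ob g ⟶ G) := by
  obtain ⟨⟨hO, hD⟩, htm, -, -⟩ := hG
  have ev : Fin v ≃ G.V := (Finite.equivFinOfCardEq hv).symm
  let I := Σ p : {p : Fin v × Fin v // p.1 < p.2}, Fin (G.m (ev p.1.1) (ev p.1.2))
  have hI : Nat.card I = b + v := by
    rw [Nat.card_sigma]
    simp only [Nat.card_fin]
    have i : Fintype G.V := Fintype.ofFinite _
    rw [tm_eq, hv, ← Equiv.sum_comp ev] at htm
    have := half_sum (fun x y => G.m (ev x) (ev y)) (fun x y => G.symm _ _) (fun x => G.diag _)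
    have h2 : ∀ x, degE G (ev x) = ∑ y, G.m (ev x) (ev y) := by
      intro x; rw [degE_eq, ← Equiv.sum_comp ev]
    rw [Finset.sum_congr rfl fun x _ => h2 x, this] at htm
    omega
  let E : Fin (b + v) ≃ I := (Finite.equivFinOfCardEq hI).symm
  let g : Graph v (b + v) := fun i => (E i).1.1
  have hg : LL g := fun i => (E i).1.2.ne
  refine ⟨g, hg, ⟨⟨ev, Equiv.equivOfIsEmpty _ _, Equiv.equivOfIsEmpty _ _, ?_, fun a => a.elim,
    fun a => a.elim⟩⟩⟩
  have key : ∀ x y : Fin v, x < y → G.m (ev x) (ev y) = (ob g).m x y := by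
    intro x y hxy
    rw [ob_mL hg]
    have h1 : ∀ i, sy g i = s(x, y) ↔ (E i).1 = ⟨(x, y), hxy⟩ := by
      intro i
      have h2 := srt_iff hg i (x, y)
      have h3 : srt (g i) = g i := if_pos (E i).1.2
      rw [h3] at h2
      simp only [hxy, true_and] at h2
      rw [← h2]
      exact (Subtype.ext_iff (a1 := (E i).1) (a2 := ⟨(x, y), hxy⟩)).symm
    simp only [h1]
    rw [Nat.card_congr ((E.subtypeEquiv (q := fun z : I => z.1 = ⟨(x, y), hxy⟩) fun i => Iff.rfl).trans
      (Equiv.sigmaSubtype _)), Nat.card_fin]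
  intro x y
  rcases lt_trichotomy (x : Fin v) y with h | h | h
  · exact key x y h
  · have : x = y := h
    subst this
    rw [G.diag, (ob g).diag]
  · rw [G.symm, (ob g).symm]; exact key y x h

theorem orb {g g' : Graph v e} (hg : LL g) :
    (∃ γ, g' = act γ g) ↔ LL g' ∧ Nonempty (ob g ⟶ ob g') := by
  constructor
  · rintro ⟨γ, rfl⟩
    exact ⟨LL_act γ hg, ⟨actHom γ g⟩⟩
  · rintro ⟨h, ⟨f⟩⟩
    obtain ⟨γ, _, h2⟩ := lift_hom hg h f
    exact ⟨γ, h2⟩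

def GoodS (Q : Graph v e → Prop) (S : Set (Graph v e)) : Prop :=
  ∃ g : Graph v e, Q g ∧ S = {g' | ∃ γ : Gamma v e, g' = act γ g} ∧
      ∀ g' ∈ S, ∀ γ : Gamma v e, act γ g' = g' → chi γ = 1

theorem good_iff (Q : Graph v e → Prop) (S : Set (Graph v e)) :
    GoodS Q S ↔ ∃ g, Q g ∧ LL g ∧ Ev (ob g) ∧ S = {g' | LL g' ∧ Nonempty (ob g ⟶ ob g')} := by
  constructor
  · rintro ⟨g, h1, rfl, h2⟩
    have h3 : ∀ γ : Gamma v e, act γ g = g → chi γ = 1 := by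
      intro γ hγ
      exact h2 g ⟨γ, hγ.symm⟩ γ hγ
    have hg := loop_odd h3
    exact ⟨g, h1, hg, (Ev_iff hg).2 h3, Set.ext fun g' => orb hg⟩
  · rintro ⟨g, h1, hg, h2, rfl⟩
    refine ⟨g, h1, Set.ext fun g' => (orb hg).symm, ?_⟩
    rintro g' ⟨h3, ⟨f⟩⟩
    exact (Ev_iff h3).1 (Ev_hom f h2)

theorem count {b v : ℕ} (P : Ob → Prop) (hP : Inv P) (hPK : ∀ G, P G → K0 b G)
    (Q : Graph v (b + v) → Prop) (hQ : ∀ g, LL g → (Q g ↔ P (ob g))) :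
    Nat.card {S : Set (Graph v (b + v)) // GoodS Q S} =
      Nat.card {c : Cl Ob // (P c.out ∧ Ev c.out) ∧ Nat.card c.out.V = v} := by
  have hS := fun S : {S : Set (Graph v (b + v)) // GoodS Q S} => (good_iff Q S.1).1 S.2
  choose G h1 h2 h3 h4 using hS
  refine Nat.card_eq_of_bijective (fun S => ⟨cl (ob (G S)), ?_⟩) ⟨?_, ?_⟩
  · obtain ⟨f⟩ := out_hom (ob (G S))
    refine ⟨⟨?_, Ev_hom (Groupoid.inv f) (h3 S)⟩, ?_⟩
    · rw [hP _ _ f]; exact (hQ _ (h2 S)).1 (h1 S)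
    · rw [Nat.card_congr f.v]; exact Nat.card_fin v
  · intro S S' h
    obtain ⟨f⟩ := cl_eq.1 (congrArg Subtype.val h)
    apply Subtype.ext
    rw [h4 S, h4 S']
    ext g'
    exact and_congr_right fun _ => ⟨fun ⟨k⟩ => ⟨Groupoid.inv f ≫ k⟩, fun ⟨k⟩ => ⟨f ≫ k⟩⟩
  · rintro ⟨c, ⟨c1, c2⟩, c3⟩
    obtain ⟨g, hg, ⟨f⟩⟩ := ob_real c.out (hPK _ c1) c3
    have hgP : P (ob g) := by rw [hP _ _ f]; exact c1
    have hgE : Ev (ob g) := Ev_hom (Groupoid.inv f) c2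
    let S : {S : Set (Graph v (b + v)) // GoodS Q S} :=
      ⟨_, (good_iff Q _).2 ⟨g, (hQ g hg).2 hgP, hg, hgE, rfl⟩⟩
    refine ⟨S, Subtype.ext ?_⟩
    refine Eq.trans ?_ (cl_out c)
    refine cl_eq.2 ?_
    have : G S ∈ S.1 := by
      rw [h4 S]; exact ⟨h2 S, ⟨𝟙 _⟩⟩
    obtain ⟨_, ⟨k⟩⟩ := this
    exact ⟨Groupoid.inv k ≫ f⟩

theorem XX_count {b : ℕ} (hb : 2 ≤ b) (P : Ob → Prop) (hPK : ∀ G, P G → K0 b G) :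
    XX P dg = ∑ᶠ v ∈ Set.Ici 1, ((-1 : ℤ) ^ v *
      (Nat.card {c : Cl Ob // (P c.out ∧ Ev c.out) ∧ Nat.card c.out.V = v} : ℕ)) := by
  have hfin : {c : Cl Ob | P c.out ∧ Ev c.out}.Finite :=
    Set.Finite.subset (K0_fin b) fun c hc => hPK _ hc.1
  let s := hfin.toFinset
  have hs : ∀ c, c ∈ s ↔ P c.out ∧ Ev c.out := fun c => hfin.mem_toFinset
  have hV : ∀ c ∈ s, Nat.card c.out.V ∈ Finset.Icc 1 (2 * b) := by
    intro c hc
    obtain ⟨⟨hO, hD⟩, k3, k4, k5⟩ := hPK _ ((hs c).1 hc).1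
    rw [Finset.mem_Icc]
    constructor
    · by_contra h0
      have h0 : Nat.card c.out.V = 0 := by omega
      have hE : IsEmpty c.out.V := by
        rcases Nat.card_eq_zero.1 h0 with h | h
        · exact h
        · exact absurd c.out.fV (not_finite_iff_infinite.2 h)
      have := Fintype.ofFinite c.out.V
      rw [h0, tm_eq, Finset.univ_eq_empty, Finset.sum_empty] at k3
      omega
    · refine Valid_card (s := 2) le_rfl (G := c.out) (fun x => ?_) ?_
      · have := k5 x; omega
      · unfold Size; rw [k3, Nat.card_eq_zero.2 (Or.inl hO)]; simp
  have hc : ∀ v, Nat.card {c : Cl Ob // (P c.out ∧ Ev c.out) ∧ Nat.card c.out.V = v} =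
      (s.filter fun c => Nat.card c.out.V = v).card := by
    intro v
    rw [← Nat.card_eq_finsetCard]
    refine Nat.card_congr (Equiv.subtypeEquivRight fun c => ?_)
    rw [Finset.mem_filter, hs]
  have h1 : XX P dg = ∑ c ∈ s, (-1 : ℤ) ^ Nat.card c.out.V := by
    rw [XX_mem, finsum_mem_eq_finite_toFinset_sum _ hfin]
    refine Finset.sum_congr rfl fun c hc => ?_
    obtain ⟨⟨hO, hD⟩, -⟩ := hPK _ ((hs c).1 hc).1
    unfold dg
    rw [Nat.card_eq_zero.2 (Or.inl hD), add_zero]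
  rw [h1, ← Finset.sum_fiberwise_of_maps_to hV]
  symm
  rw [finsum_mem_eq_sum_of_inter_support_eq (t := Finset.Icc 1 (2 * b))]
  · refine Finset.sum_congr rfl fun v _ => ?_
    rw [hc, Finset.sum_congr (g := fun _ => (-1 : ℤ) ^ v) rfl (by
      intro c hc
      rw [(Finset.mem_filter.1 hc).2]), Finset.sum_const, nsmul_eq_mul, mul_comm]
  · ext v
    simp only [Set.mem_inter_iff, Set.mem_Ici, Finset.coe_Icc, Set.mem_Icc, Function.mem_support]
    refine ⟨fun ⟨k1, k2⟩ => ⟨⟨k1, ?_⟩, k2⟩, fun ⟨k1, k2⟩ => ⟨k1.1, k2⟩⟩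
    by_contra hlt
    apply k2
    rw [hc, Finset.card_eq_zero.2]
    · simp
    · refine Finset.filter_eq_empty_iff.2 fun c hc h => ?_
      have := Finset.mem_Icc.1 (hV c hc)
      omega

theorem final (b : ℕ) (hb : 2 ≤ b) :
    ∑ᶠ v ∈ Set.Ici 1, ((-1 : ℤ) ^ v * nOdd v (b + v)) =
    ∑ᶠ v ∈ Set.Ici 1, ((-1 : ℤ) ^ v * nOddStar v (b + v)) := by
  have e1 : ∀ v, nOdd v (b + v) =
      Nat.card {c : Cl Ob // (K0 b c.out ∧ Ev c.out) ∧ Nat.card c.out.V = v} := fun v =>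
    count (K0 b) (K0_inv b) (fun _ h => h) IsX (fun g hg => (ob_K0 hg).symm)
  have e2 : ∀ v, nOddStar v (b + v) =
      Nat.card {c : Cl Ob // ((K0 b c.out ∧ ¬ NM c.out) ∧ Ev c.out) ∧ Nat.card c.out.V = v} :=
    fun v => count (fun G => K0 b G ∧ ¬ NM G) ((K0_inv b).and NM_inv.not) (fun _ h => h.1)
      (fun g => IsX g ∧ NoMultiple g) (fun g hg => by rw [ob_K0 hg, ob_NM hg])
  simp only [e1, e2]
  rw [← XX_count hb (K0 b) (fun _ h => h), K0_main b hb,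
    XX_count hb (fun G => K0 b G ∧ ¬ NM G) (fun _ h => h.1)]

end Link3
end GraphComplexOdd


namespace GraphComplexOdd

/-- For every genus `b ≥ 2`, the Euler characteristics of the genus-`b`
parts of the connected odd graph complexes with and without multiple edges agree:
`∑_{v ≥ 1} (-1)^v · ñ^{odd}(v, b+v) = ∑_{v ≥ 1} (-1)^v · ñ^{odd*}(v, b+v)`
(both sums are finite since at-least-trivalent graphs satisfy `v ≤ 2b - 2`). -/
theorem stmt_14 (b : ℕ) (hb : 2 ≤ b) :
    ∑ᶠ v ∈ Set.Ici 1, ((-1 : ℤ) ^ v * nOdd v (b + v)) =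
    ∑ᶠ v ∈ Set.Ici 1, ((-1 : ℤ) ^ v * nOddStar v (b + v)) := by
  exact final b hb

end GraphComplexOdd
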